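/- (Minimax lower bound over second-order regularly varying distributions.) For every α ∈ (0,1) and every 0 < β < α/2 there exists a constant C(α,β), depending only on (α,β), such that for every n ≥ max(4, (12α)^{1/(1−α)}), every r ≥ 1, every 0 < C ≤ 1/(64π Γ(1−α)), every C' > C(α,β), every measurable estimator θ̂_r : ℕ^n → ℝ, and every measurable h : ℝ → ℝ, one has sup over P ∈ Σ(α,β,C,C') of P_P( √(n^α L_α(P)) · ℓ(θ̂_r(X_n), θ_r(P;X_n)) > √C · min( r/(8√(6α)), n^{α/2}/2 ) ) ≥ 1/4. -/

import Mathlib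

open MeasureTheory ProbabilityTheory Real Filter ENNReal

noncomputable section

/-- The law of an i.i.d. sample of size `n` from the discrete distribution `P` on `ℕ`. -/
def sampleMeasure (P : PMF ℕ) (n : ℕ) : Measure (Fin n → ℕ) :=
  Measure.pi fun _ => P.toMeasure

/-- The probability mass of symbol `j` under `P`, as a real number. -/
def pReal (P : PMF ℕ) (j : ℕ) : ℝ := (P j).toReal

/-- Empirical frequency of the symbol `j` in the sample `ω`. -/
def freq {n : ℕ} (ω : Fin n → ℕ) (j : ℕ) : ℕ :=
  (Finset.univ.filter fun i => ω i = j).card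

/-- The `r`-order missing mass `θ_r(P; X_n)`. -/
def missingMass (p : ℕ → ℝ) (r : ℕ) {n : ℕ} (ω : Fin n → ℕ) : ℝ :=
  ∑' j, p j ^ r * (if freq ω j = 0 then 1 else 0)

/-- `M_{n,r}`: the number of distinct symbols appearing exactly `r` times in the sample. -/
def Mcount {n : ℕ} (ω : Fin n → ℕ) (r : ℕ) : ℝ :=
  ∑' j, if freq ω j = r then 1 else 0

/-- The Good–Turing-type estimator `θ̂_r^{GT}(X_n) = M_{n,r} / (n choose r)`. -/
def gtEst {n : ℕ} (ω : Fin n → ℕ) (r : ℕ) : ℝ := Mcount ω r / (n.choose r)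

/-- The multiplicative (relative) loss: `ℓ(t, θ) = |t/θ - 1|` if `θ > 0`, and `h t` otherwise. -/
def mloss (h : ℝ → ℝ) (t θ : ℝ) : ℝ := if 0 < θ then |t / θ - 1| else h t

/-- The tail function `F̄_P(x) = #{j : p_j > x}`. -/
def tailF (P : PMF ℕ) (x : ℝ) : ℕ := Set.ncard {j | x < pReal P j}

/-- `P ∈ Σ(α,β,C,C')` with `Lα = L_α(P) = lim_{x→0} x^α F̄_P(x)`. -/
def inSigmaClass (α β C C' : ℝ) (P : PMF ℕ) (Lα : ℝ) : Prop :=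
  Tendsto (fun x => x ^ α * (tailF P x : ℝ)) (nhdsWithin 0 (Set.Ioi 0)) (nhds Lα) ∧
  C ≤ Lα ∧
  ∀ x ∈ Set.Ioo (0 : ℝ) 1,
    x ^ (-β) * |(tailF P x : ℝ) / (Lα * x ^ (-α)) - 1| ≤ C'

lemma min_exp_aux (l : ℝ) : 3/4 - 4 * (exp l - 1 - l) ≤ exp l := by
  have h1 := Real.add_one_le_exp (l + Real.log (5/4))
  rw [Real.exp_add, Real.exp_log (by norm_num)] at h1
  have h2 := Real.one_sub_inv_le_log_of_pos (show (0:ℝ) < 5/4 by norm_num)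
  norm_num at h2
  linarith

open Classical in
lemma core_pointwise {Z : Type*} [Fintype Z] (g0 g1 l : Z → ℝ)
    (h0 : ∀ z, 0 ≤ g0 z) (h1 : ∀ z, 0 ≤ g1 z) (T : Z → Z) (E A0 A1 : Z → Prop)
    (hinj : ∀ z z', E z → E z' → T z = T z' → z = z')
    (hr : ∀ z, E z → g0 z * exp (l z) ≤ g1 (T z))
    (hA : ∀ z, E z → A0 z → ¬ A1 (T z)) :
    3/4 * (∑ z, if E z then g0 z else 0)
      - 4 * (∑ z, g1 z - ∑ z, if E z then g0 z * (1 + l z) else 0)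
      ≤ (∑ z, if A0 z then 0 else g0 z) + ∑ z, if A1 z then 0 else g1 z := by
  have inj1 : ∀ (S : Finset Z) (f : Z → ℝ), (∀ z, 0 ≤ f z) → (∀ z ∈ S, E z) →
      ∑ z ∈ S, f (T z) ≤ ∑ z, f z := by
    intro S f hf hS
    rw [← Finset.sum_image (f := f) (g := T) (s := S)]
    · exact Finset.sum_le_sum_of_subset_of_nonneg (Finset.subset_univ _) (fun i _ _ => hf i)
    · intro a ha b hb hab
      exact hinj a b (hS a ha) (hS b hb) hab
  have k1 : ∑ z, (if E z then g0 z * exp (l z) else 0) ≤ ∑ z, g1 z := by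
    rw [← Finset.sum_filter]
    refine le_trans (Finset.sum_le_sum fun z hz => hr z (Finset.mem_filter.1 hz).2) ?_
    exact inj1 _ g1 h1 (fun z hz => (Finset.mem_filter.1 hz).2)
  have k2 : ∑ z, (if E z ∧ A0 z then g0 z * exp (l z) else 0) ≤ ∑ z, if A1 z then 0 else g1 z := by
    rw [← Finset.sum_filter]
    refine le_trans (Finset.sum_le_sum (g := fun z => if A1 (T z) then 0 else g1 (T z))
      fun z hz => ?_) ?_
    · have hz' := (Finset.mem_filter.1 hz).2
      rw [if_neg (hA z hz'.1 hz'.2)]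
      exact hr z hz'.1
    · refine inj1 _ (fun z => if A1 z then 0 else g1 z) ?_ (fun z hz => (Finset.mem_filter.1 hz).2.1)
      intro z
      show 0 ≤ (if A1 z then 0 else g1 z)
      split_ifs
      · rfl
      · exact h1 z
  have k3 : 3/4 * (∑ z, if E z then g0 z else 0)
      - 4 * (∑ z, (if E z then g0 z * exp (l z) else 0) - ∑ z, if E z then g0 z * (1 + l z) else 0)
      ≤ (∑ z, if A0 z then 0 else g0 z) + ∑ z, (if E z ∧ A0 z then g0 z * exp (l z) else 0) := by
    rw [Finset.mul_sum, ← Finset.sum_sub_distrib, Finset.mul_sum, ← Finset.sum_sub_distrib,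
      ← Finset.sum_add_distrib]
    refine Finset.sum_le_sum fun z _ => ?_
    have e1 := mul_le_mul_of_nonneg_left (min_exp_aux (l z)) (h0 z)
    have e2 := mul_nonneg (h0 z) (sub_nonneg.2 (Real.add_one_le_exp (l z)))
    have e3 := h0 z
    by_cases hE : E z <;> by_cases hA0 : A0 z <;> simp [hE, hA0] <;> nlinarith
  linarith

open Classical in
lemma core_sum {Z Ω : Type*} [Fintype Z] (g0 g1 l : Z → Ω → ℝ)
    (h0 : ∀ z ω, 0 ≤ g0 z ω) (h1 : ∀ z ω, 0 ≤ g1 z ω)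
    (s0 : ∀ z, Summable (g0 z)) (s1 : ∀ z, Summable (g1 z))
    (B : ℝ) (hB : ∀ z ω, |l z ω| ≤ B)
    (T : Ω → Z → Z) (E A0 A1 : Z → Ω → Prop)
    (hinj : ∀ ω z z', E z ω → E z' ω → T ω z = T ω z' → z = z')
    (hr : ∀ z ω, E z ω → g0 z ω * exp (l z ω) ≤ g1 (T ω z) ω)
    (hA : ∀ z ω, E z ω → A0 z ω → ¬ A1 (T ω z) ω) :
    3/4 * (∑ z, ∑' ω, if E z ω then g0 z ω else 0)
      - 4 * (∑ z, ∑' ω, g1 z ω - ∑ z, ∑' ω, if E z ω then g0 z ω * (1 + l z ω) else 0)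
      ≤ (∑ z, ∑' ω, if A0 z ω then 0 else g0 z ω) + ∑ z, ∑' ω, if A1 z ω then 0 else g1 z ω := by
  have aux : ∀ (f g : Z → Ω → ℝ) (K : ℝ), (∀ z, Summable (g z)) → (∀ z ω, |f z ω| ≤ K * g z ω) →
      ∀ z, Summable (f z) := by
    intro f g K hg hfg z
    exact Summable.of_norm_bounded ((hg z).mul_left K) (fun ω => hfg z ω)
  have a1 := aux (fun z ω => if E z ω then g0 z ω else 0) g0 1 s0 (by
    intro z ω; split_ifs
    · rw [abs_of_nonneg (h0 z ω)]; linarith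
    · simp [h0 z ω])
  have a2 := aux (fun z ω => if E z ω then g0 z ω * (1 + l z ω) else 0) g0 (1 + B) s0 (by
    intro z ω
    have hb := hB z ω
    have hb0 : 0 ≤ B := le_trans (abs_nonneg _) hb
    have h00 := h0 z ω
    split_ifs
    · rw [abs_mul, abs_of_nonneg h00, mul_comm]
      refine mul_le_mul_of_nonneg_right ?_ h00
      refine (abs_add_le _ _).trans ?_
      simp; exact hb
    · simp; positivity)
  have a3 := aux (fun z ω => if A0 z ω then 0 else g0 z ω) g0 1 s0 (by
    intro z ω; split_ifs
    · simp [h0 z ω]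
    · rw [abs_of_nonneg (h0 z ω)]; linarith)
  have a4 := aux (fun z ω => if A1 z ω then 0 else g1 z ω) g1 1 s1 (by
    intro z ω; split_ifs
    · simp [h1 z ω]
    · rw [abs_of_nonneg (h1 z ω)]; linarith)
  rw [← Summable.tsum_finsetSum (fun z _ => a1 z), ← Summable.tsum_finsetSum (fun z _ => a2 z),
    ← Summable.tsum_finsetSum (fun z _ => a3 z), ← Summable.tsum_finsetSum (fun z _ => a4 z),
    ← Summable.tsum_finsetSum (fun z _ => s1 z)]
  have b1 := summable_sum (s := Finset.univ) (fun z _ => a1 z)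
  have b2 := summable_sum (s := Finset.univ) (fun z _ => a2 z)
  have b3 := summable_sum (s := Finset.univ) (fun z _ => a3 z)
  have b4 := summable_sum (s := Finset.univ) (fun z _ => a4 z)
  have b5 := summable_sum (s := Finset.univ) (fun z _ => s1 z)
  rw [← tsum_mul_left, ← b5.tsum_sub b2, ← tsum_mul_left, ← (b1.mul_left _).tsum_sub ((b5.sub b2).mul_left 4),
    ← b3.tsum_add b4]
  refine Summable.tsum_le_tsum ?_ ((b1.mul_left _).sub ((b5.sub b2).mul_left 4)) (b3.add b4)
  intro ω
  exact core_pointwise (fun z => g0 z ω) (fun z => g1 z ω) (fun z => l z ω) (fun z => h0 z ω)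
    (fun z => h1 z ω) (T ω) (fun z => E z ω) (fun z => A0 z ω) (fun z => A1 z ω)
    (fun z z' => hinj ω z z') (fun z => hr z ω) (fun z => hA z ω)

/-- PMF from real weights. -/
def mkP (p : ℕ → ℝ) (h0 : ∀ j, 0 ≤ p j) (h1 : HasSum p 1) : PMF ℕ :=
  ⟨fun j => ENNReal.ofReal (p j), by
    have := ENNReal.ofReal_tsum_of_nonneg h0 h1.summable
    rw [h1.tsum_eq, ENNReal.ofReal_one] at this
    rw [this]
    exact ENNReal.summable.hasSum⟩

lemma pReal_mkP (p : ℕ → ℝ) (h0 : ∀ j, 0 ≤ p j) (h1 : HasSum p 1) : pReal (mkP p h0 h1) = p := by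
  funext j
  exact ENNReal.toReal_ofReal (h0 j)

instance sampleMeasure_prob (P : PMF ℕ) (n : ℕ) : IsProbabilityMeasure (sampleMeasure P n) := by
  unfold sampleMeasure; infer_instance

lemma sample_box (P : PMF ℕ) (n : ℕ) (B : Fin n → Set ℕ) :
    (sampleMeasure P n).real {ω | ∀ i, ω i ∈ B i} = ∏ i, P.toMeasure.real (B i) := by
  have : {ω : Fin n → ℕ | ∀ i, ω i ∈ B i} = Set.univ.pi B := by ext; simp [Set.mem_pi]
  rw [this, measureReal_def, sampleMeasure, Measure.pi_pi, ENNReal.toReal_prod]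
  rfl

lemma toMeasure_real_singleton (P : PMF ℕ) (j : ℕ) : P.toMeasure.real {j} = pReal P j := by
  rw [measureReal_def, PMF.toMeasure_apply_singleton _ _ (measurableSet_singleton j)]; rfl

lemma toMeasure_real_compl (P : PMF ℕ) (j : ℕ) : P.toMeasure.real {j}ᶜ = 1 - pReal P j := by
  rw [probReal_compl_eq_one_sub (measurableSet_singleton j), toMeasure_real_singleton]

lemma sample_singleton (P : PMF ℕ) (n : ℕ) (ω : Fin n → ℕ) :
    (sampleMeasure P n).real {ω} = ∏ i, pReal P (ω i) := by
  have : ({ω} : Set (Fin n → ℕ)) = {ω' | ∀ i, ω' i ∈ ({ω i} : Set ℕ)} := by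
    ext x; simp [funext_iff]
  rw [this, sample_box]
  simp [toMeasure_real_singleton]

lemma sample_unseen (P : PMF ℕ) (n : ℕ) (j : ℕ) :
    (sampleMeasure P n).real {ω | ∀ i, ω i ≠ j} = (1 - pReal P j) ^ n := by
  have := sample_box P n (fun _ => {j}ᶜ)
  simp only [Set.mem_compl_iff, Set.mem_singleton_iff] at this
  rw [this]
  simp [toMeasure_real_compl]

lemma sample_one (P : PMF ℕ) (n : ℕ) (i : Fin n) (B : Set ℕ) :
    (sampleMeasure P n).real {ω | ω i ∈ B} = P.toMeasure.real B := by
  have := sample_box P n (fun k => if k = i then B else Set.univ)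
  have h2 : {ω : Fin n → ℕ | ∀ k, ω k ∈ (if k = i then B else Set.univ)} = {ω | ω i ∈ B} := by
    ext ω
    simp only [Set.mem_ofPred_eq]
    constructor
    · intro h; simpa using h i
    · intro h k; split_ifs with hk
      · rw [hk]; exact h
      · trivial
  rw [h2] at this
  rw [this, Finset.prod_eq_single i]
  · simp
  · intro b _ hb; simp [hb]
  · simp

lemma sample_one_unseen (P : PMF ℕ) (n : ℕ) (i : Fin n) (j₀ j : ℕ) (hj : j₀ ≠ j) :
    (sampleMeasure P n).real {ω | ω i = j₀ ∧ ∀ k, ω k ≠ j}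
      = pReal P j₀ * (1 - pReal P j) ^ (n - 1) := by
  have := sample_box P n (fun k => if k = i then {j₀} else {j}ᶜ)
  have h2 : {ω : Fin n → ℕ | ∀ k, ω k ∈ (if k = i then {j₀} else {j}ᶜ : Set ℕ)}
      = {ω | ω i = j₀ ∧ ∀ k, ω k ≠ j} := by
    ext ω
    simp only [Set.mem_ofPred_eq]
    constructor
    · intro h
      have h0 : ω i = j₀ := by simpa using h i
      refine ⟨h0, fun k => ?_⟩
      have := h k
      by_cases hk : k = i
      · rw [hk, h0]; exact hj
      · simpa [hk] using this
    · intro h k; split_ifs with hk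
      · rw [hk]; exact h.1
      · exact h.2 k
  rw [h2] at this
  rw [this, ← Finset.mul_prod_erase Finset.univ _ (Finset.mem_univ i)]
  rw [Finset.prod_congr rfl (g := fun _ => 1 - pReal P j)]
  · simp [toMeasure_real_singleton]
  · intro k hk
    have : k ≠ i := (Finset.mem_erase.1 hk).1
    simp [this, toMeasure_real_compl]

lemma sample_tsum (P : PMF ℕ) (n : ℕ) (f : (Fin n → ℕ) → ℝ)
    (hf : Integrable f (sampleMeasure P n)) :
    ∫ ω, f ω ∂(sampleMeasure P n) = ∑' ω, (∏ i, pReal P (ω i)) * f ω := by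
  rw [integral_countable hf]
  simp [sample_singleton]

lemma sample_summable (P : PMF ℕ) (n : ℕ) :
    Summable (fun ω : Fin n → ℕ => ∏ i, pReal P (ω i)) := by
  have : Summable (fun ω : Fin n → ℕ => (sampleMeasure P n).real {ω}) := by
    apply ENNReal.summable_toReal
    rw [← measure_iUnion (fun a b hab => by simpa using hab) (fun _ => measurableSet_singleton _)]
    exact measure_ne_top _ _
  refine this.congr fun ω => ?_
  exact (sample_singleton P n ω)

lemma sample_integrable (P : PMF ℕ) (n : ℕ) (f : (Fin n → ℕ) → ℝ) (B : ℝ) (hB : ∀ ω, |f ω| ≤ B) :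
    Integrable f (sampleMeasure P n) := by
  refine Integrable.of_bound (C := B) ?_ ?_
  · exact (measurable_of_countable f).aestronglyMeasurable
  · exact Filter.Eventually.of_forall hB

open Classical in
lemma sample_real_tsum (P : PMF ℕ) (n : ℕ) (A : (Fin n → ℕ) → Prop) :
    (sampleMeasure P n).real {ω | A ω} = ∑' ω, (∏ i, pReal P (ω i)) * (if A ω then 1 else 0) := by
  rw [← sample_tsum P n _ (sample_integrable P n _ 1 (by intro ω; split_ifs <;> simp))]
  have : (fun ω : Fin n → ℕ => if A ω then (1:ℝ) else 0) = Set.indicator {ω | A ω} 1 := by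
    funext ω; simp [Set.indicator_apply]
  rw [this, integral_indicator_one]
  exact (Set.to_countable _).measurableSet

lemma sample_compl (P : PMF ℕ) (n : ℕ) (A : (Fin n → ℕ) → Prop) :
    (sampleMeasure P n).real {ω | ¬ A ω} = 1 - (sampleMeasure P n).real {ω | A ω} := by
  have h : MeasurableSet {ω | A ω} := (Set.to_countable _).measurableSet
  rw [← probReal_compl_eq_one_sub h]
  rfl

lemma mixture_core {Z : Type*} [Fintype Z] (n : ℕ) (W : Z → ℝ) (hW : ∀ z, 0 ≤ W z)
    (hW1 : ∑ z, W z = 1) (P0 P1 : Z → PMF ℕ) (l : Z → (Fin n → ℕ) → ℝ)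
    (B : ℝ) (hB : ∀ z ω, |l z ω| ≤ B) (Bu : ℝ) (hBu0 : 0 ≤ Bu) (hBu : ∀ z ω, l z ω ≤ Bu)
    (T : (Fin n → ℕ) → Z → Z) (E A0 A1 : Z → (Fin n → ℕ) → Prop)
    (hinj : ∀ ω z z', E z ω → E z' ω → T ω z = T ω z' → z = z')
    (hr : ∀ z ω, E z ω → W z * (∏ i, pReal (P0 z) (ω i)) * exp (l z ω)
      ≤ W (T ω z) * (∏ i, pReal (P1 (T ω z)) (ω i)))
    (hA : ∀ z ω, E z ω → A0 z ω → ¬ A1 (T ω z) ω)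
    (e : ℝ) (he : ∑ z, W z * (sampleMeasure (P0 z) n).real {ω | ¬ E z ω} ≤ e)
    (κ : ℝ) (hκ : -κ ≤ ∑ z, W z * ∫ ω, l z ω ∂(sampleMeasure (P0 z) n)) :
    3/4 - 4 * κ - (5 + 4 * Bu) * e ≤
      (∑ z, W z * (sampleMeasure (P0 z) n).real {ω | ¬ A0 z ω})
      + ∑ z, W z * (sampleMeasure (P1 z) n).real {ω | ¬ A1 z ω} := by
  classical
  have hp : ∀ (P : PMF ℕ) (ω : Fin n → ℕ), 0 ≤ ∏ i, pReal P (ω i) :=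
    fun P ω => Finset.prod_nonneg fun i _ => ENNReal.toReal_nonneg
  have sm : ∀ (P : Z → PMF ℕ) (z : Z),
      Summable (fun ω : Fin n → ℕ => W z * (∏ i, pReal (P z) (ω i))) :=
    fun P z => (sample_summable (P z) n).mul_left (W z)
  have nn : ∀ (P : Z → PMF ℕ) (z : Z) (ω : Fin n → ℕ), 0 ≤ W z * (∏ i, pReal (P z) (ω i)) :=
    fun P z ω => mul_nonneg (hW z) (hp _ _)
  have key := core_sum (Z := Z) (Ω := Fin n → ℕ) (fun z ω => W z * (∏ i, pReal (P0 z) (ω i)))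
    (fun z ω => W z * (∏ i, pReal (P1 z) (ω i))) l
    (nn P0) (nn P1) (sm P0) (sm P1) B hB T E A0 A1 hinj hr hA
  have t1 : ∀ z, ∑' ω : Fin n → ℕ, (if A0 z ω then 0 else W z * (∏ i, pReal (P0 z) (ω i)))
      = W z * (sampleMeasure (P0 z) n).real {ω | ¬ A0 z ω} := by
    intro z
    rw [sample_real_tsum, ← tsum_mul_left]
    refine tsum_congr fun ω => ?_
    by_cases h : A0 z ω <;> simp [h]
  have t2 : ∀ z, ∑' ω : Fin n → ℕ, (if A1 z ω then 0 else W z * (∏ i, pReal (P1 z) (ω i)))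
      = W z * (sampleMeasure (P1 z) n).real {ω | ¬ A1 z ω} := by
    intro z
    rw [sample_real_tsum, ← tsum_mul_left]
    refine tsum_congr fun ω => ?_
    by_cases h : A1 z ω <;> simp [h]
  have t3 : ∀ z, ∑' ω : Fin n → ℕ, (if E z ω then W z * (∏ i, pReal (P0 z) (ω i)) else 0)
      = W z * (1 - (sampleMeasure (P0 z) n).real {ω | ¬ E z ω}) := by
    intro z
    have : (sampleMeasure (P0 z) n).real {ω | ¬ E z ω}
      = 1 - (sampleMeasure (P0 z) n).real {ω | E z ω} :=
        sample_compl (P0 z) n (E z)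
    rw [this, _root_.sub_sub_cancel, sample_real_tsum, ← tsum_mul_left]
    refine tsum_congr fun ω => ?_
    by_cases h : E z ω <;> simp [h]
  have t4 : ∀ z, ∑' ω : Fin n → ℕ, W z * (∏ i, pReal (P1 z) (ω i)) = W z := by
    intro z
    have := sample_real_tsum (P1 z) n (fun _ => True)
    simp at this
    rw [tsum_mul_left, ← this, mul_one]
  have t5 : ∀ z, W z * (∫ ω, l z ω ∂(sampleMeasure (P0 z) n)) + W z
      - (1 + Bu) * (W z * (sampleMeasure (P0 z) n).real {ω | ¬ E z ω})
      ≤ ∑' ω : Fin n → ℕ, (if E z ω then W z * (∏ i, pReal (P0 z) (ω i)) * (1 + l z ω) else 0) := by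
    intro z
    have i1 := sample_integrable (P0 z) n (l z) B (hB z)
    have i2 := sample_integrable (P0 z) n (fun ω => if E z ω then 1 + l z ω else 0) (1 + B) (by
      intro ω
      have := hB z ω
      have h0 := (abs_nonneg _).trans this
      split_ifs
      · refine (abs_add_le _ _).trans ?_
        simp [this]
      · simp; positivity)
    have i3 := sample_integrable (P0 z) n (fun ω => if ¬ E z ω then (1:ℝ) else 0) 1 (by
      intro ω; split_ifs <;> simp)
    have e3 : ∑' ω : Fin n → ℕ, (if E z ω then W z * (∏ i, pReal (P0 z) (ω i)) * (1 + l z ω) else 0)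
        = W z * ∫ ω, (if E z ω then 1 + l z ω else 0) ∂(sampleMeasure (P0 z) n) := by
      rw [sample_tsum _ _ _ i2, ← tsum_mul_left]
      refine tsum_congr fun ω => ?_
      by_cases h : E z ω <;> simp [h]
      ring
    have e4 : (sampleMeasure (P0 z) n).real {ω | ¬ E z ω}
        = ∫ ω, (if ¬ E z ω then (1:ℝ) else 0) ∂(sampleMeasure (P0 z) n) := by
      rw [sample_real_tsum, sample_tsum _ _ _ i3]
      refine tsum_congr fun ω => ?_
      by_cases h : E z ω <;> simp [h]
    have e5 : ∫ ω, (1 + l z ω) ∂(sampleMeasure (P0 z) n) = 1 + ∫ ω, l z ω ∂(sampleMeasure (P0 z) n) := by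
      rw [integral_add (integrable_const _) i1]; simp
    have e6 : ∫ ω, (1 + l z ω) ∂(sampleMeasure (P0 z) n) ≤
        ∫ ω, ((if E z ω then 1 + l z ω else 0) + (1 + Bu) * (if ¬ E z ω then (1:ℝ) else 0))
          ∂(sampleMeasure (P0 z) n) := by
      refine integral_mono ((integrable_const _).add i1) (i2.add (i3.const_mul _)) ?_
      intro ω
      have := hBu z ω
      by_cases h : E z ω <;> simp [h]
      linarith
    rw [integral_add i2 (i3.const_mul _), integral_const_mul, ← e4, e5] at e6
    rw [e3]
    nlinarith [mul_le_mul_of_nonneg_left e6 (hW z)]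
  simp only [t1, t2, t3, t4] at key
  have k5 := Finset.sum_le_sum (s := Finset.univ) (fun z _ => t5 z)
  rw [Finset.sum_sub_distrib, Finset.sum_add_distrib, hW1, ← Finset.mul_sum] at k5
  have k3 : ∑ z, W z * (1 - (sampleMeasure (P0 z) n).real {ω | ¬ E z ω})
      = 1 - ∑ z, W z * (sampleMeasure (P0 z) n).real {ω | ¬ E z ω} := by
    simp only [mul_sub, mul_one, Finset.sum_sub_distrib, hW1]
  rw [k3, hW1] at key
  have hX : 0 ≤ ∑ z, W z * (sampleMeasure (P0 z) n).real {ω | ¬ E z ω} :=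
    Finset.sum_nonneg fun z _ => mul_nonneg (hW z) measureReal_nonneg
  have hBX := mul_le_mul_of_nonneg_left he hBu0
  generalize ∑ z, W z * (sampleMeasure (P0 z) n).real {ω | ¬ E z ω} = X at *
  generalize ∑ z, W z * (sampleMeasure (P0 z) n).real {ω | ¬ A0 z ω} = X0 at *
  generalize ∑ z, W z * (sampleMeasure (P1 z) n).real {ω | ¬ A1 z ω} = X1 at *
  generalize ∑ z, W z * ∫ ω, l z ω ∂(sampleMeasure (P0 z) n) = X2 at *
  generalize ∑ z, ∑' ω : Fin n → ℕ, (if E z ω then W z * (∏ i, pReal (P0 z) (ω i)) * (1 + l z ω) else 0) = X3 at *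
  clear t1 t2 t3 t4 t5 hr hA hinj hp
  linarith

lemma mixture_sup {Z : Type*} [Fintype Z] (W : Z → ℝ) (hW : ∀ z, 0 ≤ W z)
    (hW1 : ∑ z, W z = 1) (G : Z → Prop) [DecidablePred G] (g : ℝ) (hg : ∑ z, (if G z then 0 else W z) ≤ g)
    (f : Z → ℝ) (hf1 : ∀ z, f z ≤ 1) (s : ℝ) (hs : 0 ≤ s) (hfs : ∀ z, G z → f z ≤ s) :
    ∑ z, W z * f z ≤ s + g := by
  have : ∑ z, W z * f z ≤ ∑ z, (s * W z + if G z then 0 else W z) := by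
    refine Finset.sum_le_sum fun z _ => ?_
    by_cases h : G z
    · simp [h]; nlinarith [hfs z h, hW z]
    · simp [h]; nlinarith [hf1 z, hW z, mul_nonneg hs (hW z)]
  rw [Finset.sum_add_distrib, ← Finset.mul_sum, hW1] at this
  linarith

/-! Loss separation -/
lemma loss_sep (h : ℝ → ℝ) (t θ θ' ε g : ℝ) (hθ : 0 < θ) (he0 : 0 < ε) (he : ε < 1/3)
    (hg : 1 + 3 * ε ≤ g) (hθ' : θ' = g * θ) (h0 : mloss h t θ ≤ ε) : ¬ mloss h t θ' ≤ ε := by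
  intro h1
  have hg0 : 0 < g := by linarith
  have hp : 0 < θ' := by rw [hθ']; positivity
  rw [mloss, if_pos hθ, abs_le] at h0
  rw [mloss, if_pos hp, abs_le] at h1
  have a : t ≤ (1 + ε) * θ := by
    have := h0.2
    rw [← div_le_iff₀ hθ]; linarith
  have b : (1 - ε) * θ' ≤ t := by
    have := h1.1
    rw [← le_div_iff₀ hp]; linarith
  rw [hθ'] at b
  have : (1 - ε) * (g * θ) ≥ (1 - ε) * ((1 + 3 * ε) * θ) := by
    have : (0:ℝ) ≤ 1 - ε := by linarith
    gcongr
  nlinarith [mul_pos he0 hθ, mul_pos (mul_pos he0 hθ) (sub_pos.2 he)]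

/-! Class membership criterion -/
lemma class_of_bound (α β C C' : ℝ) (hβ : 0 < β) (P : PMF ℕ) (L C1 : ℝ) (hL : 1 ≤ L)
    (hC : C ≤ 1) (hC' : C1 ≤ C')
    (hb : ∀ x ∈ Set.Ioo (0:ℝ) 1, |(tailF P x : ℝ) - L * x ^ (-α)| ≤ C1 * x ^ (β - α)) :
    inSigmaClass α β C C' P L := by
  refine ⟨?_, hC.trans hL, ?_⟩
  · rw [tendsto_iff_norm_sub_tendsto_zero]
    have hlim : Tendsto (fun x : ℝ => C1 * x ^ β) (nhdsWithin 0 (Set.Ioi 0)) (nhds 0) := by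
      have : Tendsto (fun x : ℝ => C1 * x ^ β) (nhds 0) (nhds (C1 * (0:ℝ) ^ β)) :=
        ((Real.continuousAt_rpow_const 0 β (Or.inr hβ.le)).tendsto).const_mul C1
      rw [Real.zero_rpow hβ.ne', mul_zero] at this
      exact this.mono_left nhdsWithin_le_nhds
    refine squeeze_zero' (Eventually.of_forall fun _ => norm_nonneg _) ?_ hlim
    have : Set.Ioo (0:ℝ) 1 ∈ nhdsWithin (0:ℝ) (Set.Ioi 0) := Ioo_mem_nhdsGT one_pos
    filter_upwards [this] with x hx
    have h := hb x hx
    have hx0 := hx.1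
    have e1 : x ^ α * (tailF P x : ℝ) - L = x ^ α * ((tailF P x : ℝ) - L * x ^ (-α)) := by
      rw [mul_sub, mul_left_comm, ← Real.rpow_add hx0]; simp
    rw [e1, norm_mul, Real.norm_eq_abs, Real.norm_eq_abs, abs_of_pos (Real.rpow_pos_of_pos hx0 _)]
    calc _ ≤ x ^ α * (C1 * x ^ (β - α)) := by gcongr
      _ = C1 * x ^ β := by
        rw [mul_left_comm, ← Real.rpow_add hx0]; ring_nf
  · intro x hx
    have h := hb x hx
    have hx0 := hx.1
    have hL0 : 0 < L := by linarith
    have hxa := Real.rpow_pos_of_pos hx0 (-α)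
    have hxb := Real.rpow_pos_of_pos hx0 (-β)
    have e1 : (tailF P x : ℝ) / (L * x ^ (-α)) - 1 = ((tailF P x : ℝ) - L * x ^ (-α)) / (L * x ^ (-α)) := by
      field_simp
    rw [e1, abs_div, abs_of_pos (mul_pos hL0 hxa)]
    have h2 : |(tailF P x : ℝ) - L * x ^ (-α)| / (L * x ^ (-α)) ≤ C1 * x ^ (β - α) / x ^ (-α) := by
      refine div_le_div₀ ((abs_nonneg _).trans h) h hxa ?_
      nlinarith
    calc _ ≤ x ^ (-β) * (C1 * x ^ (β - α) / x ^ (-α)) := by gcongr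
      _ = C1 * (x ^ (-β) * x ^ (β - α) / x ^ (-α)) := by ring
      _ = C1 := by
        rw [← Real.rpow_add hx0, ← Real.rpow_sub hx0]; ring_nf; simp
      _ ≤ C' := hC'

lemma hasSum_lab {N : ℕ} (f : Option (Fin N ⊕ ℕ) → ℝ) (a : ℝ)
    (h : HasSum (fun k => f (some (Sum.inr k))) a) :
    HasSum f (f none + ((∑ j, f (some (Sum.inl j))) + a)) := by
  have h1 : HasSum (fun x => f (some x)) ((∑ j, f (some (Sum.inl j))) + a) :=
    HasSum.sum (f := fun x => f (some x)) (hasSum_fintype _) h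
  have h2 := (Option.some_injective (Fin N ⊕ ℕ)).hasSum_range_iff (f := f) |>.2 h1
  have h3 : HasSum f (f none + ((∑ j, f (some (Sum.inl j))) + a)) := by
    have h4 : HasSum (f ∘ (↑) : (({none} : Set (Option (Fin N ⊕ ℕ)))) → ℝ) (f none) := by
      simpa using hasSum_unique (f ∘ (↑) : (({none} : Set (Option (Fin N ⊕ ℕ)))) → ℝ)
    refine HasSum.add_isCompl ?_ h4 h2
    rw [isCompl_iff]
    exact ⟨by rw [Set.disjoint_iff]; rintro x ⟨hx, y, hy⟩; simp_all,
      by rw [codisjoint_iff]; ext x; cases x <;> simp⟩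
  exact h3

/-- An enumeration of the label set by the natural numbers. -/
def enc (N : ℕ) : ℕ ≃ Option (Fin N ⊕ ℕ) := Classical.choice nonempty_equiv_of_countable

/-- Parameters of the randomized model. -/
structure Mdl where
  N : ℕ
  M : ℕ
  S : ℕ
  δ : ℝ
  v0 : ℝ
  c : ℕ → ℝ
  w : ℕ → ℝ
  lam : ℕ → ℝ
  hδ : 0 < δ
  hv0 : 0 < v0
  hc : ∀ k, 0 < c k
  hcs : Summable c
  hw : ∀ i, 0 < w i
  hw1 : ∑ i ∈ Finset.range (M + 1), w i = 1
  hlam : ∀ i, i < M → w i = w (i + 1) * exp (lam (i + 1))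
  hlam0 : lam 0 = 0
  hhalf : N * v0 + exp δ * ∑' k, c k ≤ 1 / 2

namespace Mdl
variable (m : Mdl)

/-- Index set of the prior. -/
abbrev Z := Fin m.N → Fin (m.M + 1)

/-- Rungs of the ladder. -/
def v (i : ℕ) : ℝ := m.v0 * exp (-m.δ * i)

/-- Scaling factor. -/
def b : Bool → ℝ
  | false => 1
  | true => exp m.δ

/-- Nonrandom masses. -/
def cc (s : Bool) (k : ℕ) : ℝ := if k < m.S then m.c k else m.b s * m.c k

/-- Label masses. -/
def pm (s : Bool) (z : m.Z) : Option (Fin m.N ⊕ ℕ) → ℝ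
  | none => 1 - ((∑ j, m.v (z j)) + ∑' k, m.cc s k)
  | some (Sum.inl j) => m.v (z j)
  | some (Sum.inr k) => m.cc s k

/-- Mass of the deterministic part. -/
def mD : ℝ := ∑' k, if k < m.S then 0 else m.c k

lemma v_pos (i : ℕ) : 0 < m.v i := mul_pos m.hv0 (exp_pos _)

lemma v_le (i : ℕ) : m.v i ≤ m.v0 := by
  unfold v
  have : exp (-m.δ * i) ≤ 1 := by
    rw [Real.exp_le_one_iff]
    have := m.hδ
    have : 0 ≤ m.δ * i := by positivity
    linarith
  nlinarith [m.hv0]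

lemma v_succ (i : ℕ) : m.v i = exp m.δ * m.v (i + 1) := by
  unfold v
  rw [mul_left_comm, ← Real.exp_add]
  congr 2
  push_cast; ring

lemma b_ge (s : Bool) : 1 ≤ m.b s := by
  cases s
  · exact le_rfl
  · exact Real.one_le_exp m.hδ.le

lemma b_le (s : Bool) : m.b s ≤ exp m.δ := by
  cases s
  · exact Real.one_le_exp m.hδ.le
  · exact le_rfl

lemma cc_pos (s : Bool) (k : ℕ) : 0 < m.cc s k := by
  unfold cc
  have := m.b_ge s
  have := m.hc k
  split_ifs
  · assumption
  · positivity

lemma cc_le (s : Bool) (k : ℕ) : m.cc s k ≤ exp m.δ * m.c k := by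
  unfold cc
  have h1 := m.b_ge s
  have h2 := m.b_le s
  have h3 := m.hc k
  split_ifs
  · nlinarith
  · exact mul_le_mul_of_nonneg_right h2 h3.le

lemma cc_summable (s : Bool) : Summable (m.cc s) :=
  Summable.of_nonneg_of_le (fun k => (m.cc_pos s k).le) (m.cc_le s) (m.hcs.mul_left _)

lemma cc_tsum_le (s : Bool) : ∑' k, m.cc s k ≤ exp m.δ * ∑' k, m.c k := by
  rw [← tsum_mul_left]
  exact (m.cc_summable s).tsum_le_tsum (m.cc_le s) (m.hcs.mul_left _)

lemma mD_summable : Summable (fun k => if k < m.S then 0 else m.c k) :=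
  Summable.of_nonneg_of_le (fun k => by split_ifs; exacts [le_rfl, (m.hc k).le])
    (fun k => by split_ifs; exacts [(m.hc k).le, le_rfl]) m.hcs

lemma mD_nonneg : 0 ≤ m.mD := tsum_nonneg fun k => by split_ifs; exacts [le_rfl, (m.hc k).le]

lemma cc_true_tsum : ∑' k, m.cc true k = ∑' k, m.cc false k + (exp m.δ - 1) * m.mD := by
  unfold mD
  rw [← tsum_mul_left, ← (m.cc_summable false).tsum_add (m.mD_summable.mul_left _)]
  refine tsum_congr fun k => ?_
  simp only [cc, b]
  split_ifs <;> ring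

lemma sum_v_le (z : m.Z) : ∑ j, m.v (z j) ≤ m.N * m.v0 := by
  have := Finset.sum_le_card_nsmul Finset.univ (fun j => m.v (z j)) m.v0 (fun j _ => m.v_le _)
  simpa using this

lemma pm_none_ge (s : Bool) (z : m.Z) : 1 / 2 ≤ m.pm s z none := by
  have h1 := m.sum_v_le z
  have h2 := m.cc_tsum_le s
  have h3 := m.hhalf
  simp only [pm]; linarith

lemma pm_pos (s : Bool) (z : m.Z) (a) : 0 < m.pm s z a := by
  rcases a with _ | j | k
  · have := m.pm_none_ge s z; linarith
  · exact m.v_pos _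
  · exact m.cc_pos s k

lemma pm_hasSum (s : Bool) (z : m.Z) : HasSum (m.pm s z) 1 := by
  have := hasSum_lab (m.pm s z) (∑' k, m.cc s k) (m.cc_summable s).hasSum
  simpa [pm] using this

lemma pm_le_one (s : Bool) (z : m.Z) (a) : m.pm s z a ≤ 1 := by
  exact le_hasSum (m.pm_hasSum s z) a (fun b _ => (m.pm_pos s z b).le)

/-- The distribution on ℕ. -/
def P (s : Bool) (z : m.Z) : PMF ℕ :=
  mkP (m.pm s z ∘ enc m.N) (fun _ => (m.pm_pos s z _).le)
    ((enc m.N).hasSum_iff.2 (m.pm_hasSum s z))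

lemma pReal_P (s : Bool) (z : m.Z) (j : ℕ) : pReal (m.P s z) j = m.pm s z (enc m.N j) := by
  unfold P; rw [pReal_mkP]; rfl

/-- label `a` does not occur in the sample. -/
def unseen {n : ℕ} (ω : Fin n → ℕ) (a : Option (Fin m.N ⊕ ℕ)) : Prop := ∀ i, enc m.N (ω i) ≠ a

lemma freq_zero {n : ℕ} (ω : Fin n → ℕ) (j : ℕ) : freq ω j = 0 ↔ m.unseen ω (enc m.N j) := by
  unfold freq unseen
  simp [Finset.filter_eq_empty_iff]

open Classical in
lemma missing_eq (s : Bool) (z : m.Z) (r : ℕ) {n : ℕ} (ω : Fin n → ℕ) :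
    missingMass (pReal (m.P s z)) r ω
      = ∑' a, m.pm s z a ^ r * (if m.unseen ω a then 1 else 0) := by
  unfold missingMass
  rw [← (enc m.N).tsum_eq]
  refine tsum_congr fun j => ?_
  rw [pReal_P]
  have h := m.freq_zero ω j
  by_cases hu : m.unseen ω (enc m.N j) <;> simp [h, hu]

open Classical in
lemma missing_summable (s : Bool) (z : m.Z) (r : ℕ) (hr : 1 ≤ r) {n : ℕ} (ω : Fin n → ℕ) :
    Summable (fun a => m.pm s z a ^ r * (if m.unseen ω a then (1:ℝ) else 0)) := by
  refine Summable.of_nonneg_of_le (fun a => ?_) (fun a => ?_) (m.pm_hasSum s z).summable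
  · have := m.pm_pos s z a
    split_ifs <;> positivity
  · have h1 := m.pm_pos s z a
    have h2 := m.pm_le_one s z a
    have h3 : m.pm s z a ^ r ≤ m.pm s z a := pow_le_of_le_one h1.le h2 (by omega)
    split_ifs <;> linarith

lemma exists_unseen {n : ℕ} (ω : Fin n → ℕ) : ∃ a, m.unseen ω a := by
  obtain ⟨a, ha⟩ := Infinite.exists_notMem_finset (Finset.univ.image fun i => enc m.N (ω i))
  exact ⟨a, fun i hi => ha (Finset.mem_image.2 ⟨i, Finset.mem_univ _, hi⟩)⟩

lemma missing_pos (s : Bool) (z : m.Z) (r : ℕ) (hr : 1 ≤ r) {n : ℕ} (ω : Fin n → ℕ) :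
    0 < missingMass (pReal (m.P s z)) r ω := by
  classical
  rw [missing_eq]
  obtain ⟨a, ha⟩ := m.exists_unseen ω
  refine (m.missing_summable s z r hr ω).tsum_pos (fun a => ?_) a ?_
  · have := m.pm_pos s z a
    split_ifs <;> positivity
  · have := m.pm_pos s z a
    simp [ha]; positivity

open Classical in
/-- The shift map. -/
def T {n : ℕ} (ω : Fin n → ℕ) (z : m.Z) : m.Z := fun j =>
  if m.unseen ω (some (Sum.inl j)) then ⟨(z j : ℕ) - 1, by omega⟩ else z j

/-- The good event. -/
def E {n : ℕ} (z : m.Z) (ω : Fin n → ℕ) : Prop :=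
  ¬ m.unseen ω none ∧ (∀ k, k < m.S → ¬ m.unseen ω (some (Sum.inr k))) ∧
    ∀ j, m.unseen ω (some (Sum.inl j)) → (z j : ℕ) ≠ 0

lemma T_inj {n : ℕ} (ω : Fin n → ℕ) (z z' : m.Z) (h : m.E z ω) (h' : m.E z' ω)
    (hT : m.T ω z = m.T ω z') : z = z' := by
  funext j
  have hj := congrFun hT j
  unfold T at hj
  by_cases hu : m.unseen ω (some (Sum.inl j))
  · have h1 := h.2.2 j hu
    have h2 := h'.2.2 j hu
    simp only [hu, if_true, Fin.mk.injEq] at hj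
    ext; omega
  · simpa [hu] using hj

lemma pm_scale {n : ℕ} (z : m.Z) (ω : Fin n → ℕ) (h : m.E z ω) (a) (ha : m.unseen ω a) :
    m.pm true (m.T ω z) a = exp m.δ * m.pm false z a := by
  rcases a with _ | j | k
  · exact absurd ha h.1
  · have h1 := h.2.2 j ha
    simp only [pm, T, ha, if_true]
    have : (z j : ℕ) = ((z j : ℕ) - 1) + 1 := by omega
    conv_rhs => rw [this]
    exact m.v_succ _
  · have : ¬ k < m.S := fun hk => h.2.1 k hk ha
    simp [pm, cc, this, b]

lemma missing_scale {n : ℕ} (z : m.Z) (ω : Fin n → ℕ) (h : m.E z ω) (r : ℕ) :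
    missingMass (pReal (m.P true (m.T ω z))) r ω
      = exp m.δ ^ r * missingMass (pReal (m.P false z)) r ω := by
  classical
  rw [missing_eq, missing_eq, ← tsum_mul_left]
  refine tsum_congr fun a => ?_
  by_cases ha : m.unseen ω a
  · simp [ha, m.pm_scale z ω h a ha, mul_pow]
  · simp [ha]

end Mdl

lemma sum_prod_pi {N K : ℕ} (f : Fin N → Fin K → ℝ) :
    ∑ z : Fin N → Fin K, ∏ j, f j (z j) = ∏ j, ∑ i, f j i := by
  rw [Finset.prod_univ_sum, Fintype.piFinset_univ]

lemma one_sub_ge_exp (y : ℝ) (h0 : 0 ≤ y) (h1 : y ≤ 1/2) : exp (-y - y^2) ≤ 1 - y := by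
  have hpos : (0:ℝ) < 1 - y := by linarith
  rw [← Real.le_log_iff_exp_le hpos]
  have h := Real.one_sub_inv_le_log_of_pos hpos
  -- sharper
  have h2 := Real.log_le_sub_one_of_pos (show (0:ℝ) < 1 / (1 - y) * (1 / (1 + y + y^2))  by positivity)
  have h3 : Real.log (1 / (1 - y) * (1 / (1 + y + y^2))) = - Real.log (1 - y) - Real.log (1 + y + y^2) := by
    rw [Real.log_mul (by positivity) (by positivity), one_div, one_div, Real.log_inv, Real.log_inv]
    ring
  have key : - Real.log (1 - y) ≤ y + y^2 := by
    have e : (1 - y)⁻¹ ≤ exp (y + y^2) := by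
      have q := Real.quadratic_le_exp_of_nonneg (x := y + y^2) (by positivity)
      refine le_trans ?_ q
      rw [inv_le_iff_one_le_mul₀ hpos]
      nlinarith [pow_nonneg h0 2, pow_nonneg h0 3, pow_nonneg h0 4, pow_nonneg h0 5,
        mul_nonneg (pow_nonneg h0 2) (sub_nonneg.2 h1), mul_nonneg (pow_nonneg h0 3) (sub_nonneg.2 h1)
        , mul_nonneg (pow_nonneg h0 4) (sub_nonneg.2 h1)]
    have := Real.log_le_log (by positivity) e
    rwa [Real.log_inv, Real.log_exp] at this
  linarith

namespace Mdl
variable (m : Mdl)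

/-- Prior weights. -/
def W (z : m.Z) : ℝ := ∏ j, m.w (z j)

lemma W_pos (z : m.Z) : 0 < m.W z := Finset.prod_pos fun _ _ => m.hw _

lemma w_sum : ∑ i : Fin (m.M + 1), m.w i = 1 := by
  rw [Fin.sum_univ_eq_sum_range]; exact m.hw1

lemma W_sum : ∑ z, m.W z = 1 := by
  unfold W
  rw [sum_prod_pi (fun _ i => m.w i)]
  simp [m.w_sum]

lemma W_marg (j : Fin m.N) (g : ℕ → ℝ) :
    ∑ z, m.W z * g (z j) = ∑ i ∈ Finset.range (m.M + 1), m.w i * g i := by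
  have h : ∀ z : m.Z, m.W z * g (z j) = ∏ k, (m.w (z k) * if k = j then g (z k) else 1) := by
    intro z
    unfold W
    rw [Finset.prod_mul_distrib, Finset.prod_ite_eq' Finset.univ j]
    simp
  simp_rw [h]
  rw [sum_prod_pi (fun k i => m.w i * if k = j then g i else 1),
    Finset.prod_eq_single j, ← Fin.sum_univ_eq_sum_range (fun i => m.w i * g i)]
  · simp
  · intro k _ hk; simp [hk, m.w_sum]
  · simp

open Classical in
/-- Indicator that random label `j` is unseen. -/
def uI {n : ℕ} (ω : Fin n → ℕ) (j : Fin m.N) : ℝ := if m.unseen ω (some (Sum.inl j)) then 1 else 0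

lemma uI_nonneg {n : ℕ} (ω : Fin n → ℕ) (j : Fin m.N) : 0 ≤ m.uI ω j := by
  unfold uI; split_ifs <;> norm_num
lemma uI_le {n : ℕ} (ω : Fin n → ℕ) (j : Fin m.N) : m.uI ω j ≤ 1 := by
  unfold uI; split_ifs <;> norm_num

/-- Rung mass, killed at rung `0`. -/
def vv (i : ℕ) : ℝ := if i = 0 then 0 else m.v i

lemma vv_nonneg (i : ℕ) : 0 ≤ m.vv i := by
  unfold vv; split_ifs; exacts [le_rfl, (m.v_pos i).le]
lemma vv_le (i : ℕ) : m.vv i ≤ m.v0 := by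
  unfold vv; split_ifs; exacts [m.hv0.le, m.v_le i]

/-- Relative decrease of the heavy mass. -/
def Yq {n : ℕ} (z : m.Z) (ω : Fin n → ℕ) : ℝ :=
  (exp m.δ - 1) / m.pm false z none * (m.mD + ∑ j, m.uI ω j * m.vv (z j))

/-- Bound on `Yq`. -/
def ybar : ℝ := 2 * (exp m.δ - 1) * (m.mD + m.N * m.v0)

lemma ed_pos : 0 < exp m.δ - 1 := by
  have := Real.add_one_lt_exp m.hδ.ne'
  have := m.hδ
  linarith

lemma sum_uv_le {n : ℕ} (z : m.Z) (ω : Fin n → ℕ) : ∑ j, m.uI ω j * m.vv (z j) ≤ m.N * m.v0 := by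
  have := Finset.sum_le_card_nsmul Finset.univ (fun j => m.uI ω j * m.vv (z j)) m.v0 (fun j _ => by
    have h1 := m.uI_le ω j
    have h2 := m.vv_le (z j)
    have h3 := m.vv_nonneg (z j)
    nlinarith)
  simpa using this

lemma sum_uv_nonneg {n : ℕ} (z : m.Z) (ω : Fin n → ℕ) : 0 ≤ ∑ j, m.uI ω j * m.vv (z j) :=
  Finset.sum_nonneg fun j _ => mul_nonneg (m.uI_nonneg ω j) (m.vv_nonneg _)

lemma Yq_nonneg {n : ℕ} (z : m.Z) (ω : Fin n → ℕ) : 0 ≤ m.Yq z ω := by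
  unfold Yq
  have := m.ed_pos
  have := m.pm_pos false z none
  have := m.mD_nonneg
  have := m.sum_uv_nonneg z ω
  positivity

lemma Yq_le {n : ℕ} (z : m.Z) (ω : Fin n → ℕ) : m.Yq z ω ≤ m.ybar := by
  unfold Yq ybar
  have h1 := m.ed_pos
  have h2 := m.pm_none_ge false z
  have h3 := m.mD_nonneg
  have h4 := m.sum_uv_nonneg z ω
  have h5 := m.sum_uv_le z ω
  have h6 : (exp m.δ - 1) / m.pm false z none ≤ 2 * (exp m.δ - 1) := by
    rw [div_le_iff₀ (by linarith)]; nlinarith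
  gcongr

lemma mD_le : exp m.δ * m.mD ≤ exp m.δ * ∑' k, m.c k := by
  have : m.mD ≤ ∑' k, m.c k := m.mD_summable.tsum_le_tsum
    (fun k => by split_ifs; exacts [(m.hc k).le, le_rfl]) m.hcs
  gcongr

lemma ybar_le (hd : exp m.δ ≤ 3/2) : m.ybar ≤ 1/2 := by
  have h1 := m.ed_pos
  have h2 := m.mD_le
  have h3 := m.hhalf
  have h4 := m.mD_nonneg
  have h5 : m.mD + m.N * m.v0 ≤ 1/2 := by nlinarith
  have h6 : 0 ≤ m.mD + m.N * m.v0 := by have := m.hv0; positivity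
  unfold ybar
  nlinarith

/-- Per-observation log-likelihood contribution. -/
def gf {n : ℕ} (z : m.Z) (ω : Fin n → ℕ) : Option (Fin m.N ⊕ ℕ) → ℝ
  | none => - m.Yq z ω - m.ybar ^ 2
  | some (Sum.inl _) => 0
  | some (Sum.inr k) => if k < m.S then 0 else m.δ

/-- Lower bound of the log-likelihood ratio. -/
def l {n : ℕ} (z : m.Z) (ω : Fin n → ℕ) : ℝ :=
  ∑ j, m.uI ω j * m.lam (z j) + ∑ i, m.gf z ω (enc m.N (ω i))

lemma v_T {n : ℕ} (z : m.Z) (ω : Fin n → ℕ) (j : Fin m.N) :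
    m.v (m.T ω z j) = m.v (z j) + (exp m.δ - 1) * (m.uI ω j * m.vv (z j)) := by
  unfold T uI vv
  by_cases hu : m.unseen ω (some (Sum.inl j))
  · simp only [hu, if_true]
    by_cases h0 : (z j : ℕ) = 0
    · simp [h0]
    · have : (z j : ℕ) = ((z j : ℕ) - 1) + 1 := by omega
      simp only [h0, if_false]
      rw [m.v_succ, ← this]; ring
  · simp [hu]

lemma pm_none_T {n : ℕ} (z : m.Z) (ω : Fin n → ℕ) :
    m.pm true (m.T ω z) none = m.pm false z none * (1 - m.Yq z ω) := by
  have h := (m.pm_pos false z none).ne'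
  have : m.pm false z none * (1 - m.Yq z ω) = m.pm false z none
      - (exp m.δ - 1) * (m.mD + ∑ j, m.uI ω j * m.vv (z j)) := by
    unfold Yq; field_simp
  rw [this]
  simp only [pm, m.v_T, Finset.sum_add_distrib, ← Finset.mul_sum, m.cc_true_tsum]
  ring

lemma pm_ratio {n : ℕ} (hd : exp m.δ ≤ 3/2) (z : m.Z) (ω : Fin n → ℕ) (a)
    (ha : ¬ m.unseen ω a) : m.pm false z a * exp (m.gf z ω a) ≤ m.pm true (m.T ω z) a := by
  rcases a with _ | j | k
  · rw [pm_none_T]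
    refine mul_le_mul_of_nonneg_left ?_ (m.pm_pos _ _ _).le
    have h1 := m.Yq_nonneg z ω
    have h2 := m.Yq_le z ω
    have h3 := m.ybar_le hd
    refine le_trans ?_ (one_sub_ge_exp _ h1 (h2.trans h3))
    simp only [gf]
    apply Real.exp_le_exp.2
    nlinarith
  · simp [pm, gf, T, ha]
  · simp only [pm, gf, cc, b]
    split_ifs
    · simp
    · simp [mul_comm]

lemma W_T {n : ℕ} (z : m.Z) (ω : Fin n → ℕ) :
    m.W (m.T ω z) = m.W z * exp (∑ j, m.uI ω j * m.lam (z j)) := by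
  unfold W
  rw [Real.exp_sum, ← Finset.prod_mul_distrib]
  refine Finset.prod_congr rfl fun j _ => ?_
  unfold T uI
  by_cases hu : m.unseen ω (some (Sum.inl j))
  · simp only [hu, if_true, one_mul]
    by_cases h0 : (z j : ℕ) = 0
    · simp [h0, m.hlam0]
    · have h1 : (z j : ℕ) = ((z j : ℕ) - 1) + 1 := by omega
      have h2 := m.hlam ((z j : ℕ) - 1) (by have := (z j).2; omega)
      rw [← h1] at h2
      exact h2
  · simp [hu]

lemma ratio {n : ℕ} (hd : exp m.δ ≤ 3/2) (z : m.Z) (ω : Fin n → ℕ) :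
    m.W z * (∏ i, pReal (m.P false z) (ω i)) * exp (m.l z ω)
      ≤ m.W (m.T ω z) * (∏ i, pReal (m.P true (m.T ω z)) (ω i)) := by
  rw [W_T]
  unfold l
  rw [Real.exp_add, Real.exp_sum (f := fun i => m.gf z ω (enc m.N (ω i)))]
  have : (∏ i, pReal (m.P false z) (ω i)) * ∏ i, exp (m.gf z ω (enc m.N (ω i)))
      ≤ ∏ i, pReal (m.P true (m.T ω z)) (ω i) := by
    rw [← Finset.prod_mul_distrib]
    refine Finset.prod_le_prod (fun i _ => ?_) (fun i _ => ?_)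
    · rw [pReal_P]; exact mul_nonneg (m.pm_pos _ _ _).le (exp_pos _).le
    · rw [pReal_P, pReal_P]
      exact m.pm_ratio hd z ω _ (fun h => h i rfl)
  calc _ = m.W z * exp (∑ j, m.uI ω j * m.lam (z j)) * ((∏ i, pReal (m.P false z) (ω i)) * ∏ i, exp (m.gf z ω (enc m.N (ω i)))) := by ring
    _ ≤ _ := by
      have := m.W_pos z
      gcongr

end Mdl

open Classical in
lemma sample_int_ind (P : PMF ℕ) (n : ℕ) (A : (Fin n → ℕ) → Prop) :
    ∫ ω, (if A ω then (1:ℝ) else 0) ∂(sampleMeasure P n) = (sampleMeasure P n).real {ω | A ω} := by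
  rw [sample_real_tsum, sample_tsum _ _ _ (sample_integrable P n _ 1 (by intro ω; split_ifs <;> simp))]

open Classical in
lemma sample_ind_integrable (P : PMF ℕ) (n : ℕ) (A : (Fin n → ℕ) → Prop) :
    Integrable (fun ω => if A ω then (1:ℝ) else 0) (sampleMeasure P n) :=
  sample_integrable P n _ 1 (by intro ω; split_ifs <;> simp)

open Classical in
lemma toMeasure_real_tsum (P : PMF ℕ) (B : Set ℕ) :
    P.toMeasure.real B = ∑' j, if j ∈ B then pReal P j else 0 := by
  have hB : MeasurableSet B := (Set.to_countable _).measurableSet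
  rw [measureReal_def, PMF.toMeasure_apply _ hB, ENNReal.tsum_toReal_eq]
  · refine tsum_congr fun j => ?_
    by_cases h : j ∈ B <;> simp [h, pReal]
  · intro j
    by_cases h : j ∈ B <;> simp [h, P.apply_ne_top]

open Classical in
/-- Real indicator. -/
def indS (B : Set ℕ) (j : ℕ) : ℝ := if j ∈ B then 1 else 0

namespace Mdl
variable (m : Mdl)

/-- Conditional expected log-likelihood contribution of a random label on rung `i`. -/
def phi (n i : ℕ) : ℝ :=
  m.lam i * (1 - m.v i) ^ n - n * (exp m.δ - 1) * m.vv i * (1 - m.v i) ^ (n - 1)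

lemma unseen_symm {n : ℕ} (ω : Fin n → ℕ) (a) :
    m.unseen ω a ↔ ∀ i, ω i ≠ (enc m.N).symm a := by
  unfold unseen
  simp only [ne_eq, Equiv.eq_symm_apply]

lemma unseen_real (s : Bool) (z : m.Z) (n : ℕ) (a) :
    (sampleMeasure (m.P s z) n).real {ω | m.unseen ω a} = (1 - m.pm s z a) ^ n := by
  simp only [unseen_symm]
  rw [sample_unseen, pReal_P, Equiv.apply_symm_apply]

/-- Set of codes of deterministic small labels. -/
def Dset : Set ℕ := {j | ∃ k, ¬ k < m.S ∧ enc m.N j = some (Sum.inr k)}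

lemma Dset_real (z : m.Z) : (m.P false z).toMeasure.real m.Dset = m.mD := by
  classical
  rw [toMeasure_real_tsum]
  have h3 := hasSum_lab (N := m.N)
    (fun a => if ∃ k, ¬ k < m.S ∧ a = some (Sum.inr k) then m.pm false z a else 0) m.mD (by
      have h0 := m.mD_summable.hasSum
      change HasSum _ m.mD at h0
      refine Eq.mp (congrArg (fun f => HasSum f m.mD) (funext fun k => ?_)) h0
      by_cases hk : k < m.S
      · have : ¬ m.S ≤ k := by omega
        simp [hk, this]
      · have : m.S ≤ k := by omega
        simp [hk, this, pm, cc, b])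
  have h4 := (enc m.N).tsum_eq
    (fun a => if ∃ k, ¬ k < m.S ∧ a = some (Sum.inr k) then m.pm false z a else 0)
  rw [h3.tsum_eq] at h4
  refine Eq.trans ?_ (h4.trans ?_)
  · refine tsum_congr fun j => ?_
    rw [pReal_P]; rfl
  · simp

lemma l_eq {n : ℕ} (z : m.Z) (ω : Fin n → ℕ) :
    m.l z ω = ∑ j, m.lam (z j) * m.uI ω j
      + ∑ i, (m.δ * indS m.Dset (ω i)
        - ((exp m.δ - 1) / m.pm false z none * m.mD + m.ybar ^ 2) *
            indS {(enc m.N).symm none} (ω i)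
        - ∑ j, (exp m.δ - 1) / m.pm false z none * m.vv (z j) *
            (indS {(enc m.N).symm none} (ω i) * m.uI ω j)) := by
  unfold l
  congr 1
  · exact Finset.sum_congr rfl fun j _ => mul_comm _ _
  · refine Finset.sum_congr rfl fun i _ => ?_
    have hn : ω i ∈ ({(enc m.N).symm none} : Set ℕ) ↔ enc m.N (ω i) = none := by
      rw [Set.mem_singleton_iff, Equiv.eq_symm_apply]
    have hD : ω i ∈ m.Dset ↔ ∃ k, ¬ k < m.S ∧ enc m.N (ω i) = some (Sum.inr k) := Iff.rfl
    simp only [indS, hn]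
    generalize enc m.N (ω i) = a at hD ⊢
    rcases a with _ | j | k
    · have hD' : ω i ∉ m.Dset := by rw [hD]; simp
      simp only [hD', gf, Yq, mul_add, Finset.mul_sum]
      simp
      have : ∀ j, (exp m.δ - 1) / m.pm false z none * (m.uI ω j * m.vv (z j))
        = (exp m.δ - 1) / m.pm false z none * m.vv (z j) * m.uI ω j := fun j => by ring
      simp only [this]; ring
    · have hD' : ω i ∉ m.Dset := by rw [hD]; simp
      simp [gf, hD']
    · by_cases hk : k < m.S
      · have hD' : ω i ∉ m.Dset := by rw [hD]; simp; omega
        simp [gf, hk, hD']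
      · have hD' : ω i ∈ m.Dset := by rw [hD]; exact ⟨k, hk, rfl⟩
        simp [gf, hk, hD']

lemma int_l (z : m.Z) (n : ℕ) :
    ∑ j, m.phi n (z j) - n * (exp m.δ - 1 - m.δ) * m.mD - n * m.ybar ^ 2
      ≤ ∫ ω, m.l z ω ∂(sampleMeasure (m.P false z) n) := by
  classical
  have hp := m.pm_pos false z none
  have hi1 : ∀ j, Integrable (fun ω : Fin n → ℕ => m.uI ω j) (sampleMeasure (m.P false z) n) :=
    fun j => sample_ind_integrable _ _ (fun ω => m.unseen ω (some (Sum.inl j)))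
  have hi2 : ∀ (B : Set ℕ) (i : Fin n), Integrable (fun ω : Fin n → ℕ => indS B (ω i))
      (sampleMeasure (m.P false z) n) :=
    fun B i => sample_ind_integrable _ _ (fun ω => ω i ∈ B)
  have hi3 : ∀ (B : Set ℕ) (i : Fin n) j, Integrable
      (fun ω : Fin n → ℕ => indS B (ω i) * m.uI ω j)
      (sampleMeasure (m.P false z) n) := by
    intro B i j
    refine sample_integrable _ _ _ 1 (fun ω => ?_)
    unfold uI indS
    split_ifs <;> simp
  have e1 : ∀ j, ∫ ω : Fin n → ℕ, m.uI ω j ∂(sampleMeasure (m.P false z) n) = (1 - m.v (z j)) ^ n := by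
    intro j
    have := sample_int_ind (m.P false z) n (fun ω => m.unseen ω (some (Sum.inl j)))
    rw [m.unseen_real] at this
    exact this
  have e2 : ∀ (B : Set ℕ) (i : Fin n), ∫ ω : Fin n → ℕ, indS B (ω i)
      ∂(sampleMeasure (m.P false z) n) = (m.P false z).toMeasure.real B := by
    intro B i
    rw [← sample_one _ n i, ← sample_int_ind]
    rfl
  have e3 : ∀ (i : Fin n) (j), ∫ ω : Fin n → ℕ,
      (indS {(enc m.N).symm none} (ω i) * m.uI ω j)
      ∂(sampleMeasure (m.P false z) n) = m.pm false z none * (1 - m.v (z j)) ^ (n - 1) := by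
    intro i j
    have h := sample_one_unseen (m.P false z) n i ((enc m.N).symm none)
      ((enc m.N).symm (some (Sum.inl j))) (by simp)
    rw [pReal_P, pReal_P, Equiv.apply_symm_apply, Equiv.apply_symm_apply, ← sample_int_ind] at h
    refine Eq.trans ?_ h
    congr 1
    funext ω
    unfold uI indS
    have := m.unseen_symm ω (some (Sum.inl j))
    by_cases h1 : ω i = (enc m.N).symm none <;>
      by_cases h2 : m.unseen ω (some (Sum.inl j)) <;> simp [h1, h2, ← this]
  have e4 : (m.P false z).toMeasure.real {(enc m.N).symm none} = m.pm false z none := by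
    rw [toMeasure_real_singleton, pReal_P, Equiv.apply_symm_apply]
  have hle := m.pm_le_one false z none
  simp_rw [m.l_eq z]
  rw [integral_add, integral_finsetSum, integral_finsetSum]
  · have : ∀ i : Fin n, ∫ ω : Fin n → ℕ, (m.δ * indS m.Dset (ω i)
        - ((exp m.δ - 1) / m.pm false z none * m.mD + m.ybar ^ 2) *
            indS {(enc m.N).symm none} (ω i)
        - ∑ j, (exp m.δ - 1) / m.pm false z none * m.vv (z j) *
            (indS {(enc m.N).symm none} (ω i) * m.uI ω j))
              ∂(sampleMeasure (m.P false z) n)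
        = m.δ * m.mD - ((exp m.δ - 1) / m.pm false z none * m.mD + m.ybar ^ 2) * m.pm false z none
          - ∑ j, (exp m.δ - 1) / m.pm false z none * m.vv (z j) *
            (m.pm false z none * (1 - m.v (z j)) ^ (n - 1)) := by
      intro i
      rw [integral_sub, integral_sub, integral_finsetSum]
      · simp_rw [integral_const_mul]
        rw [e2, m.Dset_real, e2, e4]
        simp_rw [e3]
      · exact fun j _ => (hi3 _ i j).const_mul _
      · exact (hi2 _ i).const_mul _
      · exact (hi2 _ i).const_mul _
      · exact ((hi2 _ i).const_mul _).sub ((hi2 _ i).const_mul _)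
      · exact integrable_finsetSum _ fun j _ => (hi3 _ i j).const_mul _
    simp_rw [this, integral_const_mul, e1]
    rw [Finset.sum_const, Finset.card_univ, Fintype.card_fin, nsmul_eq_mul]
    unfold phi
    rw [Finset.sum_sub_distrib]
    have h5 : ∑ j, (exp m.δ - 1) / m.pm false z none * m.vv (z j) *
            (m.pm false z none * (1 - m.v (z j)) ^ (n - 1))
        = ∑ j, (exp m.δ - 1) * m.vv (z j) * (1 - m.v (z j)) ^ (n - 1) := by
      refine Finset.sum_congr rfl fun j _ => ?_
      field_simp
    have h6 : ∑ j, (n:ℝ) * (exp m.δ - 1) * m.vv (z j) * (1 - m.v (z j)) ^ (n - 1)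
        = n * ∑ j, (exp m.δ - 1) * m.vv (z j) * (1 - m.v (z j)) ^ (n - 1) := by
      rw [Finset.mul_sum]
      exact Finset.sum_congr rfl fun j _ => by ring
    have h7 : ((exp m.δ - 1) / m.pm false z none * m.mD + m.ybar ^ 2) * m.pm false z none
        = (exp m.δ - 1) * m.mD + m.ybar ^ 2 * m.pm false z none := by
      field_simp
    rw [h5, h6, h7]
    have h8 : m.ybar ^ 2 * m.pm false z none ≤ m.ybar ^ 2 := by nlinarith [sq_nonneg m.ybar]
    have h9 := mul_le_mul_of_nonneg_left h8 (Nat.cast_nonneg (α := ℝ) n)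
    linarith
  · intro i _
    exact (((hi2 _ i).const_mul _).sub ((hi2 _ i).const_mul _)).sub
      (integrable_finsetSum _ fun j _ => (hi3 _ i j).const_mul _)
  · exact fun j _ => (hi1 j).const_mul _
  · exact integrable_finsetSum _ fun j _ => (hi1 j).const_mul _
  · refine integrable_finsetSum _ fun i _ => ?_
    exact (((hi2 _ i).const_mul _).sub ((hi2 _ i).const_mul _)).sub
      (integrable_finsetSum _ fun j _ => (hi3 _ i j).const_mul _)

end Mdl

namespace Mdl
variable (m : Mdl)

lemma notE_le (z : m.Z) (n : ℕ) (hv : m.v0 ≤ 1/2) (hS : ∀ k, k < m.S → m.v0 ≤ m.c k) :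
    (sampleMeasure (m.P false z) n).real {ω | ¬ m.E z ω}
      ≤ (1 + m.S + m.N) * exp (-(n * m.v0)) := by
  have hb : ∀ a, m.v0 ≤ m.pm false z a →
      (sampleMeasure (m.P false z) n).real {ω | m.unseen ω a} ≤ exp (-(n * m.v0)) := by
    intro a ha
    rw [unseen_real]
    have h1 := m.pm_le_one false z a
    have h2 : 1 - m.pm false z a ≤ exp (-m.v0) := by
      have := Real.add_one_le_exp (-m.v0); linarith
    calc _ ≤ exp (-m.v0) ^ n := pow_le_pow_left₀ (by linarith) h2 n
      _ = _ := by rw [← Real.exp_nat_mul]; ring_nf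
  have hsub : {ω : Fin n → ℕ | ¬ m.E z ω} ⊆ {ω | m.unseen ω none} ∪
      ((⋃ k ∈ Finset.range m.S, {ω | m.unseen ω (some (Sum.inr k))}) ∪
       (⋃ j ∈ (Finset.univ : Finset (Fin m.N)), {ω | m.unseen ω (some (Sum.inl j)) ∧ (z j : ℕ) = 0})) := by
    intro ω hω
    simp only [Set.mem_union, Set.mem_iUnion, Set.mem_ofPred_eq, Finset.mem_range,
      Finset.mem_univ] at hω ⊢
    by_contra hcon
    push Not at hcon
    apply hω
    refine ⟨hcon.1, fun k hk => hcon.2.1 k hk, fun j hj => hcon.2.2 j trivial hj⟩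
  refine (measureReal_mono hsub).trans ?_
  refine (measureReal_union_le _ _).trans ?_
  have h1 := hb none (by have := m.pm_none_ge false z; linarith)
  have h2 : (sampleMeasure (m.P false z) n).real
      (⋃ k ∈ Finset.range m.S, {ω | m.unseen ω (some (Sum.inr k))}) ≤ m.S * exp (-(n * m.v0)) := by
    refine (measureReal_biUnion_finset_le _ _).trans ?_
    refine (Finset.sum_le_card_nsmul _ _ (exp (-(n * m.v0))) ?_).trans (by simp)
    intro k hk
    refine hb _ ?_
    have hk' := Finset.mem_range.1 hk
    simp only [pm, cc, hk', if_true]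
    exact hS k hk'
  have h3 : (sampleMeasure (m.P false z) n).real
      (⋃ j ∈ (Finset.univ : Finset (Fin m.N)), {ω | m.unseen ω (some (Sum.inl j)) ∧ (z j : ℕ) = 0})
      ≤ m.N * exp (-(n * m.v0)) := by
    refine (measureReal_biUnion_finset_le _ _).trans ?_
    refine (Finset.sum_le_card_nsmul _ _ (exp (-(n * m.v0))) ?_).trans (by simp)
    intro j _
    by_cases h0 : (z j : ℕ) = 0
    · simp only [h0, and_true]
      refine hb _ ?_
      simp [pm, v, h0]
    · simp [h0, (exp_pos _).le]
  have h4 := measureReal_union_le (μ := sampleMeasure (m.P false z) n)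
    (⋃ k ∈ Finset.range m.S, {ω | m.unseen ω (some (Sum.inr k))})
    (⋃ j ∈ (Finset.univ : Finset (Fin m.N)), {ω | m.unseen ω (some (Sum.inl j)) ∧ (z j : ℕ) = 0})
  linarith

lemma gf_le {n : ℕ} (z : m.Z) (ω : Fin n → ℕ) (a) : m.gf z ω a ≤ m.δ := by
  have hδ := m.hδ
  rcases a with _ | j | k
  · have := m.Yq_nonneg z ω
    simp only [gf]; nlinarith [sq_nonneg m.ybar]
  · exact hδ.le
  · simp only [gf]; split_ifs <;> linarith

lemma gf_abs {n : ℕ} (z : m.Z) (ω : Fin n → ℕ) (a) : |m.gf z ω a| ≤ m.δ + m.ybar + m.ybar ^ 2 := by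
  have hδ := m.hδ
  have h1 := m.Yq_nonneg z ω
  have h2 := m.Yq_le z ω
  have h3 := sq_nonneg m.ybar
  rcases a with _ | j | k
  · simp only [gf]; rw [abs_le]; constructor <;> linarith
  · simp [gf]; linarith
  · simp only [gf]; split_ifs
    · simp; linarith
    · rw [abs_of_pos hδ]; linarith

lemma sum_le_card_mul {ι : Type*} [Fintype ι] (f : ι → ℝ) (K : ℝ) (h : ∀ i, f i ≤ K) :
    ∑ i, f i ≤ Fintype.card ι * K := by
  have := Finset.sum_le_card_nsmul Finset.univ f K (fun i _ => h i)
  simpa using this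

theorem main_ineq (n : ℕ) (hd : exp m.δ ≤ 3/2) (hv : m.v0 ≤ 1/2)
    (hS : ∀ k, k < m.S → m.v0 ≤ m.c k) (Λ : ℝ) (hΛ : ∀ i, |m.lam i| ≤ Λ)
    (est : (Fin n → ℕ) → ℝ) (h : ℝ → ℝ) (r : ℕ) (hr : 1 ≤ r) (ε : ℝ) (hε : 0 < ε) (hε' : ε < 1/3)
    (hεδ : 3 * ε ≤ m.δ * r) :
    3/4 - 4 * (-(m.N * ∑ i ∈ Finset.range (m.M + 1), m.w i * m.phi n i)
        + n * (exp m.δ - 1 - m.δ) * m.mD + n * m.ybar ^ 2)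
      - (5 + 4 * (m.N * Λ + n * m.δ)) * ((1 + m.S + m.N) * exp (-(n * m.v0))) ≤
    (∑ z, m.W z * (sampleMeasure (m.P false z) n).real
      {ω | ¬ mloss h (est ω) (missingMass (pReal (m.P false z)) r ω) ≤ ε})
    + ∑ z, m.W z * (sampleMeasure (m.P true z) n).real
      {ω | ¬ mloss h (est ω) (missingMass (pReal (m.P true z)) r ω) ≤ ε} := by
  have hδ := m.hδ
  have hΛ0 : 0 ≤ Λ := (abs_nonneg _).trans (hΛ 0)
  have hu : ∀ (z : m.Z) (ω : Fin n → ℕ) j, |m.uI ω j * m.lam (z j)| ≤ Λ := by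
    intro z ω j
    rw [abs_mul, abs_of_nonneg (m.uI_nonneg ω j)]
    have h1 := hΛ (z j)
    have h2 := m.uI_le ω j
    nlinarith [abs_nonneg (m.lam (z j))]
  refine mixture_core n m.W (fun z => (m.W_pos z).le) m.W_sum (m.P false) (m.P true) m.l
    (m.N * Λ + n * (m.δ + m.ybar + m.ybar ^ 2)) ?_ (m.N * Λ + n * m.δ) (by positivity) ?_
    m.T m.E (fun z ω => mloss h (est ω) (missingMass (pReal (m.P false z)) r ω) ≤ ε)
    (fun z ω => mloss h (est ω) (missingMass (pReal (m.P true z)) r ω) ≤ ε)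
    (fun ω z z' => m.T_inj ω z z') (fun z ω _ => m.ratio hd z ω) ?_ _ ?_ _ ?_
  · intro z ω
    refine (abs_add_le _ _).trans (add_le_add ?_ ?_)
    · refine (Finset.abs_sum_le_sum_abs _ _).trans ?_
      simpa using sum_le_card_mul _ Λ (hu z ω)
    · refine (Finset.abs_sum_le_sum_abs _ _).trans ?_
      simpa using sum_le_card_mul (fun i => |m.gf z ω (enc m.N (ω i))|) _ (fun i => m.gf_abs z ω _)
  · intro z ω
    refine add_le_add ?_ ?_
    · simpa using sum_le_card_mul _ Λ (fun j => (le_abs_self _).trans (hu z ω j))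
    · simpa using sum_le_card_mul (fun i => m.gf z ω (enc m.N (ω i))) _ (fun i => m.gf_le z ω _)
  · intro z ω hE hA
    refine loss_sep h (est ω) _ _ ε (exp m.δ ^ r) (m.missing_pos false z r hr ω) hε hε' ?_
      (m.missing_scale z ω hE r) hA
    rw [← Real.exp_nat_mul]
    have := Real.add_one_le_exp (r * m.δ)
    nlinarith
  · calc _ ≤ ∑ z, m.W z * ((1 + m.S + m.N) * exp (-(n * m.v0))) :=
        Finset.sum_le_sum fun z _ => mul_le_mul_of_nonneg_left (m.notE_le z n hv hS) (m.W_pos z).le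
      _ = _ := by rw [← Finset.sum_mul, m.W_sum, one_mul]
  · calc _ = ∑ z, m.W z * (∑ j, m.phi n (z j) - n * (exp m.δ - 1 - m.δ) * m.mD - n * m.ybar ^ 2) := by
          simp only [mul_sub, Finset.sum_sub_distrib, ← Finset.sum_mul, m.W_sum, Finset.mul_sum]
          rw [Finset.sum_comm]
          simp only [m.W_marg]
          simp only [Finset.sum_const, Finset.card_univ, Fintype.card_fin, nsmul_eq_mul, Finset.mul_sum]
          ring
      _ ≤ _ := Finset.sum_le_sum fun z _ => mul_le_mul_of_nonneg_left (m.int_l z n) (m.W_pos z).le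
end Mdl

lemma cnt_nat (A : Set ℕ) (y : ℝ) (h : ∀ k : ℕ, k ∈ A ↔ (k:ℝ) < y) : |(A.ncard : ℝ) - max y 0| ≤ 1 := by
  have hA : A = ((Finset.range ⌈y⌉₊ : Finset ℕ) : Set ℕ) := by
    ext k; rw [h]; simp [Nat.lt_ceil]
  rw [hA, Set.ncard_coe_finset, Finset.card_range]
  rcases le_or_gt y 0 with hy | hy
  · rw [Nat.ceil_eq_zero.2 hy, max_eq_right hy]; simp
  · rw [max_eq_left hy.le, abs_le]
    have h1 := Nat.le_ceil y
    have h2 := Nat.ceil_lt_add_one hy.le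
    constructor <;> linarith

namespace Mdl
variable (m : Mdl)

lemma finite_cc (s : Bool) (x : ℝ) (hx : 0 < x) : {k | x < m.cc s k}.Finite := by
  have h := (m.cc_summable s).tendsto_cofinite_zero
  have h2 := h.eventually (gt_mem_nhds hx)
  rw [Filter.eventually_cofinite] at h2
  refine h2.subset fun k hk => ?_
  simp only [Set.mem_ofPred_eq] at hk ⊢
  linarith

open Classical in
/-- Number of random labels with mass above `x`. -/
def rc (z : m.Z) (x : ℝ) : ℕ := (Finset.univ.filter fun j => x < m.v (z j)).card

lemma tailF_eq (s : Bool) (z : m.Z) (x : ℝ) (hx : 0 < x) :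
    |(tailF (m.P s z) x : ℝ) - (m.rc z x + ({k | x < m.cc s k}.ncard : ℝ))| ≤ 1 := by
  classical
  unfold tailF
  have e0 : {j | x < pReal (m.P s z) j}.ncard = {a | x < m.pm s z a}.ncard := by
    have : {j | x < pReal (m.P s z) j} = (enc m.N) ⁻¹' {a | x < m.pm s z a} := by
      ext j; simp [pReal_P]
    rw [this, Set.ncard_preimage_of_injective_subset_range (enc m.N).injective]
    intro a _; exact (enc m.N).surjective a
  have e1 : {a | x < m.pm s z a} = ({a | a = none ∧ x < m.pm s z none} ∪
      (fun j => some (Sum.inl j)) '' {j | x < m.v (z j)}) ∪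
      (fun k => some (Sum.inr k)) '' {k | x < m.cc s k} := by
    ext a
    rcases a with _ | j | k <;> simp [pm]
  have f1 : {a : Option (Fin m.N ⊕ ℕ) | a = none ∧ x < m.pm s z none}.Finite :=
    (Set.finite_singleton none).subset fun a ha => ha.1
  have f2 : ((fun j : Fin m.N => (some (Sum.inl j) : Option (Fin m.N ⊕ ℕ))) '' {j | x < m.v (z j)}).Finite :=
    (Set.toFinite _).image _
  have f3 : ((fun k => (some (Sum.inr k) : Option (Fin m.N ⊕ ℕ))) '' {k | x < m.cc s k}).Finite :=
    (m.finite_cc s x hx).image _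
  rw [e0, e1, Set.ncard_union_eq ?_ (f1.union f2) f3, Set.ncard_union_eq ?_ f1 f2,
    Set.ncard_image_of_injective, Set.ncard_image_of_injective]
  · have g1 : {a : Option (Fin m.N ⊕ ℕ) | a = none ∧ x < m.pm s z none}.ncard ≤ 1 := by
      refine (Set.ncard_le_ncard (t := {none}) (fun a ha => ha.1)).trans ?_
      simp
    have g2 : {j | x < m.v (z j)}.ncard = m.rc z x := by
      unfold rc
      rw [← Set.ncard_coe_finset]; congr 1; ext; simp
    rw [g2]; push_cast
    have g1' : ({a : Option (Fin m.N ⊕ ℕ) | a = none ∧ x < m.pm s z none}.ncard : ℝ) ≤ 1 := by exact_mod_cast g1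
    have g0 : (0:ℝ) ≤ ({a : Option (Fin m.N ⊕ ℕ) | a = none ∧ x < m.pm s z none}.ncard : ℝ) := by positivity
    rw [abs_le]; constructor <;> linarith
  · intro a b h; simpa using h
  · intro a b h; simpa using h
  · rw [Set.disjoint_left]
    rintro a ⟨rfl, _⟩ ⟨j, _, h⟩; simp at h
  · rw [Set.disjoint_left]
    rintro a (⟨rfl, _⟩ | ⟨j, _, rfl⟩) ⟨k, _, h⟩ <;> simp at h

open Classical in
/-- Number of random labels on rungs at most `i`. -/
def cz (z : m.Z) (i : ℕ) : ℕ := (Finset.univ.filter fun j => (z j : ℕ) ≤ i).card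

/-- cumulative weights -/
def cw (i : ℕ) : ℝ := ∑ k ∈ Finset.range (i + 1), m.w k

lemma exp_quad (x : ℝ) (hx : |x| ≤ 1) : exp x ≤ 1 + x + x ^ 2 := by
  have := Real.abs_exp_sub_one_sub_id_le hx
  rw [abs_le] at this; linarith [this.2]

open Classical in
lemma chernoff (i : ℕ) (hi : i ≤ m.M) (lm : ℝ) (hl : |lm| ≤ 1) :
    ∑ z, m.W z * exp (lm * ((m.cz z i : ℝ) - m.N * m.cw i)) ≤ exp (m.N * lm ^ 2) := by
  have hcw : m.cw i = ∑ k : Fin (m.M + 1), m.w k * (if (k:ℕ) ≤ i then 1 else 0) := by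
    unfold cw
    rw [Fin.sum_univ_eq_sum_range (fun k => m.w k * (if k ≤ i then 1 else 0))]
    simp only [mul_ite, mul_one, mul_zero]
    rw [← Finset.sum_filter]
    refine Finset.sum_congr ?_ fun _ _ => rfl
    ext k; simp; omega
  have hcw0 : 0 ≤ m.cw i := Finset.sum_nonneg fun k _ => (m.hw k).le
  have hcw1 : m.cw i ≤ 1 := by
    rw [hcw]
    refine le_trans (Finset.sum_le_sum fun k _ => ?_) m.w_sum.le
    have := (m.hw k).le
    split_ifs <;> linarith
  have h1 : ∀ z : m.Z, m.W z * exp (lm * ((m.cz z i : ℝ) - m.N * m.cw i))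
      = ∏ j, (m.w (z j) * exp (lm * ((if (z j : ℕ) ≤ i then 1 else 0) - m.cw i))) := by
    intro z
    rw [Finset.prod_mul_distrib, ← Real.exp_sum, ← Finset.mul_sum, Finset.sum_sub_distrib]
    unfold W cz
    congr 3
    simp
  simp_rw [h1]
  rw [sum_prod_pi (fun _ k => m.w k * exp (lm * ((if (k : ℕ) ≤ i then 1 else 0) - m.cw i)))]
  simp only [Finset.prod_const, Finset.card_univ, Fintype.card_fin]
  rw [Real.exp_nat_mul]
  refine pow_le_pow_left₀ (Finset.sum_nonneg fun (k : Fin (m.M+1)) _ => mul_nonneg (m.hw (k:ℕ)).le (exp_pos _).le) ?_ _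
  calc _ ≤ ∑ k : Fin (m.M + 1), (m.w k + lm * (m.w k * (if (k : ℕ) ≤ i then 1 else 0) - m.w k * m.cw i)
        + m.w k * lm ^ 2) := by
        refine Finset.sum_le_sum fun k _ => ?_
        have hb : |(if (k : ℕ) ≤ i then (1:ℝ) else 0) - m.cw i| ≤ 1 := by
          rw [abs_le]; split_ifs <;> constructor <;> linarith
        have hx : |lm * ((if (k : ℕ) ≤ i then 1 else 0) - m.cw i)| ≤ |lm| := by
          rw [abs_mul]; nlinarith [abs_nonneg lm]
        have := exp_quad _ (hx.trans hl)
        have h2 : (lm * ((if (k : ℕ) ≤ i then 1 else 0) - m.cw i)) ^ 2 ≤ lm ^ 2 := sq_le_sq.2 hx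
        have h3 := (m.hw k).le
        calc _ ≤ m.w k * (1 + (lm * ((if (k : ℕ) ≤ i then 1 else 0) - m.cw i)) + lm ^ 2) := by
              gcongr; linarith
          _ = _ := by ring
    _ = 1 + lm ^ 2 := by
        rw [Finset.sum_add_distrib, Finset.sum_add_distrib, ← Finset.mul_sum, Finset.sum_sub_distrib,
          ← hcw, ← Finset.sum_mul, ← Finset.sum_mul, m.w_sum]
        ring
    _ ≤ _ := by have := Real.add_one_le_exp (lm ^ 2); linarith

/-- Good prior draws. -/
def Gd (t : ℝ) (z : m.Z) : Prop := ∀ i, i ≤ m.M → |(m.cz z i : ℝ) - m.N * m.cw i| ≤ t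

open Classical in
lemma Gd_bad (t lm : ℝ) (hl0 : 0 ≤ lm) (hl : lm ≤ 1) :
    ∑ z, (if m.Gd t z then 0 else m.W z) ≤ (m.M + 1) * (2 * exp (m.N * lm ^ 2 - lm * t)) := by
  have key : ∀ z : m.Z, (if m.Gd t z then 0 else m.W z) ≤ ∑ i ∈ Finset.range (m.M + 1),
      exp (- (lm * t)) * (m.W z * exp (lm * ((m.cz z i : ℝ) - m.N * m.cw i))
        + m.W z * exp ((-lm) * ((m.cz z i : ℝ) - m.N * m.cw i))) := by
    intro z
    have hW := (m.W_pos z).le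
    split_ifs with hG
    · exact Finset.sum_nonneg fun i _ => by positivity
    · unfold Gd at hG
      push Not at hG
      obtain ⟨i, hi, hti⟩ := hG
      refine le_trans ?_ (Finset.single_le_sum (fun i _ => by positivity) (Finset.mem_range.2 (show i < m.M + 1 by omega)))
      rw [← mul_add, mul_left_comm]
      refine le_mul_of_one_le_right hW ?_
      rw [mul_add, ← Real.exp_add, ← Real.exp_add]
      rcases lt_abs.1 hti with h | h
      · have : (1:ℝ) ≤ exp (-(lm * t) + lm * ((m.cz z i : ℝ) - m.N * m.cw i)) := Real.one_le_exp (by nlinarith)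
        linarith [exp_pos (-(lm * t) + -lm * ((m.cz z i : ℝ) - m.N * m.cw i))]
      · have : (1:ℝ) ≤ exp (-(lm * t) + -lm * ((m.cz z i : ℝ) - m.N * m.cw i)) := Real.one_le_exp (by nlinarith)
        linarith [exp_pos (-(lm * t) + lm * ((m.cz z i : ℝ) - m.N * m.cw i))]
  refine (Finset.sum_le_sum fun z _ => key z).trans ?_
  rw [Finset.sum_comm]
  have hb : ∀ i ∈ Finset.range (m.M + 1), ∑ z, exp (- (lm * t)) * (m.W z * exp (lm * ((m.cz z i : ℝ) - m.N * m.cw i))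
        + m.W z * exp ((-lm) * ((m.cz z i : ℝ) - m.N * m.cw i))) ≤ 2 * exp (m.N * lm ^ 2 - lm * t) := by
    intro i hi
    have hi' : i ≤ m.M := by have := Finset.mem_range.1 hi; omega
    rw [← Finset.mul_sum, Finset.sum_add_distrib]
    have h1 := m.chernoff i hi' lm (by rwa [abs_of_nonneg hl0])
    have h2 := m.chernoff i hi' (-lm) (by rwa [abs_neg, abs_of_nonneg hl0])
    rw [neg_sq] at h2
    rw [show m.N * lm ^ 2 - lm * t = -(lm * t) + m.N * lm ^ 2 by ring, Real.exp_add]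
    nlinarith [exp_pos (-(lm * t))]
  have := Finset.sum_le_card_nsmul _ _ _ hb
  simpa using this

end Mdl

lemma tele_step (α x h : ℝ) (h0 : 0 < α) (h1 : α < 1) (hx : 0 < x) (hh : 0 < h) :
    h * (x + h) ^ (-1 / α) ≤ α / (1 - α) * (x ^ (1 - 1 / α) - (x + h) ^ (1 - 1 / α)) := by
  set b : ℝ := 1 / α - 1 with hb
  have hb0 : 0 < b := by rw [hb, sub_pos, lt_div_iff₀ h0]; linarith
  have hxh : 0 < x + h := by linarith
  have e1 : α / (1 - α) = 1 / b := by rw [hb]; field_simp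
  have e2 : 1 - 1 / α = -b := by rw [hb]; ring
  have e3 : (-1 / α) = -b - 1 := by rw [hb]; ring
  rw [e1, e2, e3, Real.rpow_sub hxh, Real.rpow_one]
  have hl : Real.log (x / (x + h)) ≤ x / (x + h) - 1 := Real.log_le_sub_one_of_pos (by positivity)
  have hl2 : x / (x + h) - 1 = - (h / (x + h)) := by field_simp; ring
  have h3 : x ^ (-b) = (x + h) ^ (-b) * exp (- b * Real.log (x / (x + h))) := by
    rw [Real.rpow_def_of_pos hx, Real.rpow_def_of_pos hxh, ← Real.exp_add, Real.log_div hx.ne' hxh.ne']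
    congr 1; ring
  have h4 := Real.add_one_le_exp (- b * Real.log (x / (x + h)))
  have h5 : 1 + b * (h / (x + h)) ≤ exp (- b * Real.log (x / (x + h))) := by nlinarith
  have hp := Real.rpow_pos_of_pos hxh (-b)
  rw [h3, div_mul_eq_mul_div, one_mul, le_div_iff₀ hb0]
  calc h * ((x + h) ^ (-b) / (x + h)) * b = (x + h) ^ (-b) * (1 + b * (h / (x + h))) - (x + h) ^ (-b) := by ring
    _ ≤ _ := by gcongr

lemma tele_sum (α x h : ℝ) (h0 : 0 < α) (h1 : α < 1) (hx : 0 < x) (hh : 0 < h) (K : ℕ) :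
    ∑ k ∈ Finset.range K, (x + (k + 1) * h) ^ (-1 / α) ≤ (1 / h) * (α / (1 - α) * x ^ (1 - 1 / α)) := by
  have key : ∑ k ∈ Finset.range K, (x + (k + 1) * h) ^ (-1 / α)
      ≤ (1 / h) * (α / (1 - α) * (x ^ (1 - 1 / α) - (x + K * h) ^ (1 - 1 / α))) := by
    induction K with
    | zero => simp
    | succ K ih =>
      rw [Finset.sum_range_succ]
      have hs := tele_step α (x + K * h) h h0 h1 (by positivity) hh
      have hs' : (x + (K + 1) * h) ^ (-1 / α) ≤ (1 / h) * (α / (1 - α) * ((x + K * h) ^ (1 - 1 / α) - (x + (K + 1) * h) ^ (1 - 1 / α))) := by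
        rw [div_mul_eq_mul_div, one_mul, le_div_iff₀ hh, mul_comm]
        have e : x + (K + 1) * h = x + K * h + h := by ring
        rw [e]; exact hs
      push_cast
      refine (add_le_add ih hs').trans (le_of_eq (by ring))
  refine key.trans ?_
  have : 0 < 1 - α := by linarith
  have := Real.rpow_nonneg (show 0 ≤ x + K * h by positivity) (1 - 1 / α)
  gcongr
  linarith

lemma tele_summable (α x h : ℝ) (h0 : 0 < α) (h1 : α < 1) (hx : 0 < x) (hh : 0 < h) :
    Summable (fun k : ℕ => (x + (k + 1) * h) ^ (-1 / α)) :=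
  summable_of_sum_range_le (fun k => Real.rpow_nonneg (by positivity) _) (tele_sum α x h h0 h1 hx hh)

/-- The `C¹` sigmoid. -/
def psi (t : ℝ) : ℝ := if t ≤ 0 then exp t else 2 - exp (-t)

lemma psi_le_two (t : ℝ) : psi t ≤ 2 := by
  unfold psi; split_ifs with h
  · have := Real.exp_le_one_iff.2 h; linarith
  · have := exp_pos (-t); linarith

lemma psi_diff (s t : ℝ) (h : s ≤ t) : 0 ≤ psi t - psi s ∧ psi t - psi s ≤ t - s := by
  have A : ∀ a b : ℝ, a ≤ b → b ≤ 0 → 0 ≤ exp b - exp a ∧ exp b - exp a ≤ b - a := by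
    intro a b hab hb
    have h1 := Real.exp_le_exp.2 hab
    have h2 := Real.exp_le_one_iff.2 hb
    have h3 := Real.add_one_le_exp (a - b)
    have h4 : exp a = exp b * exp (a - b) := by rw [← Real.exp_add]; ring_nf
    have h5 := exp_pos b
    refine ⟨by linarith, ?_⟩
    rw [h4]; nlinarith
  unfold psi
  split_ifs with h1 h2 h2
  · exact A s t h h1
  · linarith
  · have a1 := A s 0 h2 le_rfl
    have a2 := A (-t) 0 (by linarith) le_rfl
    rw [Real.exp_zero] at a1 a2
    constructor <;> linarith [a1.1, a1.2, a2.1, a2.2]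
  · have a2 := A (-t) (-s) (by linarith) (by linarith)
    constructor <;> linarith [a2.1, a2.2]

lemma psi_lip (s t : ℝ) : |psi t - psi s| ≤ |t - s| := by
  rcases le_total s t with h | h
  · have := psi_diff s t h
    rw [abs_of_nonneg this.1, abs_of_nonneg (by linarith)]; exact this.2
  · have := psi_diff t s h
    rw [abs_sub_comm, abs_sub_comm t s, abs_of_nonneg this.1, abs_of_nonneg (by linarith)]; exact this.2

/-- Inverse of `u ↦ (u + 1/u - 2)/2`. -/
def uf (a : ℝ) : ℝ := 1 + a + √(a ^ 2 + 2 * a)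

lemma uf_ge (a : ℝ) (ha : 0 ≤ a) : 1 + 2 * a ≤ uf a := by
  unfold uf
  have : a ≤ √(a ^ 2 + 2 * a) := Real.le_sqrt_of_sq_le (by nlinarith)
  linarith

lemma uf_eq (a : ℝ) (ha : 0 ≤ a) : uf a + (uf a)⁻¹ = 2 + 2 * a := by
  have h1 := uf_ge a ha
  have h2 : 0 < uf a := by linarith
  have h3 : √(a ^ 2 + 2 * a) ^ 2 = a ^ 2 + 2 * a := Real.sq_sqrt (by positivity)
  have : uf a ^ 2 + 1 = (2 + 2 * a) * uf a := by unfold uf; nlinarith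
  field_simp
  linarith

lemma uf_lt_iff (a U : ℝ) (ha : 0 < a) (hU : 0 < U) : uf a < U ↔ 1 < U ∧ 2 + 2 * a < U + U⁻¹ := by
  have h1 := uf_ge a ha.le
  have h2 := uf_eq a ha.le
  have hu : 0 < uf a := by linarith
  have key : ∀ s t : ℝ, 1 < s → 1 < t → s < t → s + s⁻¹ < t + t⁻¹ := by
    intro s t hs ht hst
    have : t + t⁻¹ - (s + s⁻¹) = (t - s) * (s * t - 1) / (s * t) := by field_simp; ring
    have h3 : 0 < (t - s) * (s * t - 1) / (s * t) := by
      apply div_pos (mul_pos (by linarith) (by nlinarith)) (by positivity)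
    linarith
  constructor
  · intro h
    have hU1 : 1 < U := by linarith
    exact ⟨hU1, by rw [← h2]; exact key _ _ (by linarith) hU1 h⟩
  · rintro ⟨hU1, h⟩
    by_contra hc
    push Not at hc
    rcases hc.eq_or_lt with hc | hc
    · rw [← h2, hc] at h; exact lt_irrefl _ h
    · have := key _ _ hU1 (by linarith) hc
      linarith

lemma psi_exp (t : ℝ) : exp t - psi t = if t ≤ 0 then 0 else exp t + (exp t)⁻¹ - 2 := by
  unfold psi; split_ifs
  · simp
  · rw [Real.exp_neg]; ring

/-- Parameters of the concrete model. -/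
structure Par where
  α : ℝ
  δ : ℝ
  n : ℕ
  z0 : ℕ
  M : ℕ
  k0 : ℕ
  hα0 : 0 < α
  hα1 : α < 1
  hδ : 0 < δ
  hn : 1 ≤ n
  hz : 1 ≤ z0
  hzM : z0 ≤ M
  hM : Real.log n ≤ δ * ((M:ℝ) + 1 - z0)
  hk : 1 ≤ k0
  hH : 2 * (n:ℝ) ^ α * (exp (δ * z0) / n) + exp δ * (α / (1 - α) * (k0:ℝ) ^ (1 - 1 / α)
    + 1 / n * ((n:ℝ) ^ α * (α / (1 - α)))) ≤ 1 / 2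

namespace Par
variable (p : Par)

/-- Intensity. -/
def I : ℝ := (p.n : ℝ) ^ p.α
/-- Largest rung. -/
def v0 : ℝ := exp (p.δ * p.z0) / p.n
/-- Distance to the middle. -/
def mi (i : ℕ) : ℕ := if i < p.z0 then p.z0 - 1 - i else i - p.z0
/-- Unnormalized weights. -/
def q (i : ℕ) : ℝ := p.I * (1 - exp (-(p.α * p.δ))) * exp (-(p.α * p.δ) * p.mi i)
/-- Log-ratios. -/
def lam (i : ℕ) : ℝ := if i = 0 then 0 else if i < p.z0 then -(p.α * p.δ) else if i = p.z0 then 0 else p.α * p.δ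
/-- Total weight. -/
def R : ℝ := ∑ i ∈ Finset.range (p.M + 1), p.q i
/-- Number of static atoms plus `k0`. -/
def k1 : ℕ := ⌊p.v0 ^ (-p.α)⌋₊
/-- Number of static atoms. -/
def S : ℕ := p.k1 - p.k0
/-- Nonrandom atoms. -/
def c (k : ℕ) : ℝ := if k < p.S then ((p.k0:ℝ) + (k + 1) * 1) ^ (-1 / p.α)
  else 1 / p.n * (uf ((((k - p.S : ℕ):ℝ) + 1) / (2 * p.I))) ^ (-1 / p.α)

lemma n_pos : (0:ℝ) < p.n := by have := p.hn; positivity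
lemma I_pos : 0 < p.I := Real.rpow_pos_of_pos p.n_pos _
lemma v0_pos : 0 < p.v0 := div_pos (exp_pos _) p.n_pos
lemma ad_pos : 0 < p.α * p.δ := mul_pos p.hα0 p.hδ
lemma em_pos : 0 < 1 - exp (-(p.α * p.δ)) := by
  have := Real.exp_lt_one_iff.2 (show -(p.α * p.δ) < 0 by linarith [p.ad_pos]); linarith
lemma q_pos (i : ℕ) : 0 < p.q i := mul_pos (mul_pos p.I_pos p.em_pos) (exp_pos _)
lemma q_le (i : ℕ) : p.q i ≤ p.I * (p.α * p.δ) := by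
  unfold q
  have h1 := Real.add_one_le_exp (-(p.α * p.δ))
  have h2 : exp (-(p.α * p.δ) * p.mi i) ≤ 1 := Real.exp_le_one_iff.2 (by
    have := mul_nonneg p.ad_pos.le (Nat.cast_nonneg (α := ℝ) (p.mi i)); linarith)
  have h3 := p.I_pos
  have h4 := p.em_pos
  calc _ ≤ p.I * (1 - exp (-(p.α * p.δ))) * 1 := by gcongr
    _ ≤ _ := by rw [mul_one]; gcongr; linarith
lemma R_pos : 0 < p.R := Finset.sum_pos (fun i _ => p.q_pos i) (by simp)

lemma q_psi (i : ℕ) : p.q i = p.I * (psi (p.α * p.δ * ((i:ℝ) + 1 - p.z0)) - psi (p.α * p.δ * ((i:ℝ) - p.z0))) := by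
  have ha := p.ad_pos
  unfold q psi mi
  rw [mul_assoc]
  congr 1
  by_cases h : i < p.z0
  · have h' : (i:ℝ) + 1 ≤ p.z0 := by exact_mod_cast h
    rw [if_pos h, if_pos (by nlinarith), if_pos (by nlinarith), sub_mul, one_mul, ← Real.exp_add]
    rw [Nat.sub_sub, Nat.cast_sub (by omega)]
    congr 2 <;> push_cast <;> ring
  · have h' : (p.z0:ℝ) ≤ i := by exact_mod_cast (not_lt.1 h)
    rw [if_neg h, if_neg (by nlinarith), Nat.cast_sub (not_lt.1 h)]
    have e : (if p.α * p.δ * ((i:ℝ) - p.z0) ≤ 0 then exp (p.α * p.δ * ((i:ℝ) - p.z0)) else 2 - exp (-(p.α * p.δ * ((i:ℝ) - p.z0)))) = 2 - exp (-(p.α * p.δ * ((i:ℝ) - p.z0))) := by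
      split_ifs with h2
      · have : (i:ℝ) - p.z0 = 0 := by
          have : 0 ≤ (i:ℝ) - p.z0 := by linarith
          by_contra hne
          have : 0 < (i:ℝ) - p.z0 := lt_of_le_of_ne this (Ne.symm hne)
          nlinarith [mul_pos ha this]
        rw [this]; simp; norm_num
      · rfl
    rw [e, sub_mul, one_mul, ← Real.exp_add]
    have e2 : -(p.α * p.δ) + -(p.α * p.δ) * ((i:ℝ) - p.z0) = -(p.α * p.δ * ((i:ℝ) + 1 - p.z0)) := by ring
    rw [e2, show -(p.α * p.δ) * ((i:ℝ) - p.z0) = -(p.α * p.δ * ((i:ℝ) - p.z0)) by ring]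
    ring

lemma q_sum (i : ℕ) : ∑ k ∈ Finset.range i, p.q k
    = p.I * (psi (p.α * p.δ * ((i:ℝ) - p.z0)) - psi (-(p.α * p.δ * p.z0))) := by
  induction i with
  | zero => simp
  | succ i ih => rw [Finset.sum_range_succ, ih, q_psi]; push_cast; ring

lemma v0_rpow : p.v0 ^ (-p.α) = p.I * exp (-(p.α * p.δ * p.z0)) := by
  unfold v0 I
  rw [Real.div_rpow (exp_pos _).le p.n_pos.le, ← Real.exp_mul, Real.rpow_neg p.n_pos.le, div_inv_eq_mul, mul_comm]
  congr 2; ring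

lemma psi_z0 : p.I * psi (-(p.α * p.δ * p.z0)) = p.v0 ^ (-p.α) := by
  rw [v0_rpow]; unfold psi
  rw [if_pos]
  have := mul_nonneg p.ad_pos.le (Nat.cast_nonneg (α := ℝ) p.z0); linarith

lemma R_le : p.R ≤ 2 * p.I := by
  have h1 := p.psi_z0
  have h2 := Real.rpow_pos_of_pos p.v0_pos (-p.α)
  unfold R
  rw [q_sum, mul_sub, h1]
  have := psi_le_two (p.α * p.δ * (((p.M + 1 : ℕ):ℝ) - p.z0))
  nlinarith [p.I_pos]

lemma q_ratio (i : ℕ) : p.q i = p.q (i + 1) * exp (p.lam (i + 1)) := by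
  unfold q
  rw [mul_assoc (p.I * _) _ (exp (p.lam (i + 1))), ← Real.exp_add]
  congr 2
  unfold lam mi
  rw [if_neg (show ¬ i + 1 = 0 by omega)]
  by_cases h1 : i + 1 < p.z0
  · rw [if_pos (show i < p.z0 by omega), if_pos h1, if_pos h1]
    rw [show p.z0 - 1 - i = (p.z0 - 1 - (i + 1)) + 1 by omega]; push_cast; ring
  · by_cases h2 : i + 1 = p.z0
    · rw [if_pos (show i < p.z0 by omega), if_neg h1, if_neg h1, if_pos h2]
      rw [show p.z0 - 1 - i = 0 by omega, show i + 1 - p.z0 = 0 by omega]; simp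
    · rw [if_neg (show ¬ i < p.z0 by omega), if_neg h1, if_neg h1, if_neg h2]
      rw [show i + 1 - p.z0 = (i - p.z0) + 1 by omega]; push_cast; ring

lemma uf_arg_nonneg (k : ℕ) : 0 < ((k:ℝ) + 1) / (2 * p.I) := by have := p.I_pos; positivity

lemma c_shift (k : ℕ) : p.c (k + p.S) = 1 / p.n * (uf (((k:ℝ) + 1) / (2 * p.I))) ^ (-1 / p.α) := by
  unfold c; rw [if_neg (by omega), Nat.add_sub_cancel]

lemma c_pos (k : ℕ) : 0 < p.c k := by
  unfold c
  have := p.n_pos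
  split_ifs
  · exact Real.rpow_pos_of_pos (by positivity) _
  · have h1 := p.uf_arg_nonneg (k - p.S)
    have h2 := uf_ge _ h1.le
    have := Real.rpow_pos_of_pos (show 0 < uf ((((k - p.S : ℕ):ℝ) + 1) / (2 * p.I)) by linarith) (-1 / p.α)
    positivity

lemma c_shift_le (k : ℕ) : p.c (k + p.S) ≤ 1 / p.n * (1 + ((k:ℝ) + 1) * (1 / p.I)) ^ (-1 / p.α) := by
  rw [c_shift]
  have h1 := p.uf_arg_nonneg k
  have h2 := uf_ge _ h1.le
  have h3 := p.n_pos
  have hI := p.I_pos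
  have ha := p.hα0
  refine mul_le_mul_of_nonneg_left ?_ (by positivity)
  refine Real.rpow_le_rpow_of_nonpos (by positivity) (le_trans (le_of_eq ?_) h2) ?_
  · field_simp
  · rw [neg_div]; have : 0 ≤ 1 / p.α := by positivity
    linarith

lemma tele_det : Summable (fun k => p.c (k + p.S)) ∧ ∑' k, p.c (k + p.S) ≤ 1 / p.n * (p.I * (p.α / (1 - p.α))) := by
  have hI := p.I_pos
  have h3 := p.n_pos
  have hs := tele_summable p.α 1 (1 / p.I) p.hα0 p.hα1 one_pos (by positivity)
  have hs' := hs.mul_left (1 / (p.n : ℝ))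
  have hc : Summable (fun k => p.c (k + p.S)) := Summable.of_nonneg_of_le (fun k => (p.c_pos _).le) p.c_shift_le hs'
  refine ⟨hc, (hc.tsum_le_tsum p.c_shift_le hs').trans ?_⟩
  rw [tsum_mul_left]
  refine mul_le_mul_of_nonneg_left ?_ (by positivity)
  refine Real.tsum_le_of_sum_range_le (fun k => Real.rpow_nonneg (by positivity) _) fun K => ?_
  have := tele_sum p.α 1 (1 / p.I) p.hα0 p.hα1 one_pos (by positivity) K
  simpa using this

lemma c_summable : Summable p.c := (summable_nat_add_iff p.S).1 p.tele_det.1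

lemma c_tsum : ∑' k, p.c k ≤ p.α / (1 - p.α) * (p.k0:ℝ) ^ (1 - 1 / p.α) + 1 / p.n * (p.I * (p.α / (1 - p.α))) := by
  rw [← p.c_summable.sum_add_tsum_nat_add p.S]
  refine add_le_add ?_ p.tele_det.2
  have hk : (0:ℝ) < p.k0 := by have := p.hk; positivity
  have := tele_sum p.α p.k0 1 p.hα0 p.hα1 hk one_pos p.S
  refine le_trans (le_of_eq ?_) (this.trans (le_of_eq (by ring)))
  refine Finset.sum_congr rfl fun k hk => ?_
  unfold c; rw [if_pos (Finset.mem_range.1 hk)]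

lemma N_le : ((⌊p.R⌋₊ : ℕ) : ℝ) ≤ 2 * p.I := (Nat.floor_le p.R_pos.le).trans p.R_le

/-- The concrete model. -/
def mdl : Mdl where
  N := ⌊p.R⌋₊
  M := p.M
  S := p.S
  δ := p.δ
  v0 := p.v0
  c := p.c
  w := fun i => p.q i / p.R
  lam := p.lam
  hδ := p.hδ
  hv0 := p.v0_pos
  hc := p.c_pos
  hcs := p.c_summable
  hw := fun i => div_pos (p.q_pos i) p.R_pos
  hw1 := by rw [← Finset.sum_div]; exact div_self p.R_pos.ne'
  hlam := fun i _ => by rw [p.q_ratio i]; ring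
  hlam0 := by simp [lam]
  hhalf := by
    refine le_trans (add_le_add ?_ ?_) p.hH
    · exact mul_le_mul_of_nonneg_right p.N_le p.v0_pos.le
    · exact mul_le_mul_of_nonneg_left p.c_tsum (exp_pos _).le

lemma mD_bound : p.mdl.mD ≤ 1 / p.n * (p.I * (p.α / (1 - p.α))) := by
  refine le_trans (le_of_eq ?_) p.tele_det.2
  unfold Mdl.mD
  rw [← p.mdl.mD_summable.sum_add_tsum_nat_add p.S]
  have : ∑ i ∈ Finset.range p.S, (if i < p.mdl.S then 0 else p.mdl.c i) = 0 := by
    refine Finset.sum_eq_zero fun i hi => ?_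
    rw [if_pos (show i < p.mdl.S from Finset.mem_range.1 hi)]
  rw [this, zero_add]
  refine tsum_congr fun k => ?_
  rw [if_neg (show ¬ k + p.S < p.mdl.S by change ¬ k + p.S < p.S; omega)]
  rfl

lemma k1_le (h : 0 < p.S) : ((p.k0 : ℝ) + p.S) ≤ p.v0 ^ (-p.α) := by
  have h1 : p.k0 + p.S = p.k1 := by unfold S at *; omega
  have := Nat.floor_le (Real.rpow_nonneg p.v0_pos.le (-p.α))
  unfold k1 at h1
  rw [← h1] at this; push_cast at this; exact this

lemma rp_inv (x : ℝ) (hx : 0 < x) : (x ^ (-p.α)) ^ (-1 / p.α) = x := by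
  rw [← Real.rpow_mul hx.le]
  have : -p.α * (-1 / p.α) = 1 := by have := p.hα0.ne'; field_simp
  rw [this, Real.rpow_one]

lemma lt_rp (x y : ℝ) (hx : 0 < x) (hy : 0 < y) : x < y ^ (-1 / p.α) ↔ y < x ^ (-p.α) := by
  have hneg : -1 / p.α < 0 := by rw [neg_div]; have := p.hα0; have : 0 < 1 / p.α := by positivity
                                 linarith
  conv_lhs => rw [← p.rp_inv x hx]
  exact Real.rpow_lt_rpow_iff_of_neg (Real.rpow_pos_of_pos hx _) hy hneg

lemma static_ge (k : ℕ) (hk : k < p.S) : p.v0 ≤ p.c k := by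
  unfold c; rw [if_pos hk]
  by_contra hc
  push Not at hc
  have h1 := p.k1_le (by omega)
  have hk' : (k:ℝ) + 1 ≤ p.S := by exact_mod_cast hk
  have hle : (p.k0:ℝ) + (k + 1) * 1 ≤ p.v0 ^ (-p.α) := by linarith
  have hneg : -1 / p.α ≤ 0 := by rw [neg_div]; have := p.hα0; have : 0 < 1 / p.α := by positivity
                                 linarith
  have := Real.rpow_le_rpow_of_nonpos (by positivity) hle hneg
  rw [p.rp_inv _ p.v0_pos] at this
  linarith

end Par

namespace Par
variable (p : Par)

lemma b_pos (s : Bool) : 0 < p.mdl.b s := by have := p.mdl.b_ge s; linarith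

lemma cc_count (s : Bool) (x : ℝ) (hx : 0 < x) :
    {k | x < p.mdl.cc s k}.ncard = {k | k < p.S ∧ x < p.c k}.ncard
      + {i | x < p.mdl.b s * p.c (i + p.S)}.ncard := by
  have hf := p.mdl.finite_cc s x hx
  have e1 : {k | x < p.mdl.cc s k} = {k | k < p.S ∧ x < p.c k} ∪
      (fun i => i + p.S) '' {i | x < p.mdl.b s * p.c (i + p.S)} := by
    ext k
    simp only [Set.mem_union, Set.mem_ofPred_eq, Set.mem_image]
    have hcc : p.mdl.cc s k = if k < p.S then p.c k else p.mdl.b s * p.c k := rfl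
    rw [hcc]
    by_cases h : k < p.S
    · rw [if_pos h]
      constructor
      · intro h2; exact Or.inl ⟨h, h2⟩
      · rintro (h2 | ⟨i, _, rfl⟩)
        · exact h2.2
        · omega
    · rw [if_neg h]
      constructor
      · intro h2; exact Or.inr ⟨k - p.S, by rwa [Nat.sub_add_cancel (by omega)], by omega⟩
      · rintro (h2 | ⟨i, h3, rfl⟩)
        · exact absurd h2.1 h
        · exact h3
  have f1 : {k | k < p.S ∧ x < p.c k}.Finite := hf.subset (by rw [e1]; exact Set.subset_union_left)
  have f2 : ((fun i => i + p.S) '' {i | x < p.mdl.b s * p.c (i + p.S)}).Finite :=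
    hf.subset (by rw [e1]; exact Set.subset_union_right)
  rw [e1, Set.ncard_union_eq ?_ f1 f2, Set.ncard_image_of_injective]
  · intro a b h; simpa using h
  · rw [Set.disjoint_left]
    rintro k ⟨h, _⟩ ⟨i, _, rfl⟩
    simp only at h
    omega

/-- Log-scale position. -/
def tau (s : Bool) (x : ℝ) : ℝ := -p.α * Real.log (p.n * x / p.mdl.b s)

lemma exp_tau (s : Bool) (x : ℝ) (hx : 0 < x) : exp (p.tau s x) = (p.n * x / p.mdl.b s) ^ (-p.α) := by
  have h1 := p.b_pos s
  have h2 := p.n_pos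
  rw [Real.rpow_def_of_pos (by positivity)]; unfold tau; ring_nf

lemma det_count (s : Bool) (x : ℝ) (hx : 0 < x) :
    |({i | x < p.mdl.b s * p.c (i + p.S)}.ncard : ℝ) - p.I * (exp (p.tau s x) - psi (p.tau s x))| ≤ 2 := by
  have hb := p.b_pos s
  have hn := p.n_pos
  have hI := p.I_pos
  have hU := exp_pos (p.tau s x)
  have hmem : ∀ i : ℕ, x < p.mdl.b s * p.c (i + p.S) ↔
      1 < exp (p.tau s x) ∧ 2 + 2 * (((i:ℝ) + 1) / (2 * p.I)) < exp (p.tau s x) + (exp (p.tau s x))⁻¹ := by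
    intro i
    have ha := p.uf_arg_nonneg i
    have hu := uf_ge _ ha.le
    rw [← uf_lt_iff _ _ ha hU, exp_tau _ _ _ hx, ← p.lt_rp _ _ (by positivity) (by linarith), c_shift]
    rw [div_lt_iff₀ hb]
    constructor
    · intro h
      have := mul_lt_mul_of_pos_left h hn
      refine this.trans_le (le_of_eq ?_)
      field_simp
    · intro h
      have h' := mul_lt_mul_of_pos_left h (show 0 < 1 / (p.n:ℝ) by positivity)
      calc x = 1 / (p.n:ℝ) * (p.n * x) := by field_simp
        _ < _ := h'
        _ = _ := by ring
  rw [psi_exp]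
  split_ifs with h
  · have : {i | x < p.mdl.b s * p.c (i + p.S)} = ∅ := by
      ext i
      simp only [Set.mem_ofPred_eq, hmem, Set.mem_empty_iff_false, iff_false, not_and]
      intro h1
      have := Real.exp_le_one_iff.2 h
      linarith
    rw [this]; simp
  · have h1 : 1 < exp (p.tau s x) := Real.one_lt_exp_iff.2 (by linarith)
    set U := exp (p.tau s x)
    have hc := cnt_nat {i | x < p.mdl.b s * p.c (i + p.S)} (p.I * (U + U⁻¹ - 2) - 1) (by
      intro i
      simp only [Set.mem_ofPred_eq, hmem, h1, true_and]
      have : ((i:ℝ) + 1) = p.I * (2 * (((i:ℝ) + 1) / (2 * p.I))) := by field_simp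
      constructor
      · intro h
        have : p.I * (2 * (((i:ℝ) + 1) / (2 * p.I))) < p.I * (U + U⁻¹ - 2) := mul_lt_mul_of_pos_left (by linarith) hI
        linarith
      · intro h
        have : p.I * (2 * (((i:ℝ) + 1) / (2 * p.I))) < p.I * (U + U⁻¹ - 2) := by linarith
        have := lt_of_mul_lt_mul_left this hI.le
        linarith)
    have hUU : 0 ≤ U + U⁻¹ - 2 := by
      have : U + U⁻¹ - 2 = (U - 1) ^ 2 / U := by field_simp; ring
      rw [this]; positivity
    have hY := mul_nonneg hI.le hUU
    rw [abs_le] at hc ⊢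
    rcases le_total (p.I * (U + U⁻¹ - 2) - 1) 0 with h3 | h3
    · rw [max_eq_right h3] at hc; constructor <;> linarith
    · rw [max_eq_left h3] at hc; constructor <;> linarith

lemma target (s : Bool) (x : ℝ) (hx : 0 < x) :
    p.I * exp (p.tau s x) = p.mdl.b s ^ p.α * x ^ (-p.α) := by
  have hb := p.b_pos s
  have hn := p.n_pos
  rw [exp_tau _ _ _ hx, Real.div_rpow (by positivity) hb.le, Real.mul_rpow hn.le hx.le]
  unfold I
  rw [Real.rpow_neg hn.le, Real.rpow_neg hb.le]
  have := Real.rpow_pos_of_pos hn p.α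
  field_simp

lemma S_approx : |(p.S : ℝ) - p.v0 ^ (-p.α)| ≤ p.k0 + 1 := by
  have h1 := Nat.floor_le (Real.rpow_nonneg p.v0_pos.le (-p.α))
  have h2 := Nat.lt_floor_add_one (p.v0 ^ (-p.α))
  have h3 : p.S = ⌊p.v0 ^ (-p.α)⌋₊ - p.k0 := rfl
  have h4 : (p.S : ℝ) ≤ (⌊p.v0 ^ (-p.α)⌋₊ : ℝ) := by exact_mod_cast (show p.S ≤ ⌊p.v0 ^ (-p.α)⌋₊ by omega)
  have h5 : (⌊p.v0 ^ (-p.α)⌋₊ : ℝ) ≤ p.S + p.k0 := by exact_mod_cast (show ⌊p.v0 ^ (-p.α)⌋₊ ≤ p.S + p.k0 by omega)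
  rw [abs_le]; constructor <;> linarith

lemma static_lo (x : ℝ) (hx : x < p.v0) : {k | k < p.S ∧ x < p.c k}.ncard = p.S := by
  have : {k | k < p.S ∧ x < p.c k} = ((Finset.range p.S : Finset ℕ) : Set ℕ) := by
    ext k
    simp only [Set.mem_ofPred_eq, Finset.coe_range, Set.mem_Iio, and_iff_left_iff_imp]
    intro h; exact hx.trans_le (p.static_ge k h)
  rw [this, Set.ncard_coe_finset, Finset.card_range]

lemma static_hi (x : ℝ) (hx0 : 0 < x) (hx : p.v0 ≤ x) :
    |({k | k < p.S ∧ x < p.c k}.ncard : ℝ) - x ^ (-p.α)| ≤ p.k0 + 2 := by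
  have hx' := Real.rpow_pos_of_pos hx0 (-p.α)
  have hc := cnt_nat {k | k < p.S ∧ x < p.c k} (x ^ (-p.α) - p.k0 - 1) (by
    intro k
    simp only [Set.mem_ofPred_eq]
    constructor
    · rintro ⟨h1, h2⟩
      unfold c at h2
      rw [if_pos h1, p.lt_rp _ _ hx0 (by positivity)] at h2
      linarith
    · intro h
      have h2 : (p.k0:ℝ) + (k + 1) * 1 < x ^ (-p.α) := by linarith
      have h3 : x ^ (-p.α) ≤ p.v0 ^ (-p.α) :=
        Real.rpow_le_rpow_of_nonpos p.v0_pos hx (by linarith [p.hα0])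
      have h4 : p.k0 + (k + 1) ≤ p.k1 := by
        unfold k1
        apply Nat.le_floor
        push_cast; linarith
      have h1 : k < p.S := by unfold S; omega
      refine ⟨h1, ?_⟩
      unfold c; rw [if_pos h1, p.lt_rp _ _ hx0 (by positivity)]
      exact h2)
  rw [abs_le] at hc ⊢
  have hk : (0:ℝ) ≤ p.k0 := by positivity
  rcases le_total (x ^ (-p.α) - p.k0 - 1) 0 with h3 | h3
  · rw [max_eq_right h3] at hc; constructor <;> linarith
  · rw [max_eq_left h3] at hc; constructor <;> linarith

lemma rc_hi (z : p.mdl.Z) (x : ℝ) (hx : p.v0 ≤ x) : p.mdl.rc z x = 0 := by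
  unfold Mdl.rc
  rw [Finset.card_eq_zero, Finset.filter_eq_empty_iff]
  intro j _
  have := p.mdl.v_le (z j)
  have e : p.mdl.v0 = p.v0 := rfl
  linarith

/-- Upper part of the class estimate. -/
lemma class_hi (s : Bool) (z : p.mdl.Z) (x : ℝ) (hx0 : 0 < x) (hx : p.v0 ≤ x) (hd : p.α * p.δ ≤ 1) :
    |(tailF (p.mdl.P s z) x : ℝ) - p.mdl.b s ^ p.α * x ^ (-p.α)| ≤ p.k0 + 5 + 2 * (p.α * p.δ) * x ^ (-p.α) := by
  have h1 := p.mdl.tailF_eq s z x hx0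
  have h2 := p.static_hi x hx0 hx
  have h3 := p.det_count s x hx0
  rw [p.cc_count s x hx0, p.rc_hi z x hx] at h1
  have ht : p.tau s x ≤ 0 := by
    unfold tau
    have : 0 ≤ Real.log (p.n * x / p.mdl.b s) := by
      apply Real.log_nonneg
      rw [le_div_iff₀ (p.b_pos s), one_mul]
      have hb := p.mdl.b_le s
      have e : p.mdl.δ = p.δ := rfl
      rw [e] at hb
      have hz : (1:ℝ) ≤ p.z0 := by exact_mod_cast p.hz
      have h4 : exp p.δ ≤ exp (p.δ * p.z0) := Real.exp_le_exp.2 (by nlinarith [p.hδ])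
      have h5 : exp (p.δ * p.z0) = p.n * p.v0 := by unfold v0; have := p.n_pos; field_simp
      have := mul_le_mul_of_nonneg_left hx p.n_pos.le
      linarith
    nlinarith [p.hα0]
  rw [psi_exp, if_pos ht] at h3
  have hL : |p.mdl.b s ^ p.α - 1| ≤ 2 * (p.α * p.δ) := by
    cases s
    · have : p.mdl.b false = 1 := rfl
      rw [this]; simp; exact p.ad_pos.le
    · have : p.mdl.b true = exp p.δ := rfl
      rw [this, ← Real.exp_mul, mul_comm]
      have := Real.abs_exp_sub_one_le (x := p.α * p.δ) (by rw [abs_of_pos p.ad_pos]; exact hd)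
      rwa [abs_of_pos p.ad_pos] at this
  have hx' := Real.rpow_pos_of_pos hx0 (-p.α)
  have h6 : |p.mdl.b s ^ p.α * x ^ (-p.α) - x ^ (-p.α)| ≤ 2 * (p.α * p.δ) * x ^ (-p.α) := by
    rw [show p.mdl.b s ^ p.α * x ^ (-p.α) - x ^ (-p.α) = (p.mdl.b s ^ p.α - 1) * x ^ (-p.α) by ring, abs_mul, abs_of_pos hx']
    gcongr
  rw [abs_le] at *
  push_cast at h1
  rcases h1 with ⟨_, _⟩; rcases h2 with ⟨_, _⟩; rcases h3 with ⟨_, _⟩; rcases h6 with ⟨_, _⟩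
  constructor <;> linarith

lemma rc_lo (z : p.mdl.Z) (t : ℝ) (hz : p.mdl.Gd t z) (x : ℝ) (hx0 : 0 < x) (hx : x < p.v0) :
    |(p.mdl.rc z x : ℝ) - (p.I * psi (p.tau false x) - p.v0 ^ (-p.α))| ≤ t + 2 + p.I * (p.α * p.δ) := by
  have hδ := p.hδ
  have hI := p.I_pos
  have hn := p.n_pos
  set y := Real.log (p.v0 / x) / p.δ with hy
  have hy0 : 0 < y := div_pos (Real.log_pos ((one_lt_div hx0).2 hx)) hδ
  have hv : ∀ i : ℕ, x < p.mdl.v i ↔ (i:ℝ) < y := by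
    intro i
    have e : p.mdl.v i = p.v0 * exp (-p.δ * i) := rfl
    rw [e, hy, lt_div_iff₀ hδ, Real.lt_log_iff_exp_lt (div_pos p.v0_pos hx0), lt_div_iff₀ hx0,
      show -p.δ * (i:ℝ) = -(i * p.δ) by ring, Real.exp_neg, ← div_eq_mul_inv, lt_div_iff₀ (exp_pos _), mul_comm]
  have hc1 : 1 ≤ ⌈y⌉₊ := Nat.one_le_iff_ne_zero.2 (by rw [Ne, Nat.ceil_eq_zero]; linarith)
  set i := min (⌈y⌉₊ - 1) p.M with hi
  have hrc : p.mdl.rc z x = p.mdl.cz z i := by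
    unfold Mdl.rc Mdl.cz
    congr 1
    ext j
    simp only [Finset.mem_filter, Finset.mem_univ, true_and]
    rw [hv, ← Nat.lt_ceil]
    have : (z j : ℕ) < p.M + 1 := (z j).2
    omega
  have hG := hz i (min_le_right _ _)
  have hcw : p.R * p.mdl.cw i = p.I * psi (p.α * p.δ * ((i:ℝ) + 1 - p.z0)) - p.v0 ^ (-p.α) := by
    have h1 : p.mdl.cw i = (∑ k ∈ Finset.range (i + 1), p.q k) / p.R := by
      rw [Finset.sum_div]; rfl
    rw [h1, mul_div_cancel₀ _ p.R_pos.ne', q_sum, mul_sub, psi_z0]; push_cast; rfl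
  have hcw0 : 0 ≤ p.mdl.cw i := Finset.sum_nonneg fun k _ => (p.mdl.hw k).le
  have hcw1 : p.mdl.cw i ≤ 1 := by
    rw [← p.mdl.hw1]
    refine Finset.sum_le_sum_of_subset_of_nonneg ?_ fun k _ _ => (p.mdl.hw k).le
    apply Finset.range_subset_range.2
    change i + 1 ≤ p.M + 1
    omega
  have hN1 : (p.mdl.N : ℝ) ≤ p.R := Nat.floor_le p.R_pos.le
  have hN2 : p.R < p.mdl.N + 1 := Nat.lt_floor_add_one _
  have hNR : |(p.mdl.N : ℝ) * p.mdl.cw i - p.R * p.mdl.cw i| ≤ 1 := by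
    rw [abs_le]; constructor <;> nlinarith
  have htau : p.tau false x = p.α * p.δ * (y - p.z0) := by
    have hb : p.mdl.b false = 1 := rfl
    unfold tau
    rw [hb, div_one, hy]
    have hv0 : Real.log (p.v0 / x) = p.δ * p.z0 - Real.log (p.n * x) := by
      unfold v0
      rw [div_div, Real.log_div (exp_pos _).ne' (by positivity), Real.log_exp]
    rw [hv0]
    field_simp; ring
  have hpsi : |p.I * psi (p.α * p.δ * ((i:ℝ) + 1 - p.z0)) - p.I * psi (p.tau false x)| ≤ 1 + p.I * (p.α * p.δ) := by
    rw [← mul_sub, abs_mul, abs_of_pos hI]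
    have had := p.ad_pos
    by_cases hiM : ⌈y⌉₊ - 1 ≤ p.M
    · have hi2 : i = ⌈y⌉₊ - 1 := min_eq_left hiM
      have hi3 : (i:ℝ) + 1 = ⌈y⌉₊ := by rw [hi2]; exact_mod_cast (show ⌈y⌉₊ - 1 + 1 = ⌈y⌉₊ by omega)
      have := psi_lip (p.tau false x) (p.α * p.δ * ((i:ℝ) + 1 - p.z0))
      have h2 : |p.α * p.δ * ((i:ℝ) + 1 - p.z0) - p.tau false x| ≤ p.α * p.δ := by
        rw [htau, ← mul_sub, abs_mul, abs_of_pos had, hi3]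
        have h3 := Nat.le_ceil y
        have h4 := Nat.ceil_lt_add_one hy0.le
        have : |(⌈y⌉₊:ℝ) - p.z0 - (y - p.z0)| ≤ 1 := by rw [abs_le]; constructor <;> linarith
        nlinarith
      nlinarith
    · push Not at hiM
      have hi2 : i = p.M := min_eq_right hiM.le
      have hy1 : (p.M:ℝ) + 1 ≤ y := by
        have h4 : p.M + 1 < ⌈y⌉₊ := by omega
        rw [Nat.lt_ceil] at h4
        push_cast at h4; exact h4.le
      have hm := (psi_diff (p.α * p.δ * ((i:ℝ) + 1 - p.z0)) (p.tau false x) (by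
        rw [htau, hi2]; gcongr)).1
      have h2 := psi_le_two (p.tau false x)
      have h3 : 2 - 1 / p.I ≤ psi (p.α * p.δ * ((i:ℝ) + 1 - p.z0)) := by
        unfold psi
        have hzM : (p.z0:ℝ) ≤ p.M := by exact_mod_cast p.hzM
        rw [hi2, if_neg (by nlinarith)]
        have : exp (-(p.α * p.δ * ((p.M:ℝ) + 1 - p.z0))) ≤ exp (-(p.α * Real.log p.n)) := by
          apply Real.exp_le_exp.2
          have := mul_le_mul_of_nonneg_left p.hM p.hα0.le
          linarith
        have e : exp (-(p.α * Real.log p.n)) = 1 / p.I := by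
          unfold I
          rw [Real.rpow_def_of_pos hn, Real.exp_neg, one_div]; ring_nf
        linarith
      rw [abs_sub_comm, abs_of_nonneg hm]
      have h5 : p.I * (psi (p.tau false x) - psi (p.α * p.δ * ((i:ℝ) + 1 - p.z0))) ≤ p.I * (1 / p.I) := by
        gcongr; linarith
      rw [mul_one_div_cancel hI.ne'] at h5
      nlinarith [mul_pos hI had]
  rw [hrc]
  rw [hcw] at hNR
  rw [abs_le] at *
  rcases hG with ⟨_, _⟩; rcases hNR with ⟨_, _⟩; rcases hpsi with ⟨_, _⟩
  constructor <;> linarith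

/-- Lower part of the class estimate. -/
lemma class_lo (s : Bool) (z : p.mdl.Z) (t : ℝ) (hz : p.mdl.Gd t z) (x : ℝ) (hx0 : 0 < x) (hx : x < p.v0) :
    |(tailF (p.mdl.P s z) x : ℝ) - p.mdl.b s ^ p.α * x ^ (-p.α)| ≤ p.k0 + 6 + t + 2 * (p.I * (p.α * p.δ)) := by
  have h1 := p.mdl.tailF_eq s z x hx0
  have h2 := p.S_approx
  have h3 := p.det_count s x hx0
  have h4 := p.rc_lo z t hz x hx0 hx
  rw [p.cc_count s x hx0, p.static_lo x hx] at h1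
  rw [mul_sub, p.target s x hx0] at h3
  have hI := p.I_pos
  have h5 : |p.I * psi (p.tau s x) - p.I * psi (p.tau false x)| ≤ p.I * (p.α * p.δ) := by
    rw [← mul_sub, abs_mul, abs_of_pos hI]
    refine mul_le_mul_of_nonneg_left ((psi_lip _ _).trans ?_) hI.le
    have hn := p.n_pos
    cases s
    · simp; exact p.ad_pos.le
    · unfold tau
      have e1 : p.mdl.b false = 1 := rfl
      have e2 : p.mdl.b true = exp p.δ := rfl
      rw [e1, e2, Real.log_div (by positivity) (exp_pos _).ne', Real.log_exp, div_one]
      rw [show -p.α * (Real.log (p.n * x) - p.δ) - -p.α * Real.log (p.n * x) = p.α * p.δ by ring,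
        abs_of_pos p.ad_pos]
  rw [abs_le] at *
  push_cast at h1
  rcases h1 with ⟨_, _⟩; rcases h2 with ⟨_, _⟩; rcases h3 with ⟨_, _⟩; rcases h4 with ⟨_, _⟩
  rcases h5 with ⟨_, _⟩
  constructor <;> linarith
end Par

namespace Par
variable (p : Par)

lemma psi_mi (a : ℝ) (ha : 0 < a) (i : ℕ) : (1 - exp (-a)) * exp (-a * p.mi i)
    = psi (a * ((i:ℝ) + 1 - p.z0)) - psi (a * ((i:ℝ) - p.z0)) := by
  unfold psi mi
  by_cases h : i < p.z0
  · have h' : (i:ℝ) + 1 ≤ p.z0 := by exact_mod_cast h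
    rw [if_pos h, if_pos (by nlinarith), if_pos (by nlinarith), sub_mul, one_mul, ← Real.exp_add]
    rw [Nat.sub_sub, Nat.cast_sub (by omega)]
    congr 2 <;> push_cast <;> ring
  · have h' : (p.z0:ℝ) ≤ i := by exact_mod_cast (not_lt.1 h)
    rw [if_neg h, if_neg (by nlinarith), Nat.cast_sub (not_lt.1 h)]
    have e : (if a * ((i:ℝ) - p.z0) ≤ 0 then exp (a * ((i:ℝ) - p.z0)) else 2 - exp (-(a * ((i:ℝ) - p.z0)))) = 2 - exp (-(a * ((i:ℝ) - p.z0))) := by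
      split_ifs with h2
      · have : (i:ℝ) - p.z0 = 0 := by
          have : 0 ≤ (i:ℝ) - p.z0 := by linarith
          by_contra hne
          have : 0 < (i:ℝ) - p.z0 := lt_of_le_of_ne this (Ne.symm hne)
          nlinarith [mul_pos ha this]
        rw [this]; simp; norm_num
      · rfl
    rw [e, sub_mul, one_mul, ← Real.exp_add]
    have e2 : -a + -a * ((i:ℝ) - p.z0) = -(a * ((i:ℝ) + 1 - p.z0)) := by ring
    rw [e2, show -a * ((i:ℝ) - p.z0) = -(a * ((i:ℝ) - p.z0)) by ring]
    ring

lemma sum_mi (a : ℝ) (ha : 0 < a) (K : ℕ) : ∑ k ∈ Finset.range K, exp (-a * p.mi k) ≤ 2 * (1 + a) / a := by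
  have h1 : (1 - exp (-a)) * ∑ k ∈ Finset.range K, exp (-a * p.mi k)
      = psi (a * ((K:ℝ) - p.z0)) - psi (a * (0 - p.z0)) := by
    rw [Finset.mul_sum]
    induction K with
    | zero => simp
    | succ K ih => rw [Finset.sum_range_succ, ih, psi_mi _ a ha]; push_cast; ring
  have h2 := psi_le_two (a * ((K:ℝ) - p.z0))
  have h3 : 0 ≤ psi (a * (0 - p.z0)) := by
    unfold psi
    rw [if_pos]
    · exact (exp_pos _).le
    · have : (0:ℝ) ≤ p.z0 := by positivity
      nlinarith
  have h4 : a / (1 + a) ≤ 1 - exp (-a) := by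
    have h5 := Real.add_one_le_exp a
    rw [Real.exp_neg]
    have : (exp a)⁻¹ ≤ (1 + a)⁻¹ := inv_anti₀ (by linarith) (by linarith)
    have e : a / (1 + a) = 1 - (1 + a)⁻¹ := by field_simp; ring
    linarith
  have h6 : 0 ≤ ∑ k ∈ Finset.range K, exp (-a * p.mi k) := Finset.sum_nonneg fun _ _ => (exp_pos _).le
  have h7 : a / (1 + a) * ∑ k ∈ Finset.range K, exp (-a * p.mi k) ≤ 2 := by nlinarith
  rw [le_div_iff₀ ha]
  rw [div_mul_eq_mul_div, div_le_iff₀ (by linarith)] at h7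
  linarith

/-- expected count at rung `i`, times unseen probability -/
def aa (i : ℕ) : ℝ := p.q i * (1 - p.mdl.v i) ^ p.n

lemma v_half (hv : p.v0 ≤ 1/2) (i : ℕ) : p.mdl.v i ≤ 1/2 := (p.mdl.v_le i).trans hv

lemma aa_pos (hv : p.v0 ≤ 1/2) (i : ℕ) : 0 < p.aa i := by
  have := p.v_half hv i
  exact mul_pos (p.q_pos i) (pow_pos (by linarith) _)

lemma aa_le (hv : p.v0 ≤ 1/2) (i : ℕ) : p.aa i ≤ p.q i * exp (-(p.n * p.mdl.v i)) := by
  unfold aa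
  refine mul_le_mul_of_nonneg_left ?_ (p.q_pos i).le
  have h1 := p.v_half hv i
  have h2 := Real.add_one_le_exp (-p.mdl.v i)
  have : exp (-(p.n * p.mdl.v i)) = exp (-p.mdl.v i) ^ p.n := by rw [← Real.exp_nat_mul]; ring_nf
  rw [this]
  exact pow_le_pow_left₀ (by linarith) (by linarith) _

/-- log-ratio -/
def lr (i : ℕ) : ℝ := - p.lam (i + 1) + p.n * (Real.log (1 - p.mdl.v (i + 1)) - Real.log (1 - p.mdl.v i))

lemma aa_ratio (hv : p.v0 ≤ 1/2) (i : ℕ) : p.aa (i + 1) = p.aa i * exp (p.lr i) := by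
  have h1 := p.v_half hv i
  have h2 := p.v_half hv (i + 1)
  unfold aa lr
  rw [p.q_ratio i, Real.exp_add, Real.exp_nat_mul, Real.exp_sub, Real.exp_log (by linarith),
    Real.exp_log (by linarith), Real.exp_neg, div_pow]
  have : (1 - p.mdl.v i) ^ p.n ≠ 0 := (pow_pos (by linarith) _).ne'
  have := (exp_pos (p.lam (i + 1))).ne'
  field_simp

lemma lam_abs (i : ℕ) : |p.lam i| ≤ p.α * p.δ := by
  have := p.ad_pos
  unfold lam
  split_ifs <;> simp [abs_of_pos p.hα0, abs_of_pos p.hδ] <;> exact this.le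

lemma logdiff (hv : p.v0 ≤ 1/2) (i : ℕ) :
    (exp p.δ - 1) * p.mdl.v (i + 1) / (1 - p.mdl.v (i + 1)) ≤ Real.log (1 - p.mdl.v (i + 1)) - Real.log (1 - p.mdl.v i) ∧
    Real.log (1 - p.mdl.v (i + 1)) - Real.log (1 - p.mdl.v i) ≤ 2 * p.δ * p.mdl.v i := by
  have h1 := p.v_half hv i
  have h2 := p.v_half hv (i + 1)
  have hp1 : 0 < 1 - p.mdl.v i := by linarith
  have hp2 : 0 < 1 - p.mdl.v (i + 1) := by linarith
  have hs : p.mdl.v i = exp p.δ * p.mdl.v (i + 1) := p.mdl.v_succ i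
  have hv0 := p.mdl.v_pos i
  have hv1 := p.mdl.v_pos (i + 1)
  constructor
  · have := Real.log_le_sub_one_of_pos (div_pos hp1 hp2)
    rw [Real.log_div hp1.ne' hp2.ne'] at this
    have e : (1 - p.mdl.v i) / (1 - p.mdl.v (i + 1)) - 1 = - ((exp p.δ - 1) * p.mdl.v (i + 1) / (1 - p.mdl.v (i + 1))) := by
      rw [hs]; field_simp; ring
    linarith
  · have := Real.log_le_sub_one_of_pos (div_pos hp2 hp1)
    rw [Real.log_div hp2.ne' hp1.ne'] at this
    have e : (1 - p.mdl.v (i + 1)) / (1 - p.mdl.v i) - 1 = (p.mdl.v i - p.mdl.v (i + 1)) / (1 - p.mdl.v i) := by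
      field_simp; ring
    have h3 : p.mdl.v i - p.mdl.v (i + 1) ≤ p.δ * p.mdl.v i := by
      have h4 := Real.add_one_le_exp (-p.δ)
      have h5 : p.mdl.v (i + 1) = exp (-p.δ) * p.mdl.v i := by rw [hs, Real.exp_neg]; field_simp
      rw [h5]; nlinarith
    have h6 : (p.mdl.v i - p.mdl.v (i + 1)) / (1 - p.mdl.v i) ≤ 2 * p.δ * p.mdl.v i := by
      rw [div_le_iff₀ hp1]
      have : 0 ≤ p.δ * p.mdl.v i := mul_nonneg p.hδ.le hv0.le
      nlinarith
    linarith

lemma lr_abs (hv : p.v0 ≤ 1/2) (i : ℕ) : |p.lr i| ≤ p.δ * (p.α + 2 * (p.n * p.mdl.v i)) := by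
  have h := p.logdiff hv i
  have h2 := p.lam_abs (i + 1)
  have hn := p.n_pos
  have h1 := p.v_half hv (i + 1)
  have hv1 := p.mdl.v_pos (i + 1)
  have h0 : 0 ≤ Real.log (1 - p.mdl.v (i + 1)) - Real.log (1 - p.mdl.v i) := by
    refine le_trans ?_ h.1
    have := Real.one_le_exp p.hδ.le
    exact div_nonneg (mul_nonneg (by linarith) hv1.le) (by linarith)
  unfold lr
  have h3 : (p.n:ℝ) * (Real.log (1 - p.mdl.v (i + 1)) - Real.log (1 - p.mdl.v i)) ≤ p.n * (2 * p.δ * p.mdl.v i) := by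
    gcongr; exact h.2
  have h4 := mul_nonneg hn.le h0
  rw [abs_le] at h2 ⊢
  have h5 : 0 ≤ p.n * (2 * p.δ * p.mdl.v i) := h4.trans h3
  constructor <;> nlinarith

lemma qphi (hv : p.v0 ≤ 1/2) (i : ℕ) :
    -(p.aa (i + 1) - p.aa i) - p.aa i * (exp (p.lr i) - 1) ^ 2 ≤ p.q (i + 1) * p.mdl.phi p.n (i + 1) := by
  have h1 := p.v_half hv (i + 1)
  have hp : 0 < 1 - p.mdl.v (i + 1) := by linarith
  have h2 := (p.logdiff hv i).1
  have e1 : p.mdl.phi p.n (i + 1) = (1 - p.mdl.v (i + 1)) ^ p.n *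
      (p.lam (i + 1) - p.n * ((exp p.δ - 1) * p.mdl.v (i + 1) / (1 - p.mdl.v (i + 1)))) := by
    unfold Mdl.phi Mdl.vv
    rw [if_neg (by omega)]
    have hh : (1 - p.mdl.v (i + 1)) ^ p.n = (1 - p.mdl.v (i + 1)) ^ (p.n - 1) * (1 - p.mdl.v (i + 1)) := by
      rw [← pow_succ, Nat.sub_add_cancel p.hn]
    rw [hh]
    have ed : p.mdl.δ = p.δ := rfl
    have el : p.mdl.lam = p.lam := rfl
    rw [ed, el]
    field_simp
  have e2 : -p.lr i ≤ p.lam (i + 1) - p.n * ((exp p.δ - 1) * p.mdl.v (i + 1) / (1 - p.mdl.v (i + 1))) := by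
    unfold lr
    have := mul_le_mul_of_nonneg_left h2 p.n_pos.le
    linarith
  have e3 : p.q (i + 1) * p.mdl.phi p.n (i + 1) ≥ p.aa (i + 1) * (-p.lr i) := by
    rw [e1, ← mul_assoc]
    exact mul_le_mul_of_nonneg_left e2 (p.aa_pos hv (i + 1)).le
  refine le_trans ?_ e3
  rw [p.aa_ratio hv i]
  have h4 := Real.add_one_le_exp (p.lr i)
  have h5 := mul_pos (p.aa_pos hv i) (exp_pos (p.lr i))
  have h6 := mul_le_mul_of_nonneg_left (show p.lr i ≤ exp (p.lr i) - 1 by linarith) h5.le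
  nlinarith

lemma ysq (y : ℝ) (hy : 0 < y) : y ^ 2 * exp (-y) ≤ 3/2 * (1/y) ∧ y ^ 2 * exp (-y) ≤ 3/2 * y := by
  constructor
  · have h1 := Real.add_one_le_exp (y / 3 - 1)
    have h2 : (y / 3) ^ 3 ≤ exp (y / 3 - 1) ^ 3 := pow_le_pow_left₀ (by positivity) (by linarith) 3
    have h3 : exp (y / 3 - 1) ^ 3 = exp y * (exp 1 ^ 3)⁻¹ := by
      rw [← Real.exp_nat_mul, ← Real.exp_nat_mul, ← Real.exp_neg, ← Real.exp_add]; congr 1; push_cast; ring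
    have h4 : (18:ℝ) ≤ exp 1 ^ 3 := by
      have := Real.exp_one_gt_d9
      have h5 : (2.7:ℝ) ^ 3 ≤ exp 1 ^ 3 := pow_le_pow_left₀ (by norm_num) (by linarith) 3
      norm_num at h5 ⊢; linarith
    have h5 : (exp 1 ^ 3)⁻¹ ≤ 1 / 18 := by rw [one_div]; exact inv_anti₀ (by norm_num) h4
    have h6 : y ^ 3 ≤ 3/2 * exp y := by
      have := mul_le_mul_of_nonneg_left h5 (exp_pos y).le
      rw [h3] at h2
      nlinarith
    rw [Real.exp_neg]
    have := exp_pos y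
    rw [← div_eq_mul_inv, mul_one_div, div_le_div_iff₀ this hy]
    nlinarith
  · have h1 := Real.add_one_le_exp y
    have h2 : y * exp (-y) ≤ 1 := by
      rw [Real.exp_neg, ← div_eq_mul_inv, div_le_one (exp_pos y)]; linarith
    nlinarith

lemma nv (i : ℕ) : p.n * p.mdl.v i = exp (p.δ * ((p.z0:ℝ) - i)) := by
  have e : p.mdl.v i = exp (p.δ * p.z0) / p.n * exp (-p.δ * i) := rfl
  have := p.n_pos
  rw [e, show p.δ * ((p.z0:ℝ) - i) = p.δ * p.z0 + -p.δ * i by ring, Real.exp_add]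
  field_simp

lemma ymi (i : ℕ) : (p.n * p.mdl.v i) ^ 2 * exp (-(p.n * p.mdl.v i)) ≤ 3/2 * exp (-p.δ * p.mi i) := by
  have hy : 0 < p.n * p.mdl.v i := mul_pos p.n_pos (p.mdl.v_pos i)
  have h := ysq _ hy
  have hδ := p.hδ
  unfold mi
  split_ifs with hi
  · refine h.1.trans ?_
    rw [nv, one_div, ← Real.exp_neg]
    refine mul_le_mul_of_nonneg_left (Real.exp_le_exp.2 ?_) (by norm_num)
    rw [Nat.sub_sub, Nat.cast_sub (by omega)]
    push_cast; nlinarith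
  · refine h.2.trans ?_
    rw [nv, Nat.cast_sub (by omega)]
    refine mul_le_mul_of_nonneg_left (Real.exp_le_exp.2 ?_) (by norm_num)
    nlinarith

lemma term_le (hv : p.v0 ≤ 1/2) (hs : p.δ * (p.α + 2 * (p.n * p.v0)) ≤ 1) (i : ℕ) :
    p.aa i * (exp (p.lr i) - 1) ^ 2 ≤ 8 * p.δ ^ 2 * p.α ^ 2 * p.q i
      + 48 * p.δ ^ 2 * (p.I * (p.α * p.δ)) * exp (-p.δ * p.mi i) := by
  have h1 := p.lr_abs hv i
  have hy : 0 < p.n * p.mdl.v i := mul_pos p.n_pos (p.mdl.v_pos i)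
  set y := p.n * p.mdl.v i with hyd
  have hy0 : y ≤ p.n * p.v0 := mul_le_mul_of_nonneg_left (p.mdl.v_le i) p.n_pos.le
  have hδ := p.hδ
  have h2 : |p.lr i| ≤ 1 := h1.trans (le_trans (by gcongr) hs)
  have h3 := Real.abs_exp_sub_one_le h2
  have h4 : (exp (p.lr i) - 1) ^ 2 ≤ (2 * (p.δ * (p.α + 2 * y))) ^ 2 := by
    rw [← sq_abs]
    exact pow_le_pow_left₀ (abs_nonneg _) (h3.trans (by linarith)) 2
  have h5 : (2 * (p.δ * (p.α + 2 * y))) ^ 2 ≤ 8 * p.δ ^ 2 * p.α ^ 2 + 32 * p.δ ^ 2 * y ^ 2 := by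
    have : 0 ≤ p.δ ^ 2 * (p.α - 2 * y) ^ 2 := by positivity
    nlinarith
  have h6 := p.aa_le hv i
  have h7 := p.ymi i
  rw [← hyd] at h6 h7
  have hq := p.q_pos i
  have hE : exp (-y) ≤ 1 := Real.exp_le_one_iff.2 (by linarith)
  have hEp := exp_pos (-y)
  calc p.aa i * (exp (p.lr i) - 1) ^ 2 ≤ (p.q i * exp (-y)) * (8 * p.δ ^ 2 * p.α ^ 2 + 32 * p.δ ^ 2 * y ^ 2) := by
        refine mul_le_mul h6 (h4.trans h5) (sq_nonneg _) (by positivity)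
    _ = 8 * p.δ ^ 2 * p.α ^ 2 * (p.q i * exp (-y)) + 32 * p.δ ^ 2 * (p.q i * (y ^ 2 * exp (-y))) := by ring
    _ ≤ 8 * p.δ ^ 2 * p.α ^ 2 * (p.q i * 1) + 32 * p.δ ^ 2 * ((p.I * (p.α * p.δ)) * (3/2 * exp (-p.δ * p.mi i))) := by
        have := p.q_le i
        have h8 : 0 ≤ y ^ 2 * exp (-y) := by positivity
        have := p.I_pos
        have := p.ad_pos
        gcongr
    _ = _ := by ring

lemma aM_le (hv : p.v0 ≤ 1/2) (hd : exp p.δ ≤ 3/2) : p.aa p.M ≤ 3/2 * (p.α * p.δ) := by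
  have hI := p.I_pos
  have had := p.ad_pos
  have h1 := p.aa_le hv p.M
  have hy : 0 < p.n * p.mdl.v p.M := mul_pos p.n_pos (p.mdl.v_pos _)
  have h2 : exp (-(p.n * p.mdl.v p.M)) ≤ 1 := Real.exp_le_one_iff.2 (by linarith)
  have h3 : p.aa p.M ≤ p.q p.M := h1.trans (by nlinarith [p.q_pos p.M])
  refine h3.trans ?_
  unfold q mi
  rw [if_neg (by have := p.hzM; omega), Nat.cast_sub p.hzM]
  have e : exp (-(p.α * p.δ) * ((p.M:ℝ) - p.z0)) ≤ 1 / p.I * (3/2) := by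
    have e1 : exp (-(p.α * p.δ) * ((p.M:ℝ) - p.z0)) ≤ exp (-(p.α * Real.log p.n)) * exp p.δ := by
      rw [← Real.exp_add]
      apply Real.exp_le_exp.2
      have := mul_le_mul_of_nonneg_left p.hM p.hα0.le
      have h4 : p.α * p.δ ≤ p.δ := by nlinarith [p.hα1, p.hδ]
      nlinarith
    have e2 : exp (-(p.α * Real.log p.n)) = 1 / p.I := by
      unfold I
      rw [Real.rpow_def_of_pos p.n_pos, Real.exp_neg, one_div]; ring_nf
    rw [e2] at e1
    refine e1.trans ?_
    gcongr
  have h5 := Real.add_one_le_exp (-(p.α * p.δ))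
  calc _ ≤ p.I * (p.α * p.δ) * (1 / p.I * (3/2)) := by
        have := p.em_pos
        gcongr; linarith
    _ = _ := by field_simp

theorem kappa (hv : p.v0 ≤ 1/2) (hd : exp p.δ ≤ 3/2) (hs : p.δ * (p.α + 2 * (p.n * p.v0)) ≤ 1) :
    -(p.mdl.N * ∑ i ∈ Finset.range (p.mdl.M + 1), p.mdl.w i * p.mdl.phi p.n i)
      ≤ 3/2 * (p.α * p.δ) + 16 * p.α ^ 2 * (p.δ ^ 2 * p.I) + 96 * p.α * (p.δ ^ 2 * p.I) * (1 + p.δ) := by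
  have hM : p.mdl.M = p.M := rfl
  have hw : ∀ i, p.mdl.w i = p.q i / p.R := fun i => rfl
  set B := 3/2 * (p.α * p.δ) + 16 * p.α ^ 2 * (p.δ ^ 2 * p.I) + 96 * p.α * (p.δ ^ 2 * p.I) * (1 + p.δ) with hB
  have hI := p.I_pos
  have hδ := p.hδ
  have ha := p.hα0
  have hB0 : 0 ≤ B := by positivity
  have key : -B ≤ ∑ i ∈ Finset.range (p.M + 1), p.q i * p.mdl.phi p.n i := by
    rw [Finset.sum_range_succ']
    have h0 : p.mdl.phi p.n 0 = 0 := by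
      unfold Mdl.phi Mdl.vv
      have : p.mdl.lam 0 = 0 := p.mdl.hlam0
      rw [this]; simp
    rw [h0, mul_zero, add_zero]
    have h1 : ∑ i ∈ Finset.range p.M, (-(p.aa (i + 1) - p.aa i) - p.aa i * (exp (p.lr i) - 1) ^ 2)
        ≤ ∑ i ∈ Finset.range p.M, p.q (i + 1) * p.mdl.phi p.n (i + 1) :=
      Finset.sum_le_sum fun i _ => p.qphi hv i
    refine le_trans ?_ h1
    rw [Finset.sum_sub_distrib, Finset.sum_neg_distrib, Finset.sum_range_sub]
    have h2 : ∑ i ∈ Finset.range p.M, p.aa i * (exp (p.lr i) - 1) ^ 2 ≤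
        8 * p.δ ^ 2 * p.α ^ 2 * (2 * p.I) + 48 * p.δ ^ 2 * (p.I * (p.α * p.δ)) * (2 * (1 + p.δ) / p.δ) := by
      refine (Finset.sum_le_sum fun i _ => p.term_le hv hs i).trans ?_
      rw [Finset.sum_add_distrib, ← Finset.mul_sum, ← Finset.mul_sum]
      have hq : ∑ i ∈ Finset.range p.M, p.q i ≤ 2 * p.I := by
        refine le_trans ?_ p.R_le
        exact Finset.sum_le_sum_of_subset_of_nonneg (Finset.range_subset_range.2 (by omega)) fun i _ _ => (p.q_pos i).le
      have hm := p.sum_mi p.δ p.hδ p.M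
      have := p.ad_pos
      gcongr
    have h3 := p.aM_le hv hd
    have h4 := p.aa_pos hv 0
    have e : 48 * p.δ ^ 2 * (p.I * (p.α * p.δ)) * (2 * (1 + p.δ) / p.δ) = 96 * p.α * (p.δ ^ 2 * p.I) * (1 + p.δ) := by
      field_simp; ring
    rw [e] at h2
    rw [hB]
    linarith
  have hN : (p.mdl.N : ℝ) ≤ p.R := Nat.floor_le p.R_pos.le
  have e : (p.mdl.N : ℝ) * ∑ i ∈ Finset.range (p.mdl.M + 1), p.mdl.w i * p.mdl.phi p.n i
      = (p.mdl.N / p.R) * ∑ i ∈ Finset.range (p.M + 1), p.q i * p.mdl.phi p.n i := by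
    rw [hM, Finset.mul_sum, Finset.mul_sum]
    refine Finset.sum_congr rfl fun i _ => ?_
    rw [hw]; ring
  rw [e]
  have h1 : (p.mdl.N : ℝ) / p.R ≤ 1 := (div_le_one p.R_pos).2 hN
  have h0 : 0 ≤ (p.mdl.N : ℝ) / p.R := div_nonneg (by positivity) p.R_pos.le
  nlinarith [mul_le_mul_of_nonneg_left key h0]
end Par

lemma exists_k0 (α η : ℝ) (h0 : 0 < α) (h1 : α < 1) (hη : 0 < η) :
    ∃ k : ℕ, 1 ≤ k ∧ α / (1 - α) * (k:ℝ) ^ (1 - 1 / α) ≤ η := by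
  have hb : 0 < 1 / α - 1 := by rw [sub_pos, lt_div_iff₀ h0]; linarith
  have ht : Tendsto (fun k : ℕ => α / (1 - α) * (k:ℝ) ^ (-(1 / α - 1))) atTop (nhds (α / (1 - α) * 0)) :=
    ((tendsto_rpow_neg_atTop hb).comp tendsto_natCast_atTop_atTop).const_mul _
  rw [mul_zero] at ht
  obtain ⟨k, hk1, hk2⟩ := ((ht.eventually (gt_mem_nhds hη)).and (eventually_ge_atTop 1)).exists
  refine ⟨k, hk2, ?_⟩
  rw [show 1 - 1 / α = -(1 / α - 1) by ring]; exact hk1.le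

lemma lt_rp' (α x y : ℝ) (h0 : 0 < α) (hx : 0 < x) (hy : 0 < y) : x < y ^ (-1 / α) ↔ y < x ^ (-α) := by
  have hneg : -1 / α < 0 := by
    rw [neg_div]; have : 0 < 1 / α := by positivity
    linarith
  have e : (x ^ (-α)) ^ (-1 / α) = x := by
    rw [← Real.rpow_mul hx.le]
    have : -α * (-1 / α) = 1 := by field_simp
    rw [this, Real.rpow_one]
  conv_lhs => rw [← e]
  exact Real.rpow_lt_rpow_iff_of_neg (Real.rpow_pos_of_pos hx _) hy hneg

/-- Model for small sample sizes. -/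
def smallM (α : ℝ) (h0 : 0 < α) (h1 : α < 1) (J : ℕ) (hJ1 : 1 ≤ J)
    (hJ : α / (1 - α) * (J:ℝ) ^ (1 - 1 / α) ≤ 1 / 8) : Mdl where
  N := 0
  M := 0
  S := 0
  δ := Real.log 2
  v0 := 1
  c := fun k => ((J:ℝ) + (k + 1) * 1) ^ (-1 / α)
  w := fun _ => 1
  lam := fun _ => 0
  hδ := Real.log_pos (by norm_num)
  hv0 := one_pos
  hc := fun k => Real.rpow_pos_of_pos (by positivity) _
  hcs := tele_summable α J 1 h0 h1 (by positivity) one_pos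
  hw := fun _ => one_pos
  hw1 := by simp
  hlam := fun i hi => by omega
  hlam0 := rfl
  hhalf := by
    rw [Real.exp_log (by norm_num)]
    have := Real.tsum_le_of_sum_range_le (fun k : ℕ => Real.rpow_nonneg (show (0:ℝ) ≤ (J:ℝ) + (k + 1) * 1 by positivity) (-1 / α))
      (tele_sum α J 1 h0 h1 (by positivity) one_pos)
    simp only [Nat.cast_zero, zero_mul, zero_add]
    linarith

theorem small_case (α β : ℝ) (h0 : 0 < α) (h1 : α < 1) (hβ : 0 < β) (hβα : β < α) (n0 : ℕ) :
    ∃ C1 : ℝ, ∀ n : ℕ, 1 ≤ n → n ≤ n0 → ∀ C : ℝ, C ≤ 1 → ∀ C' : ℝ, C1 ≤ C' → ∀ r : ℕ, 1 ≤ r →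
      ∀ (est : (Fin n → ℕ) → ℝ) (h : ℝ → ℝ) (ε : ℝ), 0 < ε → ε < 1 / 3 →
      ∃ (P : PMF ℕ) (L : ℝ), 1 ≤ L ∧ inSigmaClass α β C C' P L ∧
        1 / 4 ≤ (sampleMeasure P n).real {ω | ¬ mloss h (est ω) (missingMass (pReal P) r ω) ≤ ε} := by
  obtain ⟨J, hJ1, hJ⟩ := exists_k0 α (1 / (8 * ((n0:ℝ) + 1))) h0 h1 (by positivity)
  have hJ8 : α / (1 - α) * (J:ℝ) ^ (1 - 1 / α) ≤ 1 / 8 := by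
    refine hJ.trans ?_
    apply one_div_le_one_div_of_le (by norm_num)
    have : (0:ℝ) ≤ n0 := by positivity
    linarith
  set m := smallM α h0 h1 J hJ1 hJ8 with hm
  refine ⟨(J:ℝ) + 3, ?_⟩
  intro n hn hnn C hC C' hC' r hr est h ε hε hε'
  have hmδ : exp m.δ = 2 := by change exp (Real.log 2) = 2; exact Real.exp_log (by norm_num)
  have hmc : ∀ k, m.c k = ((J:ℝ) + (k + 1) * 1) ^ (-1 / α) := fun k => rfl
  have hmN : m.N = 0 := rfl
  have hmS : m.S = 0 := rfl
  have hbp : ∀ s, 0 < m.b s := fun s => by have := m.b_ge s; linarith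
  have hcls : ∀ s z, inSigmaClass α β C C' (m.P s z) (m.b s ^ α) := by
    intro s z
    refine class_of_bound α β C C' hβ _ _ ((J:ℝ) + 3) (Real.one_le_rpow (m.b_ge s) h0.le) hC hC' ?_
    intro x hx
    have hx0 := hx.1
    have h2 := m.tailF_eq s z x hx0
    have hrc : m.rc z x = 0 := by
      have : m.rc z x ≤ m.N := by
        unfold Mdl.rc
        refine (Finset.card_le_univ _).trans ?_
        simp
      omega
    have h3 := cnt_nat {k | x < m.cc s k} (m.b s ^ α * x ^ (-α) - J - 1) (by
      intro k
      simp only [Set.mem_ofPred_eq]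
      have hcc : m.cc s k = m.b s * m.c k := by unfold Mdl.cc; rw [if_neg (by omega)]
      have hb := hbp s
      rw [hcc, hmc, mul_comm, ← div_lt_iff₀ hb, lt_rp' α _ _ h0 (by positivity) (by positivity),
        Real.div_rpow hx0.le hb.le, Real.rpow_neg hb.le, div_inv_eq_mul, mul_comm (x ^ (-α))]
      constructor <;> intro h <;> linarith)
    have hbx : 0 < m.b s ^ α * x ^ (-α) := mul_pos (Real.rpow_pos_of_pos (hbp s) _) (Real.rpow_pos_of_pos hx0 _)
    have hJ0 : (0:ℝ) ≤ J := by positivity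
    have h4 : |(tailF (m.P s z) x : ℝ) - m.b s ^ α * x ^ (-α)| ≤ J + 3 := by
      rw [hrc] at h2
      push_cast at h2
      rw [abs_le] at *
      rcases h2 with ⟨_, _⟩
      rcases le_total (m.b s ^ α * x ^ (-α) - J - 1) 0 with h5 | h5
      · rw [max_eq_right h5] at h3; constructor <;> linarith
      · rw [max_eq_left h5] at h3; constructor <;> linarith
    refine h4.trans (le_mul_of_one_le_right (by positivity) ?_)
    exact Real.one_le_rpow_of_pos_of_le_one_of_nonpos hx0 hx.2.le (by linarith)
  have hz : ∀ z z' : m.Z, z = z' := by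
    intro z z'
    funext j
    exact absurd j.2 (by omega)
  let z : m.Z := fun _ => 0
  let ω : Fin n → ℕ := fun _ => (enc m.N).symm none
  have hpr : ∀ s, 1 / 4 ≤ (sampleMeasure (m.P s z) n).real {ω} := by
    intro s
    rw [sample_singleton]
    have hω : ∀ i, pReal (m.P s z) (ω i) = m.pm s z none := by
      intro i; rw [m.pReal_P]; simp [ω]
    simp only [hω, Finset.prod_const, Finset.card_univ, Fintype.card_fin]
    have hc := m.cc_tsum_le s
    have hc2 : ∑' k, m.c k ≤ 1 / (8 * ((n0:ℝ) + 1)) := by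
      refine le_trans ?_ hJ
      have := Real.tsum_le_of_sum_range_le (fun k : ℕ => Real.rpow_nonneg (show (0:ℝ) ≤ (J:ℝ) + (k + 1) * 1 by positivity) (-1 / α))
        (tele_sum α J 1 h0 h1 (by positivity) one_pos)
      simp only [hmc]
      linarith
    have hsv : ∑ j, m.v (z j) = 0 := by
      apply Finset.sum_eq_zero; intro j _; exact absurd j.2 (by omega)
    have hpm : 1 - 1 / (4 * ((n0:ℝ) + 1)) ≤ m.pm s z none := by
      simp only [Mdl.pm, hsv]
      rw [hmδ] at hc
      have : 1 / (4 * ((n0:ℝ) + 1)) = 2 * (1 / (8 * ((n0:ℝ) + 1))) := by field_simp; norm_num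
      linarith
    have hb := one_add_mul_le_pow (a := m.pm s z none - 1) (by linarith [m.pm_none_ge s z]) n
    rw [add_sub_cancel] at hb
    refine le_trans ?_ hb
    have hn' : (n:ℝ) ≤ n0 := by exact_mod_cast hnn
    have hn1 : (0:ℝ) ≤ n := by positivity
    have h5 : (n:ℝ) * (1 / (4 * ((n0:ℝ) + 1))) ≤ 1 / 4 := by
      rw [mul_one_div, div_le_div_iff₀ (by positivity) (by norm_num)]; linarith
    nlinarith
  have hE : m.E z ω := by
    refine ⟨?_, ?_, ?_⟩
    · intro hu
      exact hu ⟨0, hn⟩ (by simp [ω])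
    · intro k hk; omega
    · intro j; exact absurd j.2 (by omega)
  have hsc := m.missing_scale z ω hE r
  rw [hz (m.T ω z) z, hmδ] at hsc
  by_cases hA : mloss h (est ω) (missingMass (pReal (m.P false z)) r ω) ≤ ε
  · have hB := loss_sep h (est ω) _ _ ε (2 ^ r) (m.missing_pos false z r hr ω) hε hε' (by
      have : (2:ℝ) ^ 1 ≤ 2 ^ r := pow_le_pow_right₀ (by norm_num) hr
      linarith) hsc hA
    refine ⟨m.P true z, m.b true ^ α, Real.one_le_rpow (m.b_ge _) h0.le, hcls true z, (hpr true).trans ?_⟩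
    exact measureReal_mono (Set.singleton_subset_iff.2 hB)
  · refine ⟨m.P false z, m.b false ^ α, Real.one_le_rpow (m.b_ge _) h0.le, hcls false z, (hpr false).trans ?_⟩
    exact measureReal_mono (Set.singleton_subset_iff.2 hA)

namespace Par
variable (p : Par)

set_option maxHeartbeats 1000000 in
theorem large_core (β C C' C1 t lm : ℝ) (hβ : 0 < β) (hC : C ≤ 1) (hC' : C1 ≤ C')
    (hv : p.v0 ≤ 1/2) (hd : exp p.δ ≤ 3/2) (hs : p.δ * (p.α + 2 * (p.n * p.v0)) ≤ 1)
    (had : p.α * p.δ ≤ 1)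
    (hhi : ∀ x, p.v0 ≤ x → x < 1 → p.k0 + 5 + 2 * (p.α * p.δ) * x ^ (-p.α) ≤ C1 * x ^ (β - p.α))
    (hlo : ∀ x, 0 < x → x < p.v0 → p.k0 + 6 + t + 2 * (p.I * (p.α * p.δ)) ≤ C1 * x ^ (β - p.α))
    (hl0 : 0 ≤ lm) (hl1 : lm ≤ 1)
    (hnum : 4 * ((3/2 * (p.α * p.δ) + 16 * p.α ^ 2 * (p.δ ^ 2 * p.I)
          + 96 * p.α * (p.δ ^ 2 * p.I) * (1 + p.δ)) + p.δ ^ 2 * p.I * (p.α / (1 - p.α))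
          + p.n * (4 * p.δ * (1 / p.n * (p.I * (p.α / (1 - p.α))) + 2 * p.I * p.v0)) ^ 2)
        + (5 + 4 * (2 * p.I * (p.α * p.δ) + p.n * p.δ)) * ((1 + (p.I + p.k0 + 1) + 2 * p.I) * exp (-(p.n * p.v0)))
        + 2 * ((p.M + 1) * (2 * exp (2 * p.I * lm ^ 2 - lm * t))) < 1 / 4)
    (est : (Fin p.n → ℕ) → ℝ) (h : ℝ → ℝ) (r : ℕ) (hr : 1 ≤ r) (ε : ℝ) (hε : 0 < ε) (hε' : ε < 1/3)
    (hεδ : 3 * ε ≤ p.δ * r) :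
    ∃ (P : PMF ℕ) (L : ℝ), 1 ≤ L ∧ inSigmaClass p.α β C C' P L ∧
        1 / 4 ≤ (sampleMeasure P p.n).real {ω | ¬ mloss h (est ω) (missingMass (pReal P) r ω) ≤ ε} := by
  classical
  by_contra hcon
  push Not at hcon
  have hn := p.n_pos
  have hI := p.I_pos
  have hα := p.hα0
  have hα1 : 0 < 1 - p.α := by linarith [p.hα1]
  have hδ := p.hδ
  have hv0 := p.v0_pos
  have hL : ∀ s, 1 ≤ p.mdl.b s ^ p.α := fun s => Real.one_le_rpow (p.mdl.b_ge s) hα.le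
  have hcl : ∀ s z, p.mdl.Gd t z → inSigmaClass p.α β C C' (p.mdl.P s z) (p.mdl.b s ^ p.α) := by
    intro s z hz
    refine class_of_bound p.α β C C' hβ _ _ C1 (hL s) hC hC' ?_
    intro x hx
    rcases lt_or_ge x p.v0 with hxv | hxv
    · exact (p.class_lo s z t hz x hx.1 hxv).trans (hlo x hx.1 hxv)
    · exact (p.class_hi s z x hx.1 hxv had).trans (hhi x hxv hx.2)
  have hmain := p.mdl.main_ineq p.n hd hv (fun k hk => p.static_ge k hk) (p.α * p.δ) (fun i => p.lam_abs i)
    est h r hr ε hε hε' hεδ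
  have hk := p.kappa hv hd hs
  have hmD := p.mD_bound
  have hmD0 : 0 ≤ p.mdl.mD := p.mdl.mD_nonneg
  have hN : (p.mdl.N:ℝ) ≤ 2 * p.I := p.N_le
  have hmd : p.mdl.δ = p.δ := rfl
  have hmv : p.mdl.v0 = p.v0 := rfl
  have hmM : p.mdl.M = p.M := rfl
  have hSI : (p.mdl.S:ℝ) ≤ p.I + p.k0 + 1 := by
    have h1 := (abs_le.1 p.S_approx).2
    have h2 : p.v0 ^ (-p.α) ≤ p.I := by
      rw [p.v0_rpow]
      refine mul_le_of_le_one_right hI.le (Real.exp_le_one_iff.2 ?_)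
      have := mul_nonneg p.ad_pos.le (Nat.cast_nonneg (α := ℝ) p.z0); linarith
    change (p.S:ℝ) ≤ _
    linarith
  have hbad := p.mdl.Gd_bad t lm hl0 hl1
  have key : ∀ s, ∑ z, p.mdl.W z * (sampleMeasure (p.mdl.P s z) p.n).real
      {ω | ¬ mloss h (est ω) (missingMass (pReal (p.mdl.P s z)) r ω) ≤ ε}
      ≤ 1/4 + (p.M + 1) * (2 * exp (2 * p.I * lm ^ 2 - lm * t)) := by
    intro s
    refine mixture_sup p.mdl.W (fun z => (p.mdl.W_pos z).le) p.mdl.W_sum (p.mdl.Gd t) _ (hbad.trans ?_) _ ?_ _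
      (by norm_num) ?_
    · rw [hmM]; gcongr
    · intro z
      have : IsProbabilityMeasure (sampleMeasure (p.mdl.P s z) p.n) := by unfold sampleMeasure; infer_instance
      exact measureReal_le_one
    · intro z hz
      simp only [not_le]
      exact (hcon _ _ (hL s) (hcl s z hz)).le
  have k0 := key false
  have k1 := key true
  have hd1 : p.δ ≤ 1/2 := by linarith [Real.add_one_le_exp p.δ]
  have he := (abs_le.1 (Real.abs_exp_sub_one_sub_id_le (x := p.δ) (by rw [abs_of_pos hδ]; linarith))).2
  have he0 := Real.add_one_le_exp p.δ
  have t1 : p.n * (exp p.δ - 1 - p.δ) * p.mdl.mD ≤ p.δ ^ 2 * p.I * (p.α / (1 - p.α)) := by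
    calc p.n * (exp p.δ - 1 - p.δ) * p.mdl.mD ≤ p.n * (p.δ ^ 2) * (1 / p.n * (p.I * (p.α / (1 - p.α)))) := by
          gcongr
      _ = _ := by field_simp
  have hyb : p.mdl.ybar ≤ 4 * p.δ * (1 / p.n * (p.I * (p.α / (1 - p.α))) + 2 * p.I * p.v0) := by
    unfold Mdl.ybar
    rw [hmd, hmv]
    have : 2 * (exp p.δ - 1) ≤ 4 * p.δ := by nlinarith
    gcongr
  have hyb0 : 0 ≤ p.mdl.ybar := by
    unfold Mdl.ybar
    rw [hmd, hmv]
    have : 0 ≤ exp p.δ - 1 := by linarith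
    positivity
  have t2 : p.n * p.mdl.ybar ^ 2 ≤ p.n * (4 * p.δ * (1 / p.n * (p.I * (p.α / (1 - p.α))) + 2 * p.I * p.v0)) ^ 2 := by
    exact mul_le_mul_of_nonneg_left (pow_le_pow_left₀ hyb0 hyb 2) hn.le
  have t3 : (5 + 4 * (p.mdl.N * (p.α * p.δ) + p.n * p.mdl.δ)) * ((1 + p.mdl.S + p.mdl.N) * exp (-(p.n * p.mdl.v0)))
     ≤ (5 + 4 * (2 * p.I * (p.α * p.δ) + p.n * p.δ)) * ((1 + (p.I + p.k0 + 1) + 2 * p.I) * exp (-(p.n * p.v0))) := by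
    rw [hmd, hmv]
    gcongr
  rw [hmd] at hmain t3
  linarith

end Par

lemma ev_rpow (a e : ℝ) (ha : a < 0) (he : 0 < e) : ∀ᶠ n : ℕ in atTop, (n:ℝ) ^ a ≤ e := by
  have h := (tendsto_rpow_neg_atTop (show 0 < -a by linarith)).comp (tendsto_natCast_atTop_atTop (R := ℝ))
  rw [neg_neg] at h
  exact (h.eventually (ge_mem_nhds he)).mono fun n hn => hn

lemma ev_exp (b e : ℝ) (hb : 0 < b) (he : 0 < e) : ∀ᶠ n : ℕ in atTop, (n:ℝ) ^ 2 * exp (-(n:ℝ) ^ b) ≤ e := by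
  have h := ((tendsto_rpow_mul_exp_neg_mul_atTop_nhds_zero (2 / b) 1 one_pos).comp
    (tendsto_rpow_atTop hb)).comp (tendsto_natCast_atTop_atTop (R := ℝ))
  refine (h.eventually (ge_mem_nhds he)).mono fun n hn => ?_
  simp only [Function.comp] at hn
  rw [← Real.rpow_mul (Nat.cast_nonneg n), mul_div_cancel₀ _ hb.ne'] at hn
  simpa using hn

set_option maxHeartbeats 4000000 in
theorem large_case (α β : ℝ) (h0 : 0 < α) (h1 : α < 1) (hβ : 0 < β) (hβα : β < α / 2) :
    ∃ (C1 : ℝ) (n0 : ℕ), ∀ n : ℕ, n0 ≤ n → ∀ C : ℝ, C ≤ 1 → ∀ C' : ℝ, C1 ≤ C' → ∀ r : ℕ, 1 ≤ r →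
      ∀ (est : (Fin n → ℕ) → ℝ) (h : ℝ → ℝ) (ε : ℝ), 0 < ε → ε < 1 / 3 →
      3 * ε ≤ √((1 - α) / α) / 64 * (n:ℝ) ^ (-(α / 2)) * r →
      ∃ (P : PMF ℕ) (L : ℝ), 1 ≤ L ∧ inSigmaClass α β C C' P L ∧
        1 / 4 ≤ (sampleMeasure P n).real {ω | ¬ mloss h (est ω) (missingMass (pReal P) r ω) ≤ ε} := by
  have ha1 : 0 < 1 - α := by linarith
  obtain ⟨k0, hk0, hk0'⟩ := exists_k0 α (1 / 8) h0 h1 (by norm_num)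
  set D := √((1 - α) / α) / 64 with hDdef
  have hD : 0 < D := by
    have : 0 < √((1 - α) / α) := Real.sqrt_pos.2 (by positivity)
    positivity
  have hD2 : α * D ^ 2 = (1 - α) / 4096 := by
    rw [hDdef, div_pow, Real.sq_sqrt (by positivity)]
    field_simp
    norm_num
  set A := α / (1 - α) with hA
  have hA0 : 0 < A := by positivity
  set η := (α / 2 - β) / 2 with hη
  have hη0 : 0 < η := by rw [hη]; linarith
  obtain ⟨ζ, hζ0, hζ1, hζ2⟩ : ∃ ζ : ℝ, 0 < ζ ∧ ζ ≤ η ∧ ζ ≤ (1 - α) / 4 :=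
    ⟨min η ((1 - α) / 4), lt_min hη0 (by linarith), min_le_left _ _, min_le_right _ _⟩
  set K1 := (5 + 12 * D) * (5 + k0) with hK1
  set K2 := (2 / D + 3) * (4 * exp 2) with hK2
  have hK1p : 0 < K1 := by positivity
  have hK2p : 0 < K2 := by positivity
  have hev := (ev_rpow (-(α / 2)) (1 / (1000 * D)) (by linarith) (by positivity)).and
    ((ev_rpow (α + ζ - 1) (1 / (32 * (1 + A))) (by linarith) (by positivity)).and
    ((ev_rpow ((α - 1) / 2 + ζ) (1 / (400 * (D * (A + 3)))) (by linarith) (by positivity)).and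
    ((ev_rpow (ζ - α / 2) (1 / (12 * D)) (by linarith) (by positivity)).and
    ((ev_exp ζ (1 / (100 * K1)) hζ0 (by positivity)).and
    ((ev_exp η (1 / (100 * K2)) hη0 (by positivity)).and (eventually_ge_atTop 2))))))
  obtain ⟨n0, hn0⟩ := eventually_atTop.1 hev
  refine ⟨3 / 2 * (k0 + 7 + 2 * (α * D)), n0, ?_⟩
  intro n hn C hC C' hC' r hr est h ε hε hε' hεδ
  obtain ⟨e1, e2, e3, e4, e5, e6, e7⟩ := hn0 n hn
  rw [le_div_iff₀ (by positivity)] at e1 e2 e3 e4 e5 e6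
  have e7' : (2:ℝ) ≤ n := by exact_mod_cast e7
  set x : ℝ := (n:ℝ) with hx
  have hx0 : 0 < x := by linarith
  have hx1 : 1 ≤ x := by linarith
  set δ := D * x ^ (-(α / 2)) with hδdef
  have hu1 : 0 < x ^ (-(α / 2)) := Real.rpow_pos_of_pos hx0 _
  have hδ : 0 < δ := by positivity
  have hδs : δ ≤ 1 / 1000 := by rw [hδdef]; linarith
  have hexp : exp δ ≤ 3 / 2 := by
    have he := (abs_le.1 (Real.abs_exp_sub_one_sub_id_le (x := δ) (by rw [abs_of_pos hδ]; linarith))).2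
    nlinarith
  have hlog : 0 < Real.log x := Real.log_pos (by linarith)
  have hlogx : Real.log x ≤ x := (Real.log_le_sub_one_of_pos hx0).trans (by linarith)
  set z0 := ⌈ζ * Real.log x / δ⌉₊ with hz0
  set J := ⌈Real.log x / δ⌉₊ with hJ
  have hz01 : 1 ≤ z0 := Nat.ceil_pos.2 (by positivity)
  have hz0a : ζ * Real.log x ≤ δ * z0 := by
    have := Nat.le_ceil (ζ * Real.log x / δ)
    rw [div_le_iff₀ hδ] at this; linarith
  have hz0b : δ * z0 ≤ ζ * Real.log x + δ := by
    have := (Nat.ceil_lt_add_one (show 0 ≤ ζ * Real.log x / δ by positivity)).le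
    have h2 := mul_le_mul_of_nonneg_left this hδ.le
    rw [mul_add, mul_div_cancel₀ _ hδ.ne'] at h2; linarith
  have hJa : Real.log x ≤ δ * J := by
    have := Nat.le_ceil (Real.log x / δ)
    rw [div_le_iff₀ hδ] at this; linarith
  have hJb : δ * J ≤ Real.log x + δ := by
    have := (Nat.ceil_lt_add_one (show 0 ≤ Real.log x / δ by positivity)).le
    have h2 := mul_le_mul_of_nonneg_left this hδ.le
    rw [mul_add, mul_div_cancel₀ _ hδ.ne'] at h2; linarith
  have hxζ : exp (ζ * Real.log x) = x ^ ζ := by rw [Real.rpow_def_of_pos hx0, mul_comm]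
  have hEa : x ^ ζ ≤ exp (δ * z0) := by rw [← hxζ]; exact Real.exp_le_exp.2 hz0a
  have hxζp : 0 < x ^ ζ := Real.rpow_pos_of_pos hx0 _
  have hEb : exp (δ * z0) ≤ 3 / 2 * x ^ ζ := by
    calc exp (δ * z0) ≤ exp (ζ * Real.log x + δ) := Real.exp_le_exp.2 hz0b
      _ = x ^ ζ * exp δ := by rw [Real.exp_add, hxζ]
      _ ≤ x ^ ζ * (3 / 2) := by gcongr
      _ = _ := by ring
  have hxα : 0 < x ^ α := Real.rpow_pos_of_pos hx0 _
  have hxz : x ^ α * (x ^ ζ / x) = x ^ (α + ζ - 1) := by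
    rw [Real.rpow_sub hx0, Real.rpow_add hx0, Real.rpow_one]; ring
  have hu2 : 0 < x ^ (α + ζ - 1) := Real.rpow_pos_of_pos hx0 _
  have hmid : 1 / x * (x ^ α * A) ≤ x ^ (α + ζ - 1) * A := by
    have : 1 / x * x ^ α = x ^ (α - 1) := by rw [Real.rpow_sub hx0, Real.rpow_one]; ring
    rw [← mul_assoc, this]
    exact mul_le_mul_of_nonneg_right (Real.rpow_le_rpow_of_exponent_le hx1 (by linarith)) hA0.le
  have huA := mul_pos hu2 hA0
  have hu2A : x ^ (α + ζ - 1) * A ≤ 1 / 32 := by linarith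
  have hu2' : x ^ (α + ζ - 1) ≤ 1 / 32 := by linarith
  have hIv : x ^ α * (exp (δ * z0) / x) ≤ 3 / 2 * x ^ (α + ζ - 1) := by
    calc x ^ α * (exp (δ * z0) / x) ≤ x ^ α * ((3 / 2 * x ^ ζ) / x) := by gcongr
      _ = 3 / 2 * (x ^ α * (x ^ ζ / x)) := by ring
      _ = _ := by rw [hxz]
  let p : Par :=
    { α := α, δ := δ, n := n, z0 := z0, M := z0 + J, k0 := k0, hα0 := h0, hα1 := h1, hδ := hδ,
      hn := by omega
      hz := hz01
      hzM := by omega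
      hM := by push_cast; rw [← hx]; linarith
      hk := hk0
      hH := by
        rw [← hx, ← hA]
        have hp : 0 ≤ A * (k0:ℝ) ^ (1 - 1 / α) + 1 / x * (x ^ α * A) := by positivity
        have hp' : A * (k0:ℝ) ^ (1 - 1 / α) + 1 / x * (x ^ α * A) ≤ 1 / 8 + 1 / 32 := by linarith
        have := mul_le_mul hexp hp' hp (by norm_num)
        have e : 2 * x ^ α * (exp (δ * z0) / x) = 2 * (x ^ α * (exp (δ * z0) / x)) := by ring
        rw [e]
        linarith }
  have pα : p.α = α := rfl
  have pδ : p.δ = δ := rfl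
  have pn : (p.n : ℝ) = x := rfl
  have pk : (p.k0 : ℝ) = k0 := rfl
  have pM : (p.M : ℝ) = z0 + J := by change ((z0 + J : ℕ) : ℝ) = _; push_cast; rfl
  have pI : p.I = x ^ α := rfl
  have pv : p.v0 = exp (δ * z0) / x := rfl
  have hnv : x * (exp (δ * z0) / x) = exp (δ * z0) := by field_simp
  have hone : 1 ≤ x ^ α := Real.one_le_rpow hx1 h0.le
  have hxαx : x ^ α ≤ x := by
    calc x ^ α ≤ x ^ (1:ℝ) := Real.rpow_le_rpow_of_exponent_le hx1 h1.le
      _ = x := Real.rpow_one x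
  have hDI : δ ^ 2 * x ^ α = D ^ 2 := by
    rw [hδdef, mul_pow, mul_assoc, ← Real.rpow_natCast (x ^ (-(α / 2))), ← Real.rpow_mul hx0.le, ← Real.rpow_add hx0]
    have : -(α / 2) * ((2:ℕ):ℝ) + α = 0 := by push_cast; ring
    rw [this, Real.rpow_zero, mul_one]
  have hδD : δ ≤ D := by
    rw [hδdef]
    exact mul_le_of_le_one_right hD.le (Real.rpow_le_one_of_one_le_of_nonpos hx1 (by linarith))
  have hIδ : x ^ α * δ = D * x ^ (α / 2) := by
    rw [hδdef, mul_left_comm, ← Real.rpow_add hx0]; ring_nf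
  refine p.large_core β C C' (3 / 2 * (k0 + 7 + 2 * (α * D))) (x ^ (α / 2 + η)) (x ^ (-(α / 2))) hβ hC hC'
    ?_ hexp ?_ ?_ ?_ ?_ hu1.le (Real.rpow_le_one_of_one_le_of_nonpos hx1 (by linarith)) ?_ est h r hr ε hε hε' hεδ
  · rw [pv]
    have : exp (δ * z0) / x ≤ x ^ α * (exp (δ * z0) / x) := le_mul_of_one_le_left (by positivity) hone
    linarith
  · rw [pδ, pα, pn, pv, hnv]
    have : δ * exp (δ * z0) ≤ 3 / 2 * D * x ^ (ζ - α / 2) := by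
      calc δ * exp (δ * z0) ≤ δ * (3 / 2 * x ^ ζ) := by gcongr
        _ = 3 / 2 * D * (x ^ ζ * x ^ (-(α / 2))) := by rw [hδdef]; ring
        _ = _ := by rw [← Real.rpow_add hx0]; rfl
    have m1 := mul_le_mul h1.le hδs hδ.le (by norm_num)
    linarith
  · rw [pα, pδ]
    have := mul_le_mul h1.le hδs hδ.le (by norm_num)
    linarith
  · rw [pα, pδ, pk, pv]
    intro y hy1 hy2
    have hy0 : 0 < y := lt_of_lt_of_le (by positivity) hy1
    have hya : 1 ≤ y ^ (β - α) := Real.one_le_rpow_of_pos_of_le_one_of_nonpos hy0 hy2.le (by linarith)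
    have hδy : δ ≤ D * y ^ β := by
      rw [hδdef]
      gcongr
      calc x ^ (-(α / 2)) ≤ x ^ (-β) := Real.rpow_le_rpow_of_exponent_le hx1 (by linarith)
        _ = (1 / x) ^ β := by rw [Real.rpow_neg hx0.le, one_div, Real.inv_rpow hx0.le]
        _ ≤ y ^ β := by
          gcongr
          refine le_trans ?_ hy1
          gcongr
          exact Real.one_le_exp (by positivity)
    have h2 : δ * y ^ (-α) ≤ D * y ^ (β - α) := by
      calc δ * y ^ (-α) ≤ D * y ^ β * y ^ (-α) := by gcongr
        _ = _ := by rw [mul_assoc, ← Real.rpow_add hy0]; rfl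
    have h3 : 2 * (α * δ) * y ^ (-α) ≤ 2 * (α * D) * y ^ (β - α) := by
      have := mul_le_mul_of_nonneg_left h2 h0.le
      linarith
    have h4 : 0 ≤ α * D := by positivity
    have h5 : (0:ℝ) ≤ k0 := by positivity
    have h6 : 0 ≤ α * D * y ^ (β - α) := by positivity
    have h7 : (k0:ℝ) * 1 ≤ k0 * y ^ (β - α) := by gcongr
    linarith
  · rw [pα, pδ, pk, pv, pI]
    intro y hy0 hy1
    have hg : 2 / 3 * x ^ (α / 2 + η) ≤ y ^ (β - α) := by
      have hv1 : exp (δ * z0) / x ≤ 3 / 2 * x ^ (ζ - 1) := by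
        rw [Real.rpow_sub hx0, Real.rpow_one, ← mul_div_assoc]; gcongr
      calc 2 / 3 * x ^ (α / 2 + η) ≤ (3 / 2 : ℝ) ^ (β - α) * x ^ ((ζ - 1) * (β - α)) := by
            gcongr
            · calc (2 / 3 : ℝ) = (3 / 2 : ℝ) ^ (-1 : ℝ) := by rw [Real.rpow_neg_one]; norm_num
                _ ≤ _ := Real.rpow_le_rpow_of_exponent_le (by norm_num) (by linarith)
            have m1 : ζ * (α - β) ≤ η * 1 := mul_le_mul hζ1 (by linarith) (by linarith) hη0.le
            have m2 : η * 2 = α / 2 - β := by rw [hη]; ring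
            linarith
        _ = (3 / 2 * x ^ (ζ - 1)) ^ (β - α) := by
            rw [Real.mul_rpow (by norm_num) (Real.rpow_nonneg hx0.le _), ← Real.rpow_mul hx0.le]
        _ ≤ y ^ (β - α) := Real.rpow_le_rpow_of_nonpos hy0 (hy1.le.trans hv1) (by linarith)
    have ht1 : 1 ≤ x ^ (α / 2 + η) := Real.one_le_rpow hx1 (by linarith)
    have ht2 : x ^ (α / 2) ≤ x ^ (α / 2 + η) := Real.rpow_le_rpow_of_exponent_le hx1 (by linarith)
    have h5 : (0:ℝ) ≤ k0 := by positivity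
    have h8 : x ^ α * (α * δ) = α * D * x ^ (α / 2) := by rw [mul_left_comm, hIδ]; ring
    rw [h8]
    calc k0 + 6 + x ^ (α / 2 + η) + 2 * (α * D * x ^ (α / 2))
        ≤ k0 * x ^ (α / 2 + η) + 6 * x ^ (α / 2 + η) + x ^ (α / 2 + η) + 2 * (α * D * x ^ (α / 2 + η)) := by
          have := mul_le_mul_of_nonneg_left ht1 h5
          have := mul_le_mul_of_nonneg_left ht2 (show 0 ≤ α * D by positivity)
          linarith
      _ = 3 / 2 * (k0 + 7 + 2 * (α * D)) * (2 / 3 * x ^ (α / 2 + η)) := by ring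
      _ ≤ _ := by gcongr
  · rw [pα, pδ, pk, pv, pI, pM, pn, hDI, hnv, ← hA]
    have hu3 : 0 < x ^ ((α - 1) / 2 + ζ) := Real.rpow_pos_of_pos hx0 _
    -- the quadratic term
    have q1 : x * (4 * δ * (1 / x * (x ^ α * A) + 2 * x ^ α * (exp (δ * z0) / x))) ^ 2 ≤ (1 / 100) ^ 2 := by
      have b1 : 1 / x * (x ^ α * A) + 2 * x ^ α * (exp (δ * z0) / x) ≤ (A + 3) * x ^ (α + ζ - 1) := by
        have : 2 * x ^ α * (exp (δ * z0) / x) = 2 * (x ^ α * (exp (δ * z0) / x)) := by ring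
        rw [this]; linarith
      have b2 : x * (4 * δ * ((A + 3) * x ^ (α + ζ - 1))) ^ 2 = (4 * (D * (A + 3)) * x ^ ((α - 1) / 2 + ζ)) ^ 2 := by
        have hs : x = (x ^ (1 / 2 : ℝ)) ^ 2 := by
          rw [← Real.rpow_natCast, ← Real.rpow_mul hx0.le]; norm_num
        have hm : x ^ ((α - 1) / 2 + ζ) = x ^ (1 / 2 : ℝ) * (x ^ (-(α / 2)) * x ^ (α + ζ - 1)) := by
          rw [← Real.rpow_add hx0, ← Real.rpow_add hx0]; congr 1; ring
        rw [hm, hδdef]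
        generalize x ^ (-(α / 2)) = a1
        generalize x ^ (α + ζ - 1) = a2
        generalize hw : x ^ (1 / 2 : ℝ) = a3 at hs
        rw [hs]; ring
      calc _ ≤ x * (4 * δ * ((A + 3) * x ^ (α + ζ - 1))) ^ 2 := by
            have : 0 ≤ 1 / x * (x ^ α * A) + 2 * x ^ α * (exp (δ * z0) / x) := by positivity
            gcongr
        _ = _ := b2
        _ ≤ (1 / 100) ^ 2 := by
            refine pow_le_pow_left₀ (by positivity) ?_ 2
            linarith
    -- the first exponential term
    have q2 : (5 + 4 * (2 * x ^ α * (α * δ) + x * δ)) * ((1 + (x ^ α + k0 + 1) + 2 * x ^ α) * exp (-exp (δ * z0))) ≤ 1 / 100 := by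
      have c1 : 5 + 4 * (2 * x ^ α * (α * δ) + x * δ) ≤ (5 + 12 * D) * x := by
        have i1 : α * δ ≤ 1 * D := mul_le_mul h1.le hδD hδ.le (by norm_num)
        have i2 : x ^ α * (α * δ) ≤ x * (1 * D) := mul_le_mul hxαx i1 (by positivity) hx0.le
        have i3 : x * δ ≤ x * D := by gcongr
        linarith
      have c2 : 1 + (x ^ α + k0 + 1) + 2 * x ^ α ≤ (5 + k0) * x := by
        have : (k0:ℝ) * 1 ≤ k0 * x := by gcongr
        linarith
      have c3 : exp (-exp (δ * z0)) ≤ exp (-x ^ ζ) := Real.exp_le_exp.2 (by linarith)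
      calc _ ≤ ((5 + 12 * D) * x) * (((5 + k0) * x) * exp (-x ^ ζ)) := by gcongr
        _ = x ^ 2 * exp (-x ^ ζ) * (100 * K1) / 100 := by rw [hK1]; ring
        _ ≤ _ := by linarith
    -- the second exponential term
    have q3 : 2 * (((z0:ℝ) + J + 1) * (2 * exp (2 * x ^ α * (x ^ (-(α / 2))) ^ 2 - x ^ (-(α / 2)) * x ^ (α / 2 + η)))) ≤ 1 / 100 := by
      have d1 : 2 * x ^ α * (x ^ (-(α / 2))) ^ 2 = 2 := by
        rw [mul_assoc, ← Real.rpow_natCast (x ^ (-(α / 2))), ← Real.rpow_mul hx0.le, ← Real.rpow_add hx0]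
        have : α + -(α / 2) * ((2:ℕ):ℝ) = 0 := by push_cast; ring
        rw [this, Real.rpow_zero, mul_one]
      have d2 : x ^ (-(α / 2)) * x ^ (α / 2 + η) = x ^ η := by
        rw [← Real.rpow_add hx0]; congr 1; ring
      have d3 : (z0:ℝ) + J + 1 ≤ (2 / D + 3) * x ^ 2 := by
        have f1 : δ * ((z0:ℝ) + J) ≤ 2 * x + 2 * δ := by
          have : ζ * Real.log x ≤ 1 * Real.log x := by gcongr; linarith
          linarith
        have f2 : 1 ≤ x * x ^ (-(α / 2)) := by
          calc (1:ℝ) ≤ x ^ (1 - α / 2) := Real.one_le_rpow hx1 (by linarith)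
            _ = _ := by rw [sub_eq_add_neg, Real.rpow_add hx0, Real.rpow_one]
        have f3 : D ≤ x * δ := by rw [hδdef, mul_left_comm]; exact le_mul_of_one_le_right hD.le f2
        have f4 : (z0:ℝ) + J ≤ 2 * x / δ + 2 := by
          rw [← mul_le_mul_iff_right₀ hδ, mul_add δ (2 * x / δ), mul_div_cancel₀ _ hδ.ne']; linarith
        have f5 : 2 * x / δ ≤ 2 / D * x ^ 2 := by
          rw [div_mul_eq_mul_div, div_le_div_iff₀ hδ hD]
          have m1 := mul_le_mul_of_nonneg_left f3 (show 0 ≤ 2 * x by linarith)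
          linarith
        have m2 : 1 ≤ x ^ 2 := one_le_pow₀ hx1
        linarith
      rw [d1, d2, sub_eq_add_neg, Real.exp_add]
      calc _ ≤ 2 * (((2 / D + 3) * x ^ 2) * (2 * (exp 2 * exp (-x ^ η)))) := by gcongr
        _ = x ^ 2 * exp (-x ^ η) * (100 * K2) / 100 := by rw [hK2]; ring
        _ ≤ _ := by linarith
    have g1 : α * δ ≤ 1 * (1 / 1000) := mul_le_mul h1.le hδs hδ.le (by norm_num)
    have g2 : 16 * α ^ 2 * D ^ 2 = 16 * α * ((1 - α) / 4096) := by rw [← hD2]; ring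
    have g3 : 96 * α * D ^ 2 * (1 + δ) = 96 * ((1 - α) / 4096) * (1 + δ) := by rw [← hD2]; ring
    have g4 : D ^ 2 * A = 1 / 4096 := by
      rw [hA, ← mul_div_assoc, mul_comm, hD2]; field_simp
    rw [g2, g3, g4]
    have g5 : (1 - α) * (1 + δ) ≤ 1 * (1 + 1 / 1000) := by gcongr; linarith
    have g6 : α * (1 - α) ≤ 1 * 1 := mul_le_mul h1.le (by linarith) ha1.le (by norm_num)
    linarith

lemma gamma_ge (α : ℝ) (h0 : 0 < α) (h1 : α < 1) : 1 / 2 ≤ (1 - α) * Real.Gamma (1 - α) := by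
  have hG : Real.Gamma (2 - α) = (1 - α) * Real.Gamma (1 - α) := by
    have := Real.Gamma_add_one (s := 1 - α) (by linarith)
    rw [← this]; congr 1; ring
  have hG3 : Real.Gamma (3 - α) = (2 - α) * Real.Gamma (2 - α) := by
    have := Real.Gamma_add_one (s := 2 - α) (by linarith)
    rw [← this]; congr 1; ring
  have hp : 0 < Real.Gamma (2 - α) := Real.Gamma_pos_of_pos (by linarith)
  rw [← hG]
  have hc := Real.convexOn_Gamma.2 (show 2 - α ∈ Set.Ioi (0:ℝ) from Set.mem_Ioi.2 (by linarith))
    (show 3 - α ∈ Set.Ioi (0:ℝ) from Set.mem_Ioi.2 (by linarith))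
    (show 0 ≤ 1 - α by linarith) h0.le (by ring)
  simp only [smul_eq_mul] at hc
  have e : (1 - α) * (2 - α) + α * (3 - α) = 2 := by ring
  rw [e, Real.Gamma_two, hG3] at hc
  have : (1 - α) + α * (2 - α) ≤ 2 := by nlinarith
  nlinarith

lemma final_aux (α β : ℝ) (hα : α ∈ Set.Ioo (0 : ℝ) 1) (hβ : 0 < β) (hβα : β < α / 2) :
    ∃ Cab : ℝ, ∀ n : ℕ, max 4 ((12 * α) ^ (1 / (1 - α))) ≤ (n : ℝ) →
      ∀ r : ℕ, 1 ≤ r →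
      ∀ C : ℝ, 0 < C → C ≤ 1 / (64 * Real.pi * Real.Gamma (1 - α)) →
      ∀ C' : ℝ, Cab < C' →
      ∀ est : (Fin n → ℕ) → ℝ, Measurable est →
      ∀ h : ℝ → ℝ, Measurable h →
      (1 / 4 : ℝ≥0∞) ≤
        ⨆ (P : PMF ℕ) (Lα : ℝ) (_ : inSigmaClass α β C C' P Lα),
          sampleMeasure P n
            {ω | Real.sqrt ((n : ℝ) ^ α * Lα) *
                  mloss h (est ω) (missingMass (pReal P) r ω) >
                Real.sqrt C * min ((r : ℝ) / (8 * Real.sqrt (6 * α))) ((n : ℝ) ^ (α / 2) / 2)} := by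
  obtain ⟨h0, h1⟩ := hα
  have ha1 : 0 < 1 - α := by linarith
  obtain ⟨C1, n0, hlarge⟩ := large_case α β h0 h1 hβ hβα
  obtain ⟨C2, hsmall⟩ := small_case α β h0 h1 hβ (by linarith) n0
  refine ⟨max C1 C2, ?_⟩
  intro n hn r hr C hC hCle C' hC' est _ h _
  have hn4 : (4:ℝ) ≤ n := (le_max_left _ _).trans hn
  have hnn : 1 ≤ n := by
    have : (1:ℝ) ≤ n := by linarith
    exact_mod_cast this
  have hx0 : (0:ℝ) < n := by linarith
  have hCb : C ≤ (1 - α) / 96 := by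
    refine hCle.trans ?_
    have hg := gamma_ge α h0 h1
    have hGp : 0 < Real.Gamma (1 - α) := Real.Gamma_pos_of_pos ha1
    have hpi := Real.pi_gt_three
    rw [div_le_div_iff₀ (by positivity) (by norm_num)]
    nlinarith
  have hC1 : C ≤ 1 := by linarith
  set x : ℝ := (n:ℝ) with hx
  set mm := min ((r : ℝ) / (8 * √(6 * α))) (x ^ (α / 2) / 2) with hmm
  have hxa : 0 < x ^ (α / 2) := Real.rpow_pos_of_pos hx0 _
  have hr0 : (0:ℝ) < r := by exact_mod_cast hr
  have h6 : 0 < √(6 * α) := Real.sqrt_pos.2 (by positivity)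
  have hsC : 0 < √C := Real.sqrt_pos.2 hC
  have hm0 : 0 < mm := lt_min (by positivity) (by positivity)
  have hinv : x ^ (-(α / 2)) * x ^ (α / 2) = 1 := by
    rw [← Real.rpow_add hx0]; simp
  have hxn : 0 < x ^ (-(α / 2)) := Real.rpow_pos_of_pos hx0 _
  set ε := √C * x ^ (-(α / 2)) * mm with hεd
  have hε0 : 0 < ε := by positivity
  have hsC1 : √C ≤ 1 / 2 := by
    rw [Real.sqrt_le_left (by norm_num)]; linarith
  have hε1 : ε < 1 / 3 := by
    calc ε ≤ √C * x ^ (-(α / 2)) * (x ^ (α / 2) / 2) := by rw [hεd]; gcongr; exact min_le_right _ _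
      _ = √C * (x ^ (-(α / 2)) * x ^ (α / 2)) / 2 := by ring
      _ = √C / 2 := by rw [hinv, mul_one]
      _ < 1 / 3 := by linarith
  have hε2 : 3 * ε ≤ √((1 - α) / α) / 64 * x ^ (-(α / 2)) * r := by
    have hs : √C / √(6 * α) ≤ √((1 - α) / α) / 24 := by
      rw [← Real.sqrt_div hC.le]
      refine Real.sqrt_le_iff.2 ⟨by positivity, ?_⟩
      rw [div_pow, Real.sq_sqrt (by positivity)]
      calc C / (6 * α) ≤ (1 - α) / 96 / (6 * α) := by gcongr
        _ = _ := by field_simp; norm_num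
    calc 3 * ε ≤ 3 * (√C * x ^ (-(α / 2)) * ((r : ℝ) / (8 * √(6 * α)))) := by
          rw [hεd]; gcongr; exact min_le_left _ _
      _ = 3 / 8 * (√C / √(6 * α)) * x ^ (-(α / 2)) * r := by field_simp
      _ ≤ 3 / 8 * (√((1 - α) / α) / 24) * x ^ (-(α / 2)) * r := by gcongr
      _ = _ := by ring
  obtain ⟨P, L, hL, hcl, hP⟩ : ∃ (P : PMF ℕ) (L : ℝ), 1 ≤ L ∧ inSigmaClass α β C C' P L ∧
        1 / 4 ≤ (sampleMeasure P n).real {ω | ¬ mloss h (est ω) (missingMass (pReal P) r ω) ≤ ε} := by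
    rcases le_total n n0 with hle | hle
    · exact hsmall n hnn hle C hC1 C' ((le_max_right _ _).trans hC'.le) r hr est h ε hε0 hε1
    · exact hlarge n hle C hC1 C' ((le_max_left _ _).trans hC'.le) r hr est h ε hε0 hε1 hε2
  refine le_trans ?_ (le_iSup_of_le P (le_iSup_of_le L (le_iSup_of_le hcl le_rfl)))
  have hsub : {ω | ¬ mloss h (est ω) (missingMass (pReal P) r ω) ≤ ε} ⊆
      {ω : Fin n → ℕ | √(x ^ α * L) * mloss h (est ω) (missingMass (pReal P) r ω) > √C * mm} := by
    intro ω hω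
    simp only [Set.mem_ofPred_eq, not_le] at hω ⊢
    have hsq : x ^ (α / 2) ≤ √(x ^ α * L) := by
      refine Real.le_sqrt_of_sq_le ?_
      have : (x ^ (α / 2)) ^ 2 = x ^ α := by
        rw [← Real.rpow_natCast, ← Real.rpow_mul hx0.le]; congr 1; push_cast; ring
      rw [this]
      exact le_mul_of_one_le_right (Real.rpow_nonneg hx0.le _) hL
    calc √C * mm = √C * (x ^ (-(α / 2)) * x ^ (α / 2)) * mm := by rw [hinv, mul_one]
      _ = x ^ (α / 2) * ε := by rw [hεd]; ring
      _ < x ^ (α / 2) * mloss h (est ω) (missingMass (pReal P) r ω) := by gcongr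
      _ ≤ _ := by
        have : 0 ≤ mloss h (est ω) (missingMass (pReal P) r ω) := by linarith
        gcongr
  refine le_trans ?_ (measure_mono hsub)
  have hpm : IsProbabilityMeasure (sampleMeasure P n) := by unfold sampleMeasure; infer_instance
  have : ENNReal.ofReal (1 / 4) ≤ sampleMeasure P n {ω | ¬ mloss h (est ω) (missingMass (pReal P) r ω) ≤ ε} := by
    rw [ENNReal.ofReal_le_iff_le_toReal (measure_ne_top _ _)]
    exact hP
  refine le_trans (le_of_eq ?_) this
  rw [ENNReal.ofReal_div_of_pos (by norm_num)]
  norm_num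

/-- Minimax lower bound over the second-order regularly varying class `Σ(α,β,C,C')` for the
estimation of the `r`-order missing mass. -/
theorem missingMass_minimax_lower_bound
    (α β : ℝ) (hα : α ∈ Set.Ioo (0 : ℝ) 1) (hβ : 0 < β) (hβα : β < α / 2) :
    ∃ Cab : ℝ, ∀ n : ℕ, max 4 ((12 * α) ^ (1 / (1 - α))) ≤ (n : ℝ) →
      ∀ r : ℕ, 1 ≤ r →
      ∀ C : ℝ, 0 < C → C ≤ 1 / (64 * Real.pi * Real.Gamma (1 - α)) →
      ∀ C' : ℝ, Cab < C' →
      ∀ est : (Fin n → ℕ) → ℝ, Measurable est →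
      ∀ h : ℝ → ℝ, Measurable h →
      (1 / 4 : ℝ≥0∞) ≤
        ⨆ (P : PMF ℕ) (Lα : ℝ) (_ : inSigmaClass α β C C' P Lα),
          sampleMeasure P n
            {ω | Real.sqrt ((n : ℝ) ^ α * Lα) *
                  mloss h (est ω) (missingMass (pReal P) r ω) >
                Real.sqrt C * min ((r : ℝ) / (8 * Real.sqrt (6 * α))) ((n : ℝ) ^ (α / 2) / 2)} := by
  exact final_aux α β hα hβ hβα

end
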